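/- arXiv:2407.17147 — 2 statements merged into one kernel-verified Lean document; each statement's English description precedes it below -/
import Mathlib

section
/- For every finite acyclic quiver Q and every Artin algebra Λ, the monomorphism category mono(Q,Λ) is a functorially finite torsion-free class of mod ΛQ; that is, it is closed under extensions and under submodules in mod ΛQ, and it is both contravariantly finite and covariantly finite in mod ΛQ. -/
/-! Basic framework: representations of a quiver over a ring. -/

namespace QuivRep

/-- A representation of a quiver `V` over a ring `Λ`. -/
structure Repn (Λ : Type) [Ring Λ] (V : Type) [Quiver.{1} V] where
  M : V → Type
  [acg : ∀ i, AddCommGroup (M i)]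
  [mod : ∀ i, Module Λ (M i)]
  h : ∀ {i j : V}, (i ⟶ j) → (M i →ₗ[Λ] M j)

attribute [instance] Repn.acg Repn.mod

variable {Λ : Type} [Ring Λ] {V : Type} [Quiver.{1} V]

/-- A morphism of representations. -/
@[ext]
structure RepHom (X Y : Repn Λ V) where
  app : ∀ i, X.M i →ₗ[Λ] Y.M i
  comm : ∀ {i j : V} (a : i ⟶ j), (Y.h a).comp (app i) = (app j).comp (X.h a)

namespace RepHom

def id (X : Repn Λ V) : RepHom X X :=
  ⟨fun _ => LinearMap.id, fun _ => rfl⟩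

def comp {X Y Z : Repn Λ V} (g : RepHom Y Z) (f : RepHom X Y) : RepHom X Z :=
  ⟨fun i => (g.app i).comp (f.app i), fun a => by
    rw [← LinearMap.comp_assoc, g.comm a, LinearMap.comp_assoc, f.comm a,
      LinearMap.comp_assoc]⟩

instance (X Y : Repn Λ V) : Zero (RepHom X Y) :=
  ⟨⟨fun _ => 0, fun a => by simp⟩⟩

end RepHom

/-- Isomorphism of representations. -/
def RepIso (X Y : Repn Λ V) : Prop :=
  ∃ (f : RepHom X Y) (g : RepHom Y X), g.comp f = RepHom.id X ∧ f.comp g = RepHom.id Y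

/-- The zero representation predicate. -/
def Repn.IsZero (X : Repn Λ V) : Prop := ∀ i, Subsingleton (X.M i)

/-- Indecomposability, via idempotent endomorphisms. -/
def Repn.Indec (X : Repn Λ V) : Prop :=
  ¬ X.IsZero ∧ ∀ e : RepHom X X, e.comp e = e → e = RepHom.id X ∨ e = 0

/-- Finitely generated (pointwise) representations. -/
def Repn.FG (X : Repn Λ V) : Prop := ∀ i, Module.Finite Λ (X.M i)

variable [Fintype V] [∀ i j : V, Fintype (i ⟶ j)]

/-- The canonical map `⊕_{α : t(α) = i} M_{s(α)} → M_i` of a representation. -/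
noncomputable def Repn.inMap (X : Repn Λ V) (i : V) :
    ((a : Σ j : V, j ⟶ i) → X.M a.1) →ₗ[Λ] X.M i :=
  ∑ a : (Σ j : V, j ⟶ i), (X.h a.2).comp (LinearMap.proj a)

/-- The (separated) monomorphism condition. -/
def Repn.IsMonoRep (X : Repn Λ V) : Prop := ∀ i : V, Function.Injective (X.inMap i)

/-- A quiver is acyclic if it has no nontrivial cycles. -/
def IsAcyclic (V : Type) [Quiver.{1} V] : Prop :=
  ∀ (i : V) (p : Quiver.Path i i), p = Quiver.Path.nil

/-- `f, g` form a short exact sequence of representations (computed vertexwise). -/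
def IsSES {X Y Z : Repn Λ V} (f : RepHom X Y) (g : RepHom Y Z) : Prop :=
  (∀ i, Function.Injective (f.app i)) ∧ (∀ i, Function.Surjective (g.app i)) ∧
    (∀ i, LinearMap.range (f.app i) = LinearMap.ker (g.app i))

end QuivRep

set_option linter.style.haveILetI false

namespace QuivRepAux

theorem noeth_of_nilp {R : Type} [CommRing R] [IsNoetherianRing R] {E : Type} [AddCommGroup E]
    [Module R E] (J : Ideal R)
    (M : Submodule R E) [IsNoetherian R M]
    (h1 : ∀ A : Submodule R E, J • A = ⊥ → A ≤ M) (k : ℕ) :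
    ∀ A : Submodule R E, J ^ k • A = ⊥ → IsNoetherian R A := by
  induction k with
  | zero =>
    intro A hA
    have : A = ⊥ := by simpa using hA
    subst this
    infer_instance
  | succ k ih =>
    intro A hA
    have hJA : IsNoetherian R (J • A : Submodule R E) := by
      apply ih
      rw [← Submodule.mul_smul, ← pow_succ]
      exact hA
    obtain ⟨s, hs⟩ : J.FG := IsNoetherian.noetherian J
    have hsJ : ∀ r ∈ s, r ∈ J := fun r hr => hs ▸ Ideal.subset_span hr
    let g : A →ₗ[R] (s → (J • A : Submodule R E)) :=
      LinearMap.pi fun r => (LinearMap.codRestrict (J • A)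
        (r.1 • A.subtype) (fun x => by
          simpa using Submodule.smul_mem_smul (hsJ r.1 r.2) x.2))
    have hK : (LinearMap.ker g).map A.subtype ≤ M := by
      apply h1
      rw [eq_bot_iff, Submodule.smul_le]
      intro r hr n hn
      replace hr : r ∈ Submodule.span R (s : Set R) := by
        rw [← hs] at hr
        exact hr
      rw [Submodule.mem_bot]
      obtain ⟨x, hx, rfl⟩ := hn
      induction hr using Submodule.span_induction with
      | mem r hr =>
        have := congrFun (LinearMap.mem_ker.1 hx) ⟨r, hr⟩
        simpa [g] using congrArg Subtype.val this
      | zero => simp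
      | add a b _ _ ha hb => rw [add_smul, ha, hb, add_zero]
      | smul a b _ hb => rw [smul_assoc, hb, smul_zero]
    have : IsNoetherian R (LinearMap.ker g) := by
      have := isNoetherian_of_le hK
      exact isNoetherian_of_injective
        (Submodule.equivMapOfInjective A.subtype A.subtype_injective (LinearMap.ker g)).toLinearMap
        (LinearEquiv.injective _)
    exact isNoetherian_of_range_eq_ker (LinearMap.ker g).subtype g (by simp)

/-- elementwise essentiality of `M` in `E`. -/
def Ess {R : Type} [CommRing R] {I : Type} [AddCommGroup I] [Module R I]
    (M E : Submodule R I) : Prop :=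
  ∀ x ∈ E, x ≠ 0 → ∃ r : R, r • x ∈ M ∧ r • x ≠ 0

theorem ess_noeth {R : Type} [CommRing R] [IsArtinianRing R] {I : Type} [AddCommGroup I]
    [Module R I] (M E : Submodule R I) [IsNoetherian R M] (hE : Ess M E) :
    IsNoetherian R E := by
  obtain ⟨n, hn⟩ := IsSemiprimaryRing.isNilpotent (R := R)
  -- work inside `E`
  have hM : IsNoetherian R (M.comap E.subtype) := by
    exact isNoetherian_of_injective
      (LinearMap.codRestrict M (E.subtype.comp (M.comap E.subtype).subtype) (fun x => x.2))
      (fun x y h => by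
        apply Subtype.ext
        apply Subtype.ext
        exact congrArg (fun z : M => (z : I)) h)
  have key := noeth_of_nilp (Ring.jacobson R) (M.comap E.subtype) ?_ n ⊤ (by
    rw [hn]; simp)
  · exact isNoetherian_of_injective (Submodule.topEquiv (R := R) (M := E)).symm.toLinearMap
      (LinearEquiv.injective _)
  · intro A hA
    have htor : Module.IsTorsionBySet R A (Ring.jacobson R : Ideal R) := by
      rintro x ⟨r, hr⟩
      ext1
      have := Submodule.smul_mem_smul hr x.2
      rw [hA, Submodule.mem_bot] at this
      exact this
    have hss : IsSemisimpleModule R A := by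
      rw [← htor.isSemisimpleModule_iff]
      letI := htor.module
      infer_instance
    obtain ⟨C, hC⟩ := exists_isCompl ((M.comap E.subtype).comap A.subtype)
    have hC0 : C = ⊥ := by
      rw [eq_bot_iff]
      intro c hc
      rw [Submodule.mem_bot]
      by_contra hne
      obtain ⟨r, hr, hr0⟩ := hE c.1.1 c.1.2 (by simpa using hne)
      have : r • c ∈ ((M.comap E.subtype).comap A.subtype) ⊓ C :=
        ⟨hr, C.smul_mem r hc⟩
      rw [hC.inf_eq_bot, Submodule.mem_bot] at this
      apply hr0
      have := congrArg (fun z : A => z.1.1) this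
      simpa using this
    have htop := hC.sup_eq_top
    rw [hC0, sup_bot_eq] at htop
    intro a ha
    have : (⟨a, ha⟩ : A) ∈ ((M.comap E.subtype).comap A.subtype) := htop ▸ trivial
    exact this

theorem exists_max_ess {R : Type} [CommRing R] {I : Type} [AddCommGroup I]
    [Module R I] (M : Submodule R I) :
    ∃ E, M ≤ E ∧ Maximal (fun E => Ess M E) E := by
  refine zorn_le_nonempty₀ {E | Ess M E} ?_ M ?_
  · intro c hc hch y hy
    refine ⟨sSup c, ?_, fun z hz => le_sSup hz⟩
    intro x hx hx0
    rw [Submodule.mem_sSup_of_directed ⟨y, hy⟩ hch.directedOn] at hx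
    obtain ⟨z, hz, hxz⟩ := hx
    exact hc hz x hxz hx0
  · intro x hx h0
    exact ⟨1, by simpa using hx, by simpa using h0⟩

theorem exists_max_disj {R : Type} [CommRing R] {I : Type} [AddCommGroup I]
    [Module R I] (E : Submodule R I) :
    ∃ C, Maximal (fun C : Submodule R I => ∀ x ∈ C, x ∈ E → x = 0) C := by
  suffices h : ∃ C, ⊥ ≤ C ∧ Maximal (· ∈ {C : Submodule R I | ∀ x ∈ C, x ∈ E → x = 0}) C by
    obtain ⟨C, -, h⟩ := h
    exact ⟨C, h⟩
  refine zorn_le_nonempty₀ {C : Submodule R I | ∀ x ∈ C, x ∈ E → x = 0} ?_ ⊥ ?_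
  · intro c hc hch y hy
    refine ⟨sSup c, ?_, fun z hz => le_sSup hz⟩
    intro x hx hxE
    rw [Submodule.mem_sSup_of_directed ⟨y, hy⟩ hch.directedOn] at hx
    obtain ⟨z, hz, hxz⟩ := hx
    exact hc hz x hxz hxE
  · intro x hx _
    exact (Submodule.mem_bot R).1 hx

theorem max_ess_injective {R : Type} [CommRing R] {I : Type} [AddCommGroup I]
    [Module R I] [Module.Injective R I] (M E : Submodule R I)
    (hE : Maximal (fun E => Ess M E) E) : Module.Injective R E := by
  obtain ⟨C, hC⟩ := exists_max_disj E
  obtain ⟨g, hg⟩ := Module.Injective.out (R := R) (Q := I) (C.mkQ.comp E.subtype) (by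
    rw [injective_iff_map_eq_zero]
    intro x hx
    have : (x : I) ∈ C := by simpa using hx
    ext
    exact hC.1 x this x.2) E.subtype
  have hg' : ∀ e ∈ E, g (C.mkQ e) = e := fun e he => hg ⟨e, he⟩
  -- `E` is essential in `I/C`
  have hess : ∀ y : I ⧸ C, y ≠ 0 → ∃ r : R, ∃ e ∈ E, r • y = C.mkQ e ∧ e ≠ 0 := by
    intro y hy
    obtain ⟨x, rfl⟩ := C.mkQ_surjective y
    have hx : x ∉ C := by
      intro h
      exact hy (by simpa using h)
    by_contra hcon
    push Not at hcon
    apply hx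
    have hle : C ⊔ Submodule.span R {x} ≤ C := by
      refine hC.2 ?_ le_sup_left
      intro z hz hzE
      obtain ⟨c, hc, w, hw, rfl⟩ := Submodule.mem_sup.1 hz
      obtain ⟨r, rfl⟩ := Submodule.mem_span_singleton.1 hw
      apply hcon r _ hzE
      have : C.mkQ c = 0 := by simpa using hc
      rw [map_add, this, zero_add, map_smul]
    exact hle (Submodule.mem_sup_right (Submodule.mem_span_singleton_self x))
  have hrange : LinearMap.range g ≤ E := by
    refine hE.2 ?_ ?_
    · rintro x ⟨y, rfl⟩ hx
      obtain ⟨r, e, he, hre, he0⟩ := hess y (by rintro rfl; simp at hx)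
      obtain ⟨r', h1, h2⟩ := hE.1 e he he0
      have : (r' * r) • g y = r' • e := by
        rw [mul_smul, ← map_smul, hre, hg' e he]
      exact ⟨r' * r, by rwa [this], by rwa [this]⟩
    · intro e he
      exact ⟨_, hg' e he⟩
  let ρ : I →ₗ[R] E := LinearMap.codRestrict E (g.comp C.mkQ) (fun x => hrange ⟨_, rfl⟩)
  refine ⟨fun X Y _ _ _ _ f hf k => ?_⟩
  obtain ⟨h, hh⟩ := Module.Injective.out f hf (E.subtype.comp k)
  refine ⟨ρ.comp h, fun x => ?_⟩
  ext
  simp only [LinearMap.comp_apply, hh, ρ, LinearMap.codRestrict_apply]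
  exact hg' _ (k x).2

theorem exists_fg_inj_comm {R : Type} [CommRing R] [IsArtinianRing R] (M : Type) [AddCommGroup M]
    [Module R M] [Module.Finite R M] :
    ∃ (E : Type) (_ : AddCommGroup E) (_ : Module R E) (ι : M →ₗ[R] E),
      Module.Injective R E ∧ Module.Finite R E ∧ Function.Injective ι := by
  obtain ⟨P⟩ := CategoryTheory.EnoughInjectives.presentation (ModuleCat.of R M)
  have hI : Module.Injective R P.J := by
    have := P.injective
    exact Module.injective_module_of_injective_object R P.J
  have hf : Function.Injective P.f.hom := (ModuleCat.mono_iff_injective P.f).1 P.mono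
  obtain ⟨E, hME, hE⟩ := exists_max_ess (LinearMap.range P.f.hom)
  have : IsNoetherian R (LinearMap.range P.f.hom) := by
    have : Module.Finite R (ModuleCat.of R M) := ‹Module.Finite R M›
    infer_instance
  have hN := ess_noeth _ E hE.1
  refine ⟨E, inferInstance, inferInstance,
    LinearMap.codRestrict E P.f.hom (fun x => hME ⟨x, rfl⟩), max_ess_injective _ E hE,
    inferInstance, fun x y h => hf (congrArg Subtype.val h)⟩

/-- The left `Λ`-module structure on `Hom_R(Λ, E)`. -/
def coindModule (R Λ E : Type) [CommRing R] [Ring Λ] [Algebra R Λ] [AddCommGroup E] [Module R E] :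
    Module Λ (Λ →ₗ[R] E) where
  smul l f := f.comp (LinearMap.mulRight R l)
  one_smul f := by ext x; exact congrArg f (mul_one x)
  mul_smul a b f := by ext x; exact congrArg f (mul_assoc x a b).symm
  smul_zero a := by ext x; rfl
  smul_add a f g := by ext x; rfl
  add_smul a b f := by
    ext x
    exact (congrArg f (mul_add x a b)).trans (map_add f _ _)
  zero_smul f := by
    ext x
    exact (congrArg f (mul_zero x)).trans (map_zero f)

theorem exists_fg_inj (R : Type) [CommRing R] [IsArtinianRing R]
    (Λ : Type) [Ring Λ] [Algebra R Λ] [Module.Finite R Λ]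
    (M : Type) [AddCommGroup M] [Module Λ M] [Module.Finite Λ M] :
    ∃ (E : Type) (_ : AddCommGroup E) (_ : Module Λ E) (ι : M →ₗ[Λ] E),
      Module.Injective Λ E ∧ Module.Finite Λ E ∧ Function.Injective ι := by
  letI : Module R M := Module.compHom M (algebraMap R Λ)
  haveI : IsScalarTower R Λ M := ⟨fun r l m => by
    rw [Algebra.smul_def, mul_smul]; rfl⟩
  haveI : Module.Finite R M := Module.Finite.trans Λ M
  obtain ⟨E, _, _, ι, hinj, hfin, hι⟩ := exists_fg_inj_comm (R := R) M
  letI : Module Λ (Λ →ₗ[R] E) := coindModule R Λ E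
  have smul_def : ∀ (l x : Λ) (f : Λ →ₗ[R] E), (l • f) x = f (x * l) := fun _ _ _ => rfl
  haveI : IsScalarTower R Λ (Λ →ₗ[R] E) := ⟨fun r l f => by
    ext x
    rw [smul_def, LinearMap.smul_apply, smul_def, mul_smul_comm, map_smul]⟩
  have hfin' : Module.Finite R (Λ →ₗ[R] E) := by
    obtain ⟨n, p, hp⟩ := Module.Finite.exists_fin' R Λ
    exact Module.Finite.of_injective (LinearMap.lcomp R E p) (fun f g h => by
      ext x
      obtain ⟨y, rfl⟩ := hp x
      exact LinearMap.congr_fun h y)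
  refine ⟨Λ →ₗ[R] E, inferInstance, inferInstance,
    { toFun := fun m =>
        { toFun := fun l => ι (l • m)
          map_add' := fun a b => by rw [add_smul, map_add]
          map_smul' := fun r a => by rw [smul_assoc, map_smul]; rfl }
      map_add' := fun a b => by ext x; simp
      map_smul' := fun l m => by ext x; simp [smul_def, mul_smul] }, ?_, ?_, ?_⟩
  · refine ⟨fun X Y _ _ _ _ f hf k => ?_⟩
    letI : Module R X := Module.compHom X (algebraMap R Λ)
    haveI : IsScalarTower R Λ X := ⟨fun r l m => by
      rw [Algebra.smul_def, mul_smul]; rfl⟩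
    letI : Module R Y := Module.compHom Y (algebraMap R Λ)
    haveI : IsScalarTower R Λ Y := ⟨fun r l m => by
      rw [Algebra.smul_def, mul_smul]; rfl⟩
    have hk : ∀ (r : R) (x : X), k (r • x) = r • k x := fun r x => by
      rw [← algebraMap_smul Λ r x, map_smul, algebraMap_smul]
    obtain ⟨h, hh⟩ := hinj.out (f.restrictScalars R) hf
      { toFun := fun x => k x 1
        map_add' := fun a b => by simp
        map_smul' := fun r a => by simp [hk] }
    refine ⟨{ toFun := fun y =>
                { toFun := fun l => h (l • y)
                  map_add' := fun a b => by rw [add_smul, map_add]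
                  map_smul' := fun r a => by rw [smul_assoc, map_smul]; rfl }
              map_add' := fun a b => by ext x; simp
              map_smul' := fun l m => by ext x; simp [smul_def, mul_smul] }, ?_⟩
    intro x
    ext l
    have := hh (l • x)
    simp only [LinearMap.coe_restrictScalars, LinearMap.coe_mk, AddHom.coe_mk, map_smul] at this
    simp only [LinearMap.coe_mk, AddHom.coe_mk]
    rw [this, smul_def, one_mul]
  · exact Module.Finite.of_restrictScalars_finite R Λ _
  · intro a b h
    have := LinearMap.congr_fun h 1
    simpa using hι (by simpa using this)

end QuivRepAux

namespace QuivRepAux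
open QuivRep

section
variable {Λ : Type} [Ring Λ] {V : Type} [Quiver.{1} V]

theorem comm_apply {X Y : Repn Λ V} (f : RepHom X Y) {i j : V} (a : i ⟶ j) (x : X.M i) :
    Y.h a (f.app i x) = f.app j (X.h a x) :=
  LinearMap.congr_fun (f.comm a) x

theorem finite_path [Finite V] [∀ i j : V, Finite (i ⟶ j)] (hacyc : IsAcyclic V) (j i : V) :
    Finite (Quiver.Path j i) := by
  let r : V → V → Prop := fun a b => ∃ p : Quiver.Path a b, p.length ≠ 0
  haveI : IsTrans V r := ⟨by
    rintro a b c ⟨p, hp⟩ ⟨q, hq⟩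
    exact ⟨p.comp q, by rw [Quiver.Path.length_comp]; omega⟩⟩
  haveI : Std.Irrefl r := ⟨by
    rintro a ⟨p, hp⟩
    rw [hacyc a p] at hp
    exact hp rfl⟩
  have wf : WellFounded r := Finite.wellFounded_of_trans_of_irrefl r
  induction i using wf.induction with
  | _ i ih =>
    haveI : ∀ k : V, Finite (Quiver.Path j k × (k ⟶ i)) := by
      intro k
      by_cases hk : Nonempty (k ⟶ i)
      · obtain ⟨e⟩ := hk
        haveI := ih k ⟨e.toPath, by simp [Quiver.Hom.toPath]⟩
        infer_instance
      · haveI : IsEmpty (k ⟶ i) := not_nonempty_iff.1 hk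
        infer_instance
    let F : Option (Σ k : V, Quiver.Path j k × (k ⟶ i)) → Set (Quiver.Path j i) := fun o =>
      match o with
      | none => {p | ∀ (h : j = i), p = h ▸ Quiver.Path.nil} ∩ {p | p.length = 0}
      | some ⟨_, p, e⟩ => {p.cons e}
    have hF : (⋃ o, F o) = Set.univ := by
      rw [Set.eq_univ_iff_forall]
      intro p
      rw [Set.mem_iUnion]
      cases p with
      | nil => exact ⟨none, fun h => rfl, rfl⟩
      | cons p e => exact ⟨some ⟨_, p, e⟩, rfl⟩
    rw [← Set.finite_univ_iff, ← hF]
    apply Set.finite_iUnion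
    rintro (_ | ⟨_, p, e⟩)
    · apply Set.Subsingleton.finite
      rintro p ⟨hp, hp0⟩ q ⟨hq, -⟩
      have h : j = i := Quiver.Path.eq_of_length_zero p hp0
      rw [hp h, hq h]
    · exact Set.finite_singleton _

end

section
variable {Λ : Type} [Ring Λ] {V : Type} [Quiver.{1} V] [Fintype V] [∀ i j : V, Fintype (i ⟶ j)]

theorem inMap_apply (X : Repn Λ V) (i : V) (x : (a : Σ j : V, j ⟶ i) → X.M a.1) :
    X.inMap i x = ∑ a, X.h a.2 (x a) := by
  simp [Repn.inMap]

theorem inMap_nat {X Y : Repn Λ V} (f : RepHom X Y) (i : V)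
    (x : (a : Σ j : V, j ⟶ i) → X.M a.1) :
    Y.inMap i (fun a => f.app a.1 (x a)) = f.app i (X.inMap i x) := by
  simp [inMap_apply, comm_apply]

open Classical in
theorem inMap_single (X : Repn Λ V) {i j : V} (a : i ⟶ j) (x : X.M i) :
    X.inMap j (Pi.single (M := fun a : (Σ k : V, k ⟶ j) => X.M a.1) ⟨i, a⟩ x) = X.h a x := by
  rw [inMap_apply, Finset.sum_eq_single (⟨i, a⟩ : Σ k : V, k ⟶ j)]
  · simp
  · intro b _ hb
    rw [Pi.single_eq_of_ne hb, map_zero]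
  · simp

theorem isMono_iff (X : Repn Λ V) :
    X.IsMonoRep ↔ ∀ i x, X.inMap i x = 0 → x = 0 :=
  forall_congr' fun i => injective_iff_map_eq_zero (X.inMap i)

theorem mono_ext (X Y Z : Repn Λ V) (f : RepHom X Y) (g : RepHom Y Z) (h : IsSES f g)
    (hX : X.IsMonoRep) (hZ : Z.IsMonoRep) : Y.IsMonoRep := by
  rw [isMono_iff] at *
  intro i y hy
  have h1 := hZ i _ (by rw [inMap_nat g i y, hy, map_zero])
  have h2 : ∀ a : (Σ j : V, j ⟶ i), ∃ x, f.app a.1 x = y a := fun a => by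
    have : y a ∈ LinearMap.ker (g.app a.1) := congrFun h1 a
    rwa [← h.2.2] at this
  choose x hx using h2
  have hx' : (fun a => f.app a.1 (x a)) = y := funext hx
  have h3 := inMap_nat f i x
  rw [hx', hy] at h3
  have h4 := hX i x (h.1 i (by rw [← h3, map_zero]))
  rw [← hx', h4]
  funext a
  simp

theorem mono_sub (X Y : Repn Λ V) (f : RepHom X Y) (h : ∀ i, Function.Injective (f.app i))
    (hY : Y.IsMonoRep) : X.IsMonoRep := by
  rw [isMono_iff] at *
  intro i x hx
  have h1 := hY i _ (by rw [inMap_nat f i x, hx, map_zero])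
  funext a
  apply h a.1
  simpa using congrFun h1 a

/-- The intersection of kernels of all maps to monomorphism representations. -/
def tors (X : Repn Λ V) (i : V) : Submodule Λ (X.M i) where
  carrier := {x | ∀ Y : Repn Λ V, Y.IsMonoRep → ∀ f : RepHom X Y, f.app i x = 0}
  add_mem' := fun {a b} ha hb Y hY f => by rw [map_add, ha Y hY f, hb Y hY f, add_zero]
  zero_mem' := fun Y hY f => map_zero _
  smul_mem' := fun c x hx Y hY f => by rw [map_smul, hx Y hY f, smul_zero]

theorem tors_le (X : Repn Λ V) {i j : V} (a : i ⟶ j) :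
    tors X i ≤ (tors X j).comap (X.h a) := by
  intro x hx Y hY f
  rw [← comm_apply, hx Y hY f, map_zero]

/-- The largest quotient that is a monomorphism representation. -/
def quo (X : Repn Λ V) : Repn Λ V where
  M i := X.M i ⧸ tors X i
  h a := Submodule.mapQ _ _ (X.h a) (tors_le X a)

def quoMk (X : Repn Λ V) : RepHom X (quo X) where
  app i := (tors X i).mkQ
  comm a := by
    ext x
    rfl

theorem quo_mono (X : Repn Λ V) : (quo X).IsMonoRep := by
  rw [isMono_iff]
  intro i x hx
  have h0 : ∀ a : (Σ j : V, j ⟶ i), ∃ y, (quoMk X).app a.1 y = x a := fun a =>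
    (tors X a.1).mkQ_surjective (x a)
  choose y hy using h0
  have hy' : (fun a => (quoMk X).app a.1 (y a)) = x := funext hy
  rw [← hy', inMap_nat] at hx
  have hx' : X.inMap i y ∈ tors X i := (Submodule.Quotient.mk_eq_zero _).1 hx
  rw [← hy']
  funext a
  refine (Submodule.Quotient.mk_eq_zero _).2 ?_
  intro Y hY f
  have h1 := (isMono_iff Y).1 hY i _ (by rw [inMap_nat f i y, hx' Y hY f])
  exact congrFun h1 a

theorem covariant (X : Repn Λ V) (hX : X.FG) : ∃ (Y : Repn Λ V) (g : RepHom X Y),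
      Y.FG ∧ Y.IsMonoRep ∧
      ∀ (Y' : Repn Λ V), Y'.FG → Y'.IsMonoRep → ∀ g' : RepHom X Y',
        ∃ φ : RepHom Y Y', φ.comp g = g' := by
  refine ⟨quo X, quoMk X, fun i => ?_, quo_mono X, fun Y' _ hm g' => ?_⟩
  · haveI := hX i
    exact inferInstanceAs (Module.Finite Λ (X.M i ⧸ tors X i))
  · refine ⟨⟨fun i => (tors X i).liftQ (g'.app i) (fun x hx => hx Y' hm g'), ?_⟩, ?_⟩
    · intro i j a
      refine Submodule.linearMap_qext _ ?_
      ext x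
      exact comm_apply g' a x
    · ext i x
      rfl

/-! ### Right approximations -/

variable (Y : Repn Λ V) (E : Type) [AddCommGroup E] [Module Λ E]
  (ι : ∀ i, Y.M i →ₗ[Λ] E)

/-- Nontrivial paths ending at `i`. -/
abbrev NT {V : Type} [Quiver.{1} V] (i : V) : Type 1 := Σ (j : V) (a : Σ k : V, k ⟶ i), Quiver.Path j a.1

variable (T : V → Type) (eT : ∀ i, T i ≃ NT i)

abbrev AM (i : V) : Type := Y.M i × (T i → E)

/-- Component of an element at a path. -/
def ev : ∀ {j i : V} (_ : Quiver.Path j i), AM Y E T i →ₗ[Λ] E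
  | j, _, Quiver.Path.nil => (ι j).comp (LinearMap.fst Λ _ _)
  | j, _, Quiver.Path.cons (b := k) p e =>
      (LinearMap.proj ((eT _).symm (⟨j, ⟨k, e⟩, p⟩ : NT _))).comp (LinearMap.snd Λ _ _)

theorem ev_inj {i : V} (x : AM Y E T i) (hι : ∀ i, Function.Injective (ι i))
    (h : ∀ (j : V) (p : Quiver.Path j i), ev Y E ι T eT p x = 0) : x = 0 := by
  apply Prod.ext
  · apply hι i
    have := h i Quiver.Path.nil
    simpa [ev] using this
  · funext t
    obtain ⟨⟨j, ⟨k, e⟩, p⟩, rfl⟩ := (eT i).symm.surjective t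
    exact h j (p.cons e)

open Classical in
/-- The right approximation. -/
noncomputable def app : Repn Λ V where
  M i := AM Y E T i
  h {i j} α := LinearMap.prod ((Y.h α).comp (LinearMap.fst Λ _ _))
    (LinearMap.pi fun t : T j => ((ev Y E ι T eT (eT j t).2.2).comp (LinearMap.proj (eT j t).2.1)).comp
      (LinearMap.single Λ (fun a : (Σ k : V, k ⟶ j) => AM Y E T a.1) ⟨i, α⟩))

theorem app_inMap (i : V) (x : (a : Σ j : V, j ⟶ i) → AM Y E T a.1) (t : T i) (p : NT i) (hp : eT i t = p) :
    ((app Y E ι T eT).inMap i x).2 t = ev Y E ι T eT p.2.2 (x p.2.1) := by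
  classical
  subst hp
  let L : (app Y E ι T eT).M i →ₗ[Λ] E :=
    ((LinearMap.proj t).comp (LinearMap.snd Λ (Y.M i) (T i → E)))
  have h0 := congrArg L (inMap_apply (app Y E ι T eT) i x)
  rw [map_sum] at h0
  refine h0.trans ?_
  have h2 : ∀ a : (Σ j : V, j ⟶ i), L ((app Y E ι T eT).h a.2 (x a)) = ev Y E ι T eT (eT i t).2.2
      ((Pi.single (M := fun a : (Σ k : V, k ⟶ i) => AM Y E T a.1) a (x a)) (eT i t).2.1) :=
    fun a => rfl
  refine (Finset.sum_congr rfl (fun a _ => h2 a)).trans ?_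
  rw [Finset.sum_eq_single (eT i t).2.1]
  · rw [Pi.single_eq_same]
  · intro b _ hb
    rw [Pi.single_eq_of_ne (Ne.symm hb), map_zero]
  · simp

theorem app_mono (hι : ∀ i, Function.Injective (ι i)) : (app Y E ι T eT).IsMonoRep := by
  rw [isMono_iff]
  intro i x hx
  funext a
  apply ev_inj Y E ι T eT _ hι
  intro j p
  rw [← app_inMap Y E ι T eT i x ((eT i).symm ⟨j, a, p⟩) ⟨j, a, p⟩ (by simp), hx]
  rfl

def appMap : RepHom (app Y E ι T eT) Y where
  app i := LinearMap.fst Λ _ _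
  comm a := by
    ext x <;> rfl

theorem contra (T : V → Type) (eT : ∀ i, T i ≃ NT i) (hacyc : IsAcyclic V) (hY : Y.FG) (hE : Module.Injective Λ E)
    (hEf : Module.Finite Λ E) (hι : ∀ i, Function.Injective (ι i)) :
    ∃ (X : Repn Λ V) (g : RepHom X Y),
      X.FG ∧ X.IsMonoRep ∧
      ∀ (X' : Repn Λ V), X'.FG → X'.IsMonoRep → ∀ g' : RepHom X' Y,
        ∃ φ : RepHom X' X, g.comp φ = g' := by
  classical
  refine ⟨app Y E ι T eT, appMap Y E ι T eT, fun i => ?_, app_mono Y E ι T eT hι, fun X' _ hm g' => ?_⟩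
  · haveI := hY i
    haveI := fun j k => finite_path hacyc j k
    haveI : Finite (T i) := Finite.of_equiv _ (eT i).symm
    exact inferInstanceAs (Module.Finite Λ (AM Y E T i))
  · have hext : ∀ (k i : V) (e : k ⟶ i) (u : X'.M k →ₗ[Λ] E),
        ∃ v : X'.M i →ₗ[Λ] E, ∀ x, v (X'.inMap i x) = u (x ⟨k, e⟩) := fun k i e u =>
by
      obtain ⟨v, hv⟩ := Module.Injective.extension_property Λ E _ _ (X'.inMap i) (hm i)
        (u.comp (LinearMap.proj (⟨k, e⟩ : Σ k : V, k ⟶ i)))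
      exact ⟨v, fun x => LinearMap.congr_fun hv x⟩
    choose ext hext using hext
    let ψ : ∀ {j i : V} (_ : Quiver.Path j i), X'.M i →ₗ[Λ] E := fun {j i} p =>
      Quiver.Path.rec (motive := fun i _ => X'.M i →ₗ[Λ] E) ((ι j).comp (g'.app j))
        (fun {b c} _ e u => ext b c e u) p
    have hψ : ∀ {j k i : V} (p : Quiver.Path j k) (e : k ⟶ i), ψ (p.cons e) = ext _ _ e (ψ p) :=
      fun _ _ => rfl
    let φ : ∀ i, X'.M i →ₗ[Λ] AM Y E T i := fun i =>
      LinearMap.prod (g'.app i) (LinearMap.pi fun t : T i => ext _ _ (eT i t).2.1.2 (ψ (eT i t).2.2))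
    have hev : ∀ {j i : V} (p : Quiver.Path j i) (x : X'.M i), ev Y E ι T eT p (φ i x) = ψ p x := by
      intro j i p x
      cases p with
      | nil => rfl
      | cons p e =>
        change ext _ _ (eT _ ((eT _).symm _)).2.1.2 (ψ (eT _ ((eT _).symm _)).2.2) x = _
        rw [Equiv.apply_symm_apply]
    refine ⟨⟨φ, ?_⟩, ?_⟩
    · intro i j a
      ext x
      refine Prod.ext ?_ (funext fun t => ?_)
      · exact comm_apply g' a x
      · skip
        have h1 : (φ j (X'.h a x)).2 t = ψ (eT j t).2.2
            ((Pi.single (M := fun a : (Σ k : V, k ⟶ j) => X'.M a.1) ⟨i, a⟩ x) (eT j t).2.1) := by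
          rw [← inMap_single]
          exact hext _ _ _ _ _
        refine Eq.trans ?_ h1.symm
        rw [← hev]
        change ev Y E ι T eT (eT j t).2.2
          ((Pi.single (M := fun a : (Σ k : V, k ⟶ j) => AM Y E T a.1) ⟨i, a⟩ (φ i x)) (eT j t).2.1) = _
        congr 1
        exact (Pi.apply_single (fun a : (Σ k : V, k ⟶ j) => φ a.1) (fun _ => map_zero _)
          ⟨i, a⟩ x (eT j t).2.1).symm
    · ext i x
      rfl

end

end QuivRepAux

open QuivRep in
/-- For every finite acyclic quiver `Q` and every Artin algebra `Λ`, the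
monomorphism category `mono(Q,Λ)` is a functorially finite torsion-free class of `mod ΛQ`:
it is closed under extensions, closed under submodules, contravariantly finite and
covariantly finite in `mod ΛQ = rep(Q, mod Λ)`. -/
theorem mono_functorially_finite_torsionFree
    (V : Type) [Quiver.{1} V] [Fintype V] [∀ i j : V, Fintype (i ⟶ j)]
    (hacyc : IsAcyclic V)
    (R : Type) [CommRing R] [IsArtinianRing R]
    (Λ : Type) [Ring Λ] [Algebra R Λ] [Module.Finite R Λ] :
    -- closed under extensions
    (∀ (X Y Z : Repn Λ V), X.FG → Y.FG → Z.FG →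
      ∀ (f : RepHom X Y) (g : RepHom Y Z), IsSES f g →
        X.IsMonoRep → Z.IsMonoRep → Y.IsMonoRep) ∧
    -- closed under submodules
    (∀ (X Y : Repn Λ V), X.FG → Y.FG → ∀ (f : RepHom X Y),
      (∀ i, Function.Injective (f.app i)) → Y.IsMonoRep → X.IsMonoRep) ∧
    -- contravariantly finite
    (∀ (Y : Repn Λ V), Y.FG → ∃ (X : Repn Λ V) (g : RepHom X Y),
      X.FG ∧ X.IsMonoRep ∧
      ∀ (X' : Repn Λ V), X'.FG → X'.IsMonoRep → ∀ g' : RepHom X' Y,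
        ∃ φ : RepHom X' X, g.comp φ = g') ∧
    -- covariantly finite
    (∀ (X : Repn Λ V), X.FG → ∃ (Y : Repn Λ V) (g : RepHom X Y),
      Y.FG ∧ Y.IsMonoRep ∧
      ∀ (Y' : Repn Λ V), Y'.FG → Y'.IsMonoRep → ∀ g' : RepHom X Y',
        ∃ φ : RepHom Y Y', φ.comp g = g') := by
  refine ⟨?_, ?_, ?_, ?_⟩
  · intro X Y Z _ _ _ f g h hX hZ
    exact QuivRepAux.mono_ext X Y Z f g h hX hZ
  · intro X Y _ _ f h hY
    exact QuivRepAux.mono_sub X Y f h hY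
  · intro Y hY
    classical
    have := hY
    have : ∀ i, Module.Finite Λ (Y.M i) := hY
    obtain ⟨E, _, _, ι, h1, h2, h3⟩ := QuivRepAux.exists_fg_inj R Λ (∀ i, Y.M i)
    have hp := fun j k : V => QuivRepAux.finite_path hacyc j k
    exact QuivRepAux.contra Y E (fun i => ι.comp (LinearMap.single Λ Y.M i))
      (fun i => Shrink.{0} (QuivRepAux.NT i)) (fun i => (equivShrink _).symm) hacyc hY h1 h2
      (fun i => h3.comp (Pi.single_injective i))
  · intro X hX
    exact QuivRepAux.covariant X hX
end

section
/- For every finite acyclic quiver Q and every Artin algebra Λ, the monomorphism category mono(Q,Λ) has almost split sequences. -/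
namespace QuivRep

variable {Λ : Type} [Ring Λ] {V : Type} [Quiver.{1} V] [Fintype V] [∀ i j : V, Fintype (i ⟶ j)]

/-- An object of the monomorphism category: finitely generated and monomorphic. -/
def Repn.InMono (X : Repn Λ V) : Prop := X.FG ∧ X.IsMonoRep

def IsSplitEpi {Y Z : Repn Λ V} (g : RepHom Y Z) : Prop :=
  ∃ s : RepHom Z Y, g.comp s = RepHom.id Z

def IsSplitMono {X Y : Repn Λ V} (f : RepHom X Y) : Prop :=
  ∃ r : RepHom Y X, r.comp f = RepHom.id X

/-- `Z` is Ext-projective in `mono(Q,Λ)`. -/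
def ExtProjective (Z : Repn Λ V) : Prop :=
  ∀ (X Y : Repn Λ V), X.InMono → Y.InMono →
    ∀ (f : RepHom X Y) (g : RepHom Y Z), IsSES f g → IsSplitEpi g

/-- `X` is Ext-injective in `mono(Q,Λ)`. -/
def ExtInjective (X : Repn Λ V) : Prop :=
  ∀ (Y Z : Repn Λ V), Y.InMono → Z.InMono →
    ∀ (f : RepHom X Y) (g : RepHom Y Z), IsSES f g → IsSplitMono f

/-- An almost split (Auslander–Reiten) sequence in the subcategory `mono(Q,Λ)`,
in the sense of Auslander–Smalø. -/
def IsAlmostSplit {X Y Z : Repn Λ V} (f : RepHom X Y) (g : RepHom Y Z) : Prop :=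
  X.InMono ∧ Y.InMono ∧ Z.InMono ∧ IsSES f g ∧ ¬ IsSplitEpi g ∧
    X.Indec ∧ Z.Indec ∧
    -- g is right almost split in mono(Q,Λ)
    (∀ (W : Repn Λ V), W.InMono → ∀ u : RepHom W Z, ¬ IsSplitEpi u →
      ∃ v : RepHom W Y, g.comp v = u) ∧
    -- f is left almost split in mono(Q,Λ)
    (∀ (W : Repn Λ V), W.InMono → ∀ u : RepHom X W, ¬ IsSplitMono u →
      ∃ v : RepHom Y W, v.comp f = u)

end QuivRep


/-! ## Part E: a dualizing module over a commutative artinian ring -/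

namespace ARMono

theorem finite_hom (R : Type) [CommRing R] [IsNoetherianRing R] (M N : Type)
    [AddCommGroup M] [AddCommGroup N] [Module R M] [Module R N] [Module.Finite R M]
    [Module.Finite R N] : Module.Finite R (M →ₗ[R] N) := by
  obtain ⟨n, s, hs⟩ := Module.Finite.exists_fin (R := R) (M := M)
  let ev : (M →ₗ[R] N) →ₗ[R] (Fin n → N) :=
    { toFun := fun f k => f (s k)
      map_add' := fun _ _ => rfl
      map_smul' := fun _ _ => rfl }
  refine Module.Finite.of_injective ev ?_
  intro f g hfg
  apply LinearMap.ext_on_range hs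
  intro k
  exact congrFun hfg k

theorem exists_inj (R : Type) [CommRing R] (S : Type) [AddCommGroup S] [Module R S] :
    ∃ (E : Type) (_ : AddCommGroup E) (_ : Module R E) (φ : S →ₗ[R] E),
      Module.Injective R E ∧ Function.Injective φ := by
  obtain ⟨⟨J, hJ, f, hf⟩⟩ := CategoryTheory.EnoughInjectives.presentation (ModuleCat.of R S)
  refine ⟨J, inferInstance, inferInstance, f.hom, ?_, ?_⟩
  · exact Module.injective_module_of_injective_object R J
  · exact (ModuleCat.mono_iff_injective f).1 hf

theorem exists_max_disjoint {R : Type} [CommRing R] {E : Type} [AddCommGroup E] [Module R E]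
    (S : Submodule R E) :
    ∃ C : Submodule R E, C ⊓ S = ⊥ ∧ ∀ D : Submodule R E, C ≤ D → D ⊓ S = ⊥ → D = C := by
  obtain ⟨C, hC⟩ := zorn_le₀ {C : Submodule R E | C ⊓ S = ⊥} (by
    intro c hc hchain
    rcases c.eq_empty_or_nonempty with rfl | hne
    · exact ⟨⊥, by simp, by simp⟩
    · refine ⟨sSup c, ?_, fun z hz => le_sSup hz⟩
      rw [Set.mem_ofPred_eq, eq_bot_iff]
      rintro x ⟨hx, hxS⟩
      obtain ⟨N, hN, hxN⟩ := (Submodule.mem_sSup_of_directed hne hchain.directedOn).1 hx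
      have := hc hN
      rw [Set.mem_ofPred_eq] at this
      rw [← this]
      exact ⟨hxN, hxS⟩)
  refine ⟨C, hC.1, fun D hD h => le_antisymm (hC.2 h hD) hD⟩

theorem exists_dualizing (R : Type) [CommRing R] [IsArtinianRing R] :
    ∃ (E : Type) (_ : AddCommGroup E) (_ : Module R E),
      Module.Finite R E ∧ Module.Injective R E ∧
      (∀ (M : Type) [AddCommGroup M] [Module R M] (x : M), x ≠ 0 → ∃ f : M →ₗ[R] E, f x ≠ 0) ∧
      (∀ (M : Type) [AddCommGroup M] [Module R M] [Module.Finite R M]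
        (θ : (M →ₗ[R] E) →ₗ[R] E), ∃ x, ∀ f, θ f = f x) := by
  classical
  let S := ∀ m : MaximalSpectrum R, R ⧸ m.asIdeal
  obtain ⟨E', _, _, φ, hinj, hφ⟩ := exists_inj R S
  obtain ⟨C, hC, hmax⟩ := exists_max_disjoint (LinearMap.range φ)
  let Q := E' ⧸ C
  let j : S →ₗ[R] Q := C.mkQ ∘ₗ φ
  have hj : Function.Injective j := by
    rw [← LinearMap.ker_eq_bot, eq_bot_iff]
    intro s hs
    have h1 : φ s ∈ C := (Submodule.Quotient.mk_eq_zero C).1 hs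
    have h2 : φ s ∈ C ⊓ LinearMap.range φ := ⟨h1, s, rfl⟩
    rw [hC] at h2
    have : φ s = φ 0 := by simpa using h2
    simpa using hφ this
  have hess : ∀ x : Q, x ≠ 0 → ∃ (r : R) (s : S), r • x = j s ∧ s ≠ 0 := by
    intro x hx
    obtain ⟨y, rfl⟩ := C.mkQ_surjective x
    have hy : y ∉ C := fun h => hx ((Submodule.Quotient.mk_eq_zero C).2 h)
    have : (C ⊔ Submodule.span R {y}) ⊓ LinearMap.range φ ≠ ⊥ := by
      intro h
      have h1 := hmax _ le_sup_left h
      apply hy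
      rw [← h1]
      exact Submodule.mem_sup_right (Submodule.mem_span_singleton_self y)
    obtain ⟨z, ⟨hz, s, hs⟩, hz0⟩ := Submodule.exists_mem_ne_zero_of_ne_bot this
    obtain ⟨c, hc, w, hw, rfl⟩ := Submodule.mem_sup.1 hz
    obtain ⟨r, rfl⟩ := Submodule.mem_span_singleton.1 hw
    refine ⟨r, s, ?_, ?_⟩
    · have : C.mkQ c = 0 := by simpa using hc
      simp only [j, LinearMap.comp_apply, hs, map_add, this, map_smul, zero_add]
    · rintro rfl
      exact hz0 (by rw [← hs]; simp)
  -- torsion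
  have htorsS : ∀ (m : MaximalSpectrum R) (x : S), (∀ r ∈ m.asIdeal, r • x = 0) →
      ∃ c : R, x = c • (Pi.single m 1 : S) := by
    intro m x hx
    obtain ⟨c, hc⟩ := Ideal.Quotient.mk_surjective (x m)
    refine ⟨c, ?_⟩
    funext m'
    by_cases h : m' = m
    · subst h
      rw [Pi.smul_apply, Pi.single_eq_same, ← hc]
      exact (by rw [Algebra.smul_def, mul_one]; rfl)
    · rw [Pi.smul_apply, Pi.single_eq_of_ne h, smul_zero]
      have : ¬ m.asIdeal ≤ m'.asIdeal := fun hle =>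
        h (MaximalSpectrum.ext (m.isMaximal.eq_of_le m'.isMaximal.ne_top hle).symm)
      obtain ⟨r, hr, hr'⟩ := Set.not_subset.1 this
      have h1 : r • x m' = 0 := congrFun (hx r hr) m'
      have := m'.isMaximal
      let _ : Field (R ⧸ m'.asIdeal) := Ideal.Quotient.field _
      rw [Algebra.smul_def] at h1
      rcases mul_eq_zero.1 h1 with h2 | h2
      · exact absurd (Ideal.Quotient.eq_zero_iff_mem.1 h2) hr'
      · exact h2
  have htorsQ : ∀ (m : MaximalSpectrum R) (x : Q), (∀ r ∈ m.asIdeal, r • x = 0) →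
      ∃ c : R, x = c • j (Pi.single m 1) := by
    intro m x hx
    by_cases hx0 : x = 0
    · exact ⟨0, by simp [hx0]⟩
    obtain ⟨r, s, hrs, hs⟩ := hess x hx0
    have hr : r ∉ m.asIdeal := fun h => hs (hj (by rw [← hrs, hx r h, map_zero]))
    obtain ⟨r', y, hy, h1⟩ := m.isMaximal.exists_inv hr
    have hxs : x = j (r' • s) := by
      rw [map_smul, ← hrs, ← mul_smul]
      have : x = (r' * r + y) • x := by rw [h1, one_smul]
      conv_lhs => rw [this, add_smul, hx y hy, add_zero]
    obtain ⟨c, hc⟩ := htorsS m (r' • s) (by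
      intro t ht
      apply hj
      rw [map_smul, ← hxs, hx t ht, map_zero])
    exact ⟨c, by rw [hxs, hc, map_smul]⟩
  have key : ∀ (N : Type) [AddCommGroup N] [Module R N] (p : PrimeSpectrum R)
      (e : N ≃ₗ[R] R ⧸ p.1), ∃ m : MaximalSpectrum R, m.asIdeal = p.1 ∧
        ∀ f : N →ₗ[R] Q, ∃ c : R, f (e.symm (Ideal.Quotient.mk _ 1)) = c • j (Pi.single m 1) := by
    intro N _ _ p e
    have hp : p.1.IsMaximal := by
      exact Ideal.IsPrime.isMaximal' p.2
    refine ⟨⟨p.1, hp⟩, rfl, fun f => htorsQ _ _ ?_⟩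
    intro r hr
    rw [← map_smul, ← map_smul]
    have : r • (Ideal.Quotient.mk p.1) 1 = 0 := by
      rw [Algebra.smul_def, map_one, mul_one]
      exact Ideal.Quotient.eq_zero_iff_mem.2 hr
    rw [this, map_zero, map_zero]
  have extN : ∀ (N : Type) [AddCommGroup N] [Module R N] (p : PrimeSpectrum R)
      (e : N ≃ₗ[R] R ⧸ p.1) (x : N), ∃ c : R, x = c • e.symm (Ideal.Quotient.mk _ 1) := by
    intro N _ _ p e x
    obtain ⟨c, hc⟩ := Ideal.Quotient.mk_surjective (e x)
    refine ⟨c, ?_⟩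
    apply e.injective
    rw [map_smul, e.apply_symm_apply, Algebra.smul_def, map_one, mul_one, ← hc]
    rfl
  have hfin : ∀ (M : Type) [AddCommGroup M] [Module R M] (_ : Module.Finite R M),
      Module.Finite R (M →ₗ[R] Q) := by
    intro M _ _ hM
    induction hM using IsNoetherianRing.induction_on_isQuotientEquivQuotientPrime R with
    | subsingleton N =>
      have : Subsingleton (N →ₗ[R] Q) := ⟨fun f g => LinearMap.ext fun x => by
        rw [Subsingleton.elim x 0, map_zero, map_zero]⟩
      infer_instance
    | quotient N p e =>
      obtain ⟨m, hm, hf⟩ := key N p e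
      let n0 := e.symm (Ideal.Quotient.mk _ 1)
      let ev : (N →ₗ[R] Q) →ₗ[R] Submodule.span R {j (Pi.single m 1)} :=
        LinearMap.codRestrict _ (LinearMap.applyₗ n0) (by
          intro f
          obtain ⟨c, hc⟩ := hf f
          exact Submodule.mem_span_singleton.2 ⟨c, hc.symm⟩)
      refine Module.Finite.of_injective ev ?_
      intro f g hfg
      have h1 : f n0 = g n0 := congrArg Subtype.val hfg
      ext x
      obtain ⟨c, hc⟩ := extN N p e x
      rw [hc, map_smul, map_smul, h1]
    | exact N₁ N₂ N₃ f g hf hg hfg h1 h3 =>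
      have : IsNoetherian R (N₂ →ₗ[R] Q) := by
        refine isNoetherian_of_range_eq_ker (LinearMap.lcomp R Q g) (LinearMap.lcomp R Q f) ?_
        ext u
        simp only [LinearMap.mem_range, LinearMap.mem_ker]
        constructor
        · rintro ⟨v, rfl⟩
          ext x
          simp [hfg.apply_apply_eq_zero]
        · intro hu
          have hk : LinearMap.ker g ≤ LinearMap.ker u := by
            intro x hx
            obtain ⟨y, rfl⟩ := (hfg x).1 hx
            exact LinearMap.congr_fun hu y
          refine ⟨(LinearMap.ker g).liftQ u hk ∘ₗ (g.quotKerEquivOfSurjective hg).symm, ?_⟩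
          ext x
          simp only [LinearMap.lcomp_apply, LinearMap.comp_apply]
          have : (g.quotKerEquivOfSurjective hg).symm (g x) = (LinearMap.ker g).mkQ x := by
            rw [LinearEquiv.symm_apply_eq]; rfl
          erw [this]
          simp
      infer_instance
  have hQ : Module.Finite R Q := by
    have := hfin R inferInstance
    exact Module.Finite.equiv (LinearMap.ringLmapEquivSelf R R Q)
  have hinjQ : Module.Injective R Q := by
    obtain ⟨g, hg⟩ := hinj.out j hj φ
    let h : Q →ₗ[R] Q := C.mkQ ∘ₗ g
    have hh : Function.Injective h := by
      rw [← LinearMap.ker_eq_bot, eq_bot_iff]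
      intro x hx
      by_contra hx0
      obtain ⟨r, s, hrs, hs⟩ := hess x (by simpa using hx0)
      apply hs
      apply hj
      have : h (r • x) = 0 := by rw [map_smul, LinearMap.mem_ker.1 hx, smul_zero]
      rw [hrs] at this
      rw [map_zero, ← this]
      simp only [h, LinearMap.comp_apply, hg]
      rfl
    have hb : Function.Bijective h := IsArtinian.bijective_of_injective_endomorphism h hh
    let he := LinearEquiv.ofBijective h hb
    refine ⟨fun X Y _ _ _ _ f hf k => ?_⟩
    obtain ⟨l, hl⟩ := hinj.out f hf (g ∘ₗ k)
    refine ⟨he.symm.toLinearMap ∘ₗ C.mkQ ∘ₗ l, fun x => ?_⟩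
    simp only [LinearMap.comp_apply, hl]
    exact (LinearEquiv.symm_apply_eq he).2 rfl
  refine ⟨Q, inferInstance, inferInstance, hQ, hinjQ, ?_, ?_⟩
  · intro M _ _ x hx
    have hann : Ideal.torsionOf R M x ≠ ⊤ := by
      simpa [Ideal.torsionOf_eq_top_iff] using hx
    obtain ⟨m, hm, hle⟩ := Ideal.exists_le_maximal _ hann
    let m' : MaximalSpectrum R := ⟨m, hm⟩
    let c : R →ₗ[R] Q := LinearMap.toSpanSingleton R Q (j (Pi.single m' 1))
    have hck : Ideal.torsionOf R M x ≤ LinearMap.ker c := by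
      intro r hr
      have hrm := hle hr
      simp only [c, LinearMap.mem_ker, LinearMap.toSpanSingleton_apply]
      rw [← map_smul]
      have : r • (Pi.single m' 1 : S) = 0 := by
        rw [← Pi.single_smul]
        have : r • (1 : R ⧸ m'.asIdeal) = 0 := by
          rw [Algebra.smul_def, mul_one]
          exact Ideal.Quotient.eq_zero_iff_mem.2 hrm
        rw [this, Pi.single_zero]
      rw [this, map_zero]
    let i : (R ⧸ Ideal.torsionOf R M x) →ₗ[R] M :=
      (Submodule.subtype _) ∘ₗ (Ideal.quotTorsionOfEquivSpanSingleton R M x).toLinearMap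
    have hi : Function.Injective i := by
      intro a b hab
      exact (Ideal.quotTorsionOfEquivSpanSingleton R M x).injective (Subtype.ext hab)
    obtain ⟨f, hf⟩ := hinjQ.out i hi ((Ideal.torsionOf R M x).liftQ c hck)
    refine ⟨f, ?_⟩
    have h1 := hf (Submodule.Quotient.mk 1)
    have h2 : i (Submodule.Quotient.mk 1) = x := by
      simp only [i, LinearMap.comp_apply]
      erw [Ideal.quotTorsionOfEquivSpanSingleton_apply_mk]
      simp
    rw [h2] at h1
    rw [h1]
    have h3 : ((Ideal.torsionOf R M x).liftQ c hck) (Submodule.Quotient.mk 1)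
      = j (Pi.single m' 1) := by
      rw [Submodule.liftQ_apply]
      simp [c]
    rw [h3]
    intro h0
    have := hj (h0.trans (map_zero j).symm)
    have := congrFun this m'
    rw [Pi.single_eq_same] at this
    exact hm.ne_top ((Ideal.Quotient.zero_eq_one_iff).1 this.symm)
  · intro M _ _ hM
    induction hM using IsNoetherianRing.induction_on_isQuotientEquivQuotientPrime R with
    | subsingleton N =>
      intro θ
      refine ⟨0, fun f => ?_⟩
      have : f = 0 := LinearMap.ext fun x => by
        rw [Subsingleton.elim x 0, map_zero, map_zero]
      rw [this]; simp
    | quotient N p e =>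
      intro θ
      obtain ⟨m, hm, hf⟩ := key N p e
      let n0 := e.symm (Ideal.Quotient.mk _ 1)
      let c0 : R →ₗ[R] Q := LinearMap.toSpanSingleton R Q (j (Pi.single m 1))
      have hker : ∀ r ∈ p.1, r • j (Pi.single m 1) = 0 := by
        intro r hr
        rw [← map_smul]
        have : r • (Pi.single m 1 : S) = 0 := by
          rw [← Pi.single_smul]
          have : r • (1 : R ⧸ m.asIdeal) = 0 := by
            rw [Algebra.smul_def, mul_one]
            exact Ideal.Quotient.eq_zero_iff_mem.2 (by rw [hm]; exact hr)
          rw [this, Pi.single_zero]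
        rw [this, map_zero]
      let f0 : N →ₗ[R] Q := (Submodule.liftQ p.1 c0 (by
        intro r hr
        simpa [c0] using hker r hr)) ∘ₗ e.toLinearMap
      have hf0 : f0 n0 = j (Pi.single m 1) := by
        simp only [f0, n0, LinearMap.comp_apply, LinearEquiv.coe_coe, e.apply_symm_apply]
        erw [Submodule.liftQ_apply]
        simp [c0]
      have hall : ∀ f : N →ₗ[R] Q, ∃ c : R, f = c • f0 := by
        intro f
        obtain ⟨c, hc⟩ := hf f
        refine ⟨c, LinearMap.ext fun x => ?_⟩
        obtain ⟨b, hb⟩ := extN N p e x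
        have : f n0 = c • f0 n0 := by rw [hf0]; exact hc
        rw [hb, map_smul, LinearMap.smul_apply, map_smul, smul_comm c b]
        congr 1
      obtain ⟨r, hr⟩ := htorsQ m (θ f0) (by
        intro r hr
        rw [← map_smul]
        have : r • f0 = 0 := by
          ext x
          obtain ⟨b, hb⟩ := extN N p e x
          have : f0 x = b • j (Pi.single m 1) := by rw [hb, map_smul]; congr 1
          rw [LinearMap.smul_apply, this, smul_comm, hker r (by rw [← hm]; exact hr)]
          simp
        rw [this, map_zero])
      refine ⟨r • n0, fun f => ?_⟩
      obtain ⟨c, rfl⟩ := hall f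
      rw [map_smul, hr, map_smul, LinearMap.smul_apply, hf0, smul_comm]
    | exact N₁ N₂ N₃ f g hf hg hfg h1 h3 =>
      intro θ
      obtain ⟨x3, hx3⟩ := h3 (θ ∘ₗ LinearMap.lcomp R Q g)
      obtain ⟨x2, rfl⟩ := hg x3
      let θ' : (N₂ →ₗ[R] Q) →ₗ[R] Q := θ - LinearMap.applyₗ x2
      have hθ' : ∀ u : N₃ →ₗ[R] Q, θ' (u ∘ₗ g) = 0 := by
        intro u
        have := hx3 u
        simp only [LinearMap.comp_apply, LinearMap.lcomp_apply'] at this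
        simp [θ', this]
      have hres : Function.Surjective (LinearMap.lcomp R Q f) := by
        intro u
        obtain ⟨v, hv⟩ := hinjQ.out f hf u
        exact ⟨v, LinearMap.ext hv⟩
      have hk : LinearMap.ker (LinearMap.lcomp R Q f) ≤ LinearMap.ker θ' := by
        intro u hu
        have hk : LinearMap.ker g ≤ LinearMap.ker u := by
          intro x hx
          obtain ⟨y, rfl⟩ := (hfg x).1 hx
          exact LinearMap.congr_fun hu y
        have : u = ((LinearMap.ker g).liftQ u hk ∘ₗ (g.quotKerEquivOfSurjective hg).symm) ∘ₗ g := by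
          ext x
          simp only [LinearMap.comp_apply]
          have : (g.quotKerEquivOfSurjective hg).symm (g x) = (LinearMap.ker g).mkQ x := by
            rw [LinearEquiv.symm_apply_eq]; rfl
          erw [this]
          simp
        rw [this]
        exact hθ' _
      obtain ⟨x1, hx1⟩ := h1 ((LinearMap.ker (LinearMap.lcomp R Q f)).liftQ θ' hk ∘ₗ
        ((LinearMap.lcomp R Q f).quotKerEquivOfSurjective hres).symm)
      refine ⟨x2 + f x1, fun u => ?_⟩
      have h5 := hx1 (u ∘ₗ f)
      have h6 : ((LinearMap.lcomp R Q f).quotKerEquivOfSurjective hres).symm (u ∘ₗ f)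
          = (LinearMap.ker (LinearMap.lcomp R Q f)).mkQ u := by
        rw [LinearEquiv.symm_apply_eq]; rfl
      simp only [LinearMap.comp_apply] at h5
      erw [h6] at h5
      have h7 : θ' u = u (f x1) := by simpa using h5
      have h8 : θ' u = θ u - u x2 := by simp [θ']
      rw [map_add, ← h7, h8]; abel

end ARMono

/-! ## Part A: abstract existence of almost split sequences -/

namespace ARMono
open CategoryTheory

universe u

def powr {𝒞 : Type u} [Category.{0} 𝒞] {X : 𝒞} (v : X ⟶ X) : ℕ → (X ⟶ X)
  | 0 => 𝟙 X
  | n + 1 => powr v n ≫ v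

theorem powr_succ' {𝒞 : Type u} [Category.{0} 𝒞] {X : 𝒞} (v : X ⟶ X) (n : ℕ) :
    powr v (n + 1) = v ≫ powr v n := by
  induction n with
  | zero => simp [powr]
  | succ n ih =>
    conv_lhs => rw [powr, ih, Category.assoc]
    rfl

theorem powr_op {𝒞 : Type u} [Category.{0} 𝒞] {X : 𝒞} (v : X ⟶ X) (n : ℕ) :
    (powr v n).op = powr v.op n := by
  induction n with
  | zero => rfl
  | succ n ih => rw [powr_succ', op_comp, ih]; rfl

/-- Indecomposability in terms of idempotents. -/
def Ind {𝒞 : Type u} [Category.{0} 𝒞] [Preadditive 𝒞] (X : 𝒞) : Prop :=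
  𝟙 X ≠ 0 ∧ ∀ e : X ⟶ X, e ≫ e = e → e = 𝟙 X ∨ e = 0

/-- A category with conflations and the finiteness conditions needed below. -/
structure ExData (𝒞 : Type u) [Category.{0} 𝒞] [Preadditive 𝒞] where
  Conf : ∀ {X Y Z : 𝒞}, (X ⟶ Y) → (Y ⟶ Z) → Prop
  mono : ∀ {X Y Z : 𝒞} {f : X ⟶ Y} {g : Y ⟶ Z}, Conf f g → Mono f
  epi : ∀ {X Y Z : 𝒞} {f : X ⟶ Y} {g : Y ⟶ Z}, Conf f g → Epi g
  zero : ∀ {X Y Z : 𝒞} {f : X ⟶ Y} {g : Y ⟶ Z}, Conf f g → f ≫ g = 0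
  ker : ∀ {X Y Z : 𝒞} {f : X ⟶ Y} {g : Y ⟶ Z}, Conf f g →
    ∀ {W : 𝒞} (u : W ⟶ Y), u ≫ g = 0 → ∃ v : W ⟶ X, v ≫ f = u
  coker : ∀ {X Y Z : 𝒞} {f : X ⟶ Y} {g : Y ⟶ Z}, Conf f g →
    ∀ {W : 𝒞} (u : Y ⟶ W), f ≫ u = 0 → ∃ v : Z ⟶ W, g ≫ v = u
  pb : ∀ {X Y Z : 𝒞} {f : X ⟶ Y} {g : Y ⟶ Z}, Conf f g → ∀ {W : 𝒞} (h : W ⟶ Z),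
    ∃ (B : 𝒞) (i : X ⟶ B) (p : B ⟶ W) (q : B ⟶ Y), Conf i p ∧ i ≫ q = f ∧ q ≫ g = p ≫ h ∧
      ∀ {U : 𝒞} (s : U ⟶ Y) (c : U ⟶ W), s ≫ g = c ≫ h → ∃ b : U ⟶ B, b ≫ q = s ∧ b ≫ p = c
  po : ∀ {X Y Z : 𝒞} {f : X ⟶ Y} {g : Y ⟶ Z}, Conf f g → ∀ {W : 𝒞} (h : X ⟶ W),
    ∃ (B : 𝒞) (i : W ⟶ B) (p : B ⟶ Z) (q : Y ⟶ B), Conf i p ∧ q ≫ p = g ∧ f ≫ q = h ≫ i ∧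
      ∀ {U : 𝒞} (s : Y ⟶ U) (c : W ⟶ U), f ≫ s = h ≫ c → ∃ b : B ⟶ U, q ≫ b = s ∧ i ≫ b = c
  μ : 𝒞 → ℕ
  idem : ∀ (X : 𝒞) (e : X ⟶ X), e ≫ e = e → e ≠ 𝟙 X →
    ∃ (Y : 𝒞) (r : X ⟶ Y) (s : Y ⟶ X), s ≫ r = 𝟙 Y ∧ r ≫ s = e ∧ μ Y < μ X
  fit : ∀ (X : 𝒞) (v : X ⟶ X), IsIso v ∨ ∃ (n : ℕ) (e : X ⟶ X), e ≫ e = e ∧ e ≠ 𝟙 X ∧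
    e ≫ powr v n = powr v n ∧ powr v n ≫ e = powr v n
  nil : ∀ (X : 𝒞), Ind X → ∃ (J : ℕ → Set (X ⟶ X)) (N : ℕ), 𝟙 X ∈ J 0 ∧
    (∀ k e e', e ∈ J k → ¬ IsIso e' → e ≫ e' ∈ J (k + 1) ∧ e' ≫ e ∈ J (k + 1)) ∧
    ∀ e ∈ J N, e = 0

variable {𝒞 : Type u} [Category.{0} 𝒞] [Preadditive 𝒞] (D : ExData 𝒞)

theorem isIso_op' {X Y : 𝒞} (f : X ⟶ Y) : IsIso f.op ↔ IsIso f :=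
  ⟨fun _ => isIso_of_op f, fun _ => inferInstance⟩

theorem ind_unop {X : 𝒞ᵒᵖ} (h : Ind X) : Ind X.unop := by
  refine ⟨fun h0 => h.1 (congrArg Quiver.Hom.op h0), fun e he => ?_⟩
  rcases h.2 e.op (congrArg Quiver.Hom.op he) with h1 | h1
  · exact Or.inl (congrArg Quiver.Hom.unop h1)
  · exact Or.inr (congrArg Quiver.Hom.unop h1)

theorem ind_op {X : 𝒞} (h : Ind X) : Ind (Opposite.op X) := by
  refine ⟨fun h0 => h.1 (congrArg Quiver.Hom.unop h0), fun e he => ?_⟩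
  rcases h.2 e.unop (congrArg Quiver.Hom.unop he) with h1 | h1
  · exact Or.inl (congrArg Quiver.Hom.op h1)
  · exact Or.inr (congrArg Quiver.Hom.op h1)

/-- The opposite data. -/
def ExData.op : ExData 𝒞ᵒᵖ where
  Conf f g := D.Conf g.unop f.unop
  mono h := by have := D.epi h; exact unop_epi_iff _ |>.1 this
  epi h := by have := D.mono h; exact unop_mono_iff _ |>.1 this
  zero h := congrArg Quiver.Hom.op (D.zero h)
  ker h W u hu := by
    obtain ⟨v, hv⟩ := D.coker h u.unop (congrArg Quiver.Hom.unop hu)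
    exact ⟨v.op, congrArg Quiver.Hom.op hv⟩
  coker h W u hu := by
    obtain ⟨v, hv⟩ := D.ker h u.unop (congrArg Quiver.Hom.unop hu)
    exact ⟨v.op, congrArg Quiver.Hom.op hv⟩
  pb hc W h := by
    obtain ⟨B, i, p, q, h1, h2, h3, h4⟩ := D.po hc h.unop
    refine ⟨Opposite.op B, p.op, i.op, q.op, h1, congrArg Quiver.Hom.op h2,
      congrArg Quiver.Hom.op h3, ?_⟩
    intro U s c hsc
    obtain ⟨b, hb1, hb2⟩ := h4 s.unop c.unop (congrArg Quiver.Hom.unop hsc)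
    exact ⟨b.op, congrArg Quiver.Hom.op hb1, congrArg Quiver.Hom.op hb2⟩
  po hc W h := by
    obtain ⟨B, i, p, q, h1, h2, h3, h4⟩ := D.pb hc h.unop
    refine ⟨Opposite.op B, p.op, i.op, q.op, h1, congrArg Quiver.Hom.op h2,
      congrArg Quiver.Hom.op h3, ?_⟩
    intro U s c hsc
    obtain ⟨b, hb1, hb2⟩ := h4 s.unop c.unop (congrArg Quiver.Hom.unop hsc)
    exact ⟨b.op, congrArg Quiver.Hom.op hb1, congrArg Quiver.Hom.op hb2⟩
  μ X := D.μ X.unop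
  idem X e he hne := by
    obtain ⟨Y, r, s, h1, h2, h3⟩ := D.idem X.unop e.unop (congrArg Quiver.Hom.unop he)
      (fun h => hne (congrArg Quiver.Hom.op h))
    exact ⟨Opposite.op Y, s.op, r.op, congrArg Quiver.Hom.op h1, congrArg Quiver.Hom.op h2, h3⟩
  fit X v := by
    rcases D.fit X.unop v.unop with h | ⟨n, e, h1, h2, h3, h4⟩
    · left
      exact (isIso_op' v.unop).2 h
    · right
      refine ⟨n, e.op, congrArg Quiver.Hom.op h1, fun h => h2 (congrArg Quiver.Hom.unop h), ?_, ?_⟩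
      · have := congrArg Quiver.Hom.op h4
        rw [op_comp, powr_op] at this
        exact this
      · have := congrArg Quiver.Hom.op h3
        rw [op_comp, powr_op] at this
        exact this
  nil X hX := by
    obtain ⟨J, N, h1, h2, h3⟩ := D.nil X.unop (ind_unop hX)
    refine ⟨fun k => {e | e.unop ∈ J k}, N, h1, ?_, ?_⟩
    · intro k e e' he he'
      have := h2 k e.unop e'.unop he (fun h => he' ((isIso_op' e'.unop).2 h))
      exact ⟨this.2, this.1⟩
    · intro e he
      exact congrArg Quiver.Hom.op (h3 e.unop he)

def SE {Y Z : 𝒞} (g : Y ⟶ Z) : Prop := ∃ s : Z ⟶ Y, s ≫ g = 𝟙 Z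
def SM {X Y : 𝒞} (f : X ⟶ Y) : Prop := ∃ r : Y ⟶ X, f ≫ r = 𝟙 X

variable {D}

theorem sm_of_se {X Y Z : 𝒞} {f : X ⟶ Y} {g : Y ⟶ Z} (h : D.Conf f g) (hg : SE g) : SM f := by
  obtain ⟨s, hs⟩ := hg
  obtain ⟨v, hv⟩ := D.ker h (𝟙 Y - g ≫ s) (by
    rw [Preadditive.sub_comp, Category.assoc, hs, Category.comp_id, Category.id_comp, sub_self])
  refine ⟨v, ?_⟩
  have := D.mono h
  rw [← cancel_mono f, Category.assoc, hv, Preadditive.comp_sub, ← Category.assoc, D.zero h]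
  simp

theorem se_of_sm {X Y Z : 𝒞} {f : X ⟶ Y} {g : Y ⟶ Z} (h : D.Conf f g) (hf : SM f) : SE g := by
  obtain ⟨r, hr⟩ := hf
  obtain ⟨v, hv⟩ := D.coker h (𝟙 Y - r ≫ f) (by
    rw [Preadditive.comp_sub, ← Category.assoc, hr, Category.comp_id, Category.id_comp, sub_self])
  refine ⟨v, ?_⟩
  have := D.epi h
  rw [← cancel_epi g, ← Category.assoc, hv, Preadditive.sub_comp, Category.assoc, D.zero h]
  simp

theorem iso_or_nil (D : ExData 𝒞) {X : 𝒞} (hX : Ind X) (v : X ⟶ X) :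
    IsIso v ∨ ∃ n, powr v n = 0 := by
  rcases D.fit X v with h | ⟨n, e, h1, h2, h3, h4⟩
  · exact Or.inl h
  · right
    rcases hX.2 e h1 with h | h
    · exact absurd h h2
    · exact ⟨n, by rw [← h3, h, Limits.zero_comp]⟩

/-- right almost split -/
def RAS {Y Z : 𝒞} (g : Y ⟶ Z) : Prop :=
  ∀ (W : 𝒞) (u : W ⟶ Z), ¬ SE u → ∃ v : W ⟶ Y, v ≫ g = u

def LAS {X Y : 𝒞} (f : X ⟶ Y) : Prop :=
  ∀ (W : 𝒞) (u : X ⟶ W), ¬ SM u → ∃ v : Y ⟶ W, f ≫ v = u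

theorem las_of_ras {X Y Z : 𝒞} {f : X ⟶ Y} {g : Y ⟶ Z} (h : D.Conf f g) (hns : ¬ SE g)
    (hX : Ind X) (hg : RAS g) : LAS f := by
  intro W u hu
  obtain ⟨B, f', g', q, hc, hq1, hq2, -⟩ := D.po h u
  by_cases hs : SE g'
  · obtain ⟨r, hr⟩ := sm_of_se hc hs
    exact ⟨q ≫ r, by rw [← Category.assoc, hq2, Category.assoc, hr, Category.comp_id]⟩
  exfalso
  obtain ⟨k, hk⟩ := hg B g' hs
  obtain ⟨u', hu'⟩ := D.ker h (f' ≫ k) (by rw [Category.assoc, hk, D.zero hc])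
  have hw : (q ≫ k) ≫ g = g := by rw [Category.assoc, hk, hq1]
  have hfw : f ≫ q ≫ k = (u ≫ u') ≫ f := by
    rw [← Category.assoc, hq2, Category.assoc, Category.assoc, hu']
  have hpow : ∀ n, powr (q ≫ k) n ≫ g = g ∧ f ≫ powr (q ≫ k) n = powr (u ≫ u') n ≫ f := by
    intro n
    induction n with
    | zero => simp [powr]
    | succ n ih =>
      refine ⟨?_, ?_⟩
      · rw [powr, Category.assoc, hw, ih.1]
      · rw [powr, ← Category.assoc, ih.2, Category.assoc, hfw, powr]
        simp only [Category.assoc]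
  rcases iso_or_nil D hX (u ≫ u') with h1 | ⟨n, hn⟩
  · exact hu ⟨u' ≫ inv (u ≫ u'), by rw [← Category.assoc, IsIso.hom_inv_id]⟩
  · obtain ⟨h2, h3⟩ := hpow n
    rw [hn, Limits.zero_comp] at h3
    obtain ⟨t, ht⟩ := D.coker h _ h3
    apply hns
    refine ⟨t, ?_⟩
    have := D.epi h
    rw [← cancel_epi g, ← Category.assoc, ht, h2, Category.comp_id]

/-- Cutting down the left term to an indecomposable one. -/
theorem cut_down {Z : 𝒞} : ∀ (n : ℕ) {T Y : 𝒞} {f : T ⟶ Y} {g : Y ⟶ Z}, D.μ T = n →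
    D.Conf f g → ¬ SE g → RAS g →
    ∃ (T' Y' : 𝒞) (f' : T' ⟶ Y') (g' : Y' ⟶ Z), D.Conf f' g' ∧ ¬ SE g' ∧ RAS g' ∧ Ind T' := by
  intro n
  induction n using Nat.strong_induction_on with
  | _ n ih =>
  intro T Y f g hn hc hns hras
  by_cases hT : Ind T
  · exact ⟨T, Y, f, g, hc, hns, hras, hT⟩
  have h0 : 𝟙 T ≠ 0 := fun h => hns (se_of_sm hc ⟨0, by rw [h, Limits.comp_zero]⟩)
  have : ∃ e : T ⟶ T, e ≫ e = e ∧ e ≠ 𝟙 T ∧ e ≠ 0 := by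
    by_contra hcon
    push Not at hcon
    refine hT ⟨h0, fun e he => ?_⟩
    by_cases h1 : e = 𝟙 T
    · exact Or.inl h1
    · exact Or.inr (hcon e he h1)
  obtain ⟨e, he, he1, he0⟩ := this
  have step : ∀ e : T ⟶ T, e ≫ e = e → e ≠ 𝟙 T → (∃ a : Y ⟶ T, f ≫ a = e) ∨
      ∃ (T' Y' : 𝒞) (f' : T' ⟶ Y') (g' : Y' ⟶ Z), D.Conf f' g' ∧ ¬ SE g' ∧ RAS g' ∧ Ind T' := by
    intro e he he1
    obtain ⟨T1, r, s, hsr, hrs, hμ⟩ := D.idem T e he he1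
    obtain ⟨B, f', g', q, hc', hq1, hq2, -⟩ := D.po hc r
    by_cases hs : SE g'
    · left
      obtain ⟨a, ha⟩ := sm_of_se hc' hs
      refine ⟨q ≫ a ≫ s, ?_⟩
      rw [← Category.assoc, hq2, Category.assoc, ← Category.assoc f', ha, Category.id_comp, hrs]
    · right
      refine ih _ (hn ▸ hμ) rfl hc' hs ?_
      intro W u hu
      obtain ⟨v, hv⟩ := hras W u hu
      exact ⟨v ≫ q, by rw [Category.assoc, hq1, hv]⟩
  rcases step e he he1 with ⟨a, ha⟩ | h
  · rcases step (𝟙 T - e) (by simp [Preadditive.comp_sub, Preadditive.sub_comp, he])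
      (fun h => he0 (by simpa using h)) with ⟨b, hb⟩ | h
    · exact absurd (se_of_sm hc ⟨a + b, by rw [Preadditive.comp_add, ha, hb]; abel⟩) hns
    · exact h
  · exact h

/-- Socle argument. -/
theorem socle {Z T : 𝒞} (hZ : Ind Z)
    (hex : ∃ (Y : 𝒞) (f : T ⟶ Y) (g : Y ⟶ Z), D.Conf f g ∧ ¬ SE g) :
    ∃ (Y : 𝒞) (f : T ⟶ Y) (g : Y ⟶ Z), D.Conf f g ∧ ¬ SE g ∧
      ∀ e : Z ⟶ Z, ¬ IsIso e → ∃ s : Z ⟶ Y, s ≫ g = e := by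
  obtain ⟨J, N, h1, h2, h3⟩ := D.nil Z hZ
  have main : ∀ n, (∃ (Y : 𝒞) (f : T ⟶ Y) (g : Y ⟶ Z), D.Conf f g ∧ ¬ SE g ∧
      ∀ e ∈ J n, ∃ s : Z ⟶ Y, s ≫ g = e) →
      ∃ (Y : 𝒞) (f : T ⟶ Y) (g : Y ⟶ Z), D.Conf f g ∧ ¬ SE g ∧
      ∀ e : Z ⟶ Z, ¬ IsIso e → ∃ s : Z ⟶ Y, s ≫ g = e := by
    intro n
    induction n with
    | zero =>
      rintro ⟨Y, f, g, hc, hns, h⟩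
      exact absurd (h _ h1) hns
    | succ n ih =>
      rintro ⟨Y, f, g, hc, hns, h⟩
      by_cases hall : ∀ e : Z ⟶ Z, ¬ IsIso e → ∃ s : Z ⟶ Y, s ≫ g = e
      · exact ⟨Y, f, g, hc, hns, hall⟩
      push Not at hall
      obtain ⟨e, he, hne⟩ := hall
      obtain ⟨B, i, p, q, hc', hq1, hq2, huni⟩ := D.pb hc e
      apply ih
      refine ⟨B, i, p, hc', ?_, ?_⟩
      · rintro ⟨s, hs⟩
        apply hne (s ≫ q)
        rw [Category.assoc, hq2, ← Category.assoc, hs, Category.id_comp]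
      · intro e' he'
        obtain ⟨s, hs⟩ := h _ (h2 n e' e he' he).1
        obtain ⟨b, -, hb⟩ := huni s e' hs
        exact ⟨b, hb⟩
  obtain ⟨Y, f, g, hc, hns⟩ := hex
  refine main N ⟨Y, f, g, hc, hns, fun e he => ⟨0, ?_⟩⟩
  rw [h3 e he, Limits.zero_comp]

variable (D) in
/-- A contravariant functor controlling the lifting of maps from `Z`. -/
structure Defect (Z : 𝒞) where
  F : 𝒞 → Type
  act : ∀ {X Y : 𝒞}, (X ⟶ Y) → F Y → F X
  act_comp : ∀ {X Y W : 𝒞} (u : X ⟶ Y) (v : Y ⟶ W) (φ : F W), act (u ≫ v) φ = act u (act v φ)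
  defect : ∀ {X Y W : 𝒞} {f : X ⟶ Y} {g : Y ⟶ W}, D.Conf f g →
    (Function.Surjective (act f) ↔ ∀ c : Z ⟶ W, ∃ c' : Z ⟶ Y, c' ≫ g = c)
  gen : ∃ (T : 𝒞) (φ : F T), ∀ (X : 𝒞) (ψ : F X), ∃ u : X ⟶ T, act u φ = ψ

theorem Defect.min_gen {Z : 𝒞} (A : Defect D Z) : ∃ (T : 𝒞) (φ : A.F T),
    (∀ (X : 𝒞) (ψ : A.F X), ∃ u : X ⟶ T, A.act u φ = ψ) ∧
    ∀ v : T ⟶ T, A.act v φ = φ → IsIso v := by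
  have main : ∀ (n : ℕ) (T : 𝒞) (φ : A.F T), D.μ T = n →
      (∀ (X : 𝒞) (ψ : A.F X), ∃ u : X ⟶ T, A.act u φ = ψ) → ∃ (T : 𝒞) (φ : A.F T),
    (∀ (X : 𝒞) (ψ : A.F X), ∃ u : X ⟶ T, A.act u φ = ψ) ∧
    ∀ v : T ⟶ T, A.act v φ = φ → IsIso v := by
    intro n
    induction n using Nat.strong_induction_on with
    | _ n ih =>
    intro T φ hn hgen
    by_cases hall : ∀ v : T ⟶ T, A.act v φ = φ → IsIso v
    · exact ⟨T, φ, hgen, hall⟩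
    push Not at hall
    obtain ⟨v, hv, hni⟩ := hall
    have hid : A.act (𝟙 T) φ = φ := by
      obtain ⟨u, hu⟩ := hgen T φ
      conv_lhs => rw [← hu, ← A.act_comp, Category.id_comp, hu]
    rcases D.fit T v with h | ⟨k, e, he, he1, h3, h4⟩
    · exact absurd h hni
    have hk : A.act (powr v k) φ = φ := by
      clear h3 h4
      induction k with
      | zero => exact hid
      | succ k ih => rw [powr, A.act_comp, hv, ih]
    have hee : A.act e φ = φ := by
      conv_lhs => rw [← hk, ← A.act_comp, h3, hk]
    obtain ⟨T', r, s, hsr, hrs, hμ⟩ := D.idem T e he he1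
    refine ih _ (hn ▸ hμ) T' (A.act s φ) rfl ?_
    intro X ψ
    obtain ⟨u, hu⟩ := hgen X ψ
    refine ⟨u ≫ r, ?_⟩
    rw [← A.act_comp, Category.assoc, hrs, A.act_comp, hee, hu]
  obtain ⟨T, φ, h⟩ := A.gen
  exact main _ T φ rfl h

theorem Defect.exists_ar {Z : 𝒞} (A : Defect D Z) (hZ : Ind Z)
    (hex : ∃ (X Y : 𝒞) (f : X ⟶ Y) (g : Y ⟶ Z), D.Conf f g ∧ ¬ SE g) :
    ∃ (X Y : 𝒞) (f : X ⟶ Y) (g : Y ⟶ Z), D.Conf f g ∧ ¬ SE g ∧ Ind X ∧ RAS g ∧ LAS f := by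
  obtain ⟨T, φ, hgen, hmin⟩ := A.min_gen
  have h1 : ∃ (Y : 𝒞) (f : T ⟶ Y) (g : Y ⟶ Z), D.Conf f g ∧ ¬ SE g := by
    obtain ⟨X, Y, f, g, hc, hns⟩ := hex
    have hsurj : ¬ Function.Surjective (A.act f) := by
      rw [A.defect hc]
      intro h
      exact hns (h (𝟙 Z))
    simp only [Function.Surjective, not_forall, not_exists] at hsurj
    obtain ⟨ψ, hψ⟩ := hsurj
    obtain ⟨u, hu⟩ := hgen X ψ
    obtain ⟨B, f', g', q, hc', hq1, hq2, -⟩ := D.po hc u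
    refine ⟨B, f', g', hc', fun hs => ?_⟩
    obtain ⟨r, hr⟩ := sm_of_se hc' hs
    apply hψ (A.act (q ≫ r) φ)
    rw [← A.act_comp, ← Category.assoc, hq2, Category.assoc, hr, Category.comp_id, hu]
  obtain ⟨Y, f, g, hc, hns, hsoc⟩ := socle hZ h1
  have hras : RAS g := by
    intro W h hh
    obtain ⟨B, i, p, q, hc', hq1, hq2, huni⟩ := D.pb hc h
    have hs : Function.Surjective (A.act i) := by
      rw [A.defect hc']
      intro c
      obtain ⟨s, hs⟩ := hsoc (c ≫ h) (fun hiso =>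
        hh ⟨inv (c ≫ h) ≫ c, by rw [Category.assoc, IsIso.inv_hom_id]⟩)
      obtain ⟨b, -, hb⟩ := huni s c hs
      exact ⟨b, hb⟩
    obtain ⟨ψ, hψ⟩ := hs φ
    obtain ⟨u, hu⟩ := hgen B ψ
    have hiso := hmin (i ≫ u) (by rw [A.act_comp, hu, hψ])
    obtain ⟨s, hs⟩ := se_of_sm hc'
      ⟨u ≫ inv (i ≫ u), by rw [← Category.assoc, IsIso.hom_inv_id]⟩
    exact ⟨s ≫ q, by rw [Category.assoc, hq2, ← Category.assoc, hs, Category.id_comp]⟩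
  obtain ⟨T', Y', f', g', hc', hns', hras', hT'⟩ := cut_down _ rfl hc hns hras
  exact ⟨T', Y', f', g', hc', hns', hT', hras', las_of_ras hc' hns' hT' hras'⟩

/-- dual version -/
theorem exists_ar_left {X : 𝒞} (A : Defect D.op (Opposite.op X)) (hX : Ind X)
    (hex : ∃ (Y Z : 𝒞) (f : X ⟶ Y) (g : Y ⟶ Z), D.Conf f g ∧ ¬ SM f) :
    ∃ (Y Z : 𝒞) (f : X ⟶ Y) (g : Y ⟶ Z), D.Conf f g ∧ ¬ SM f ∧ Ind Z ∧ RAS g ∧ LAS f := by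
  obtain ⟨Z', Y', g', f', hc, hns, hZ, hras, hlas⟩ := A.exists_ar (ind_op hX) (by
    obtain ⟨Y, Z, f, g, hc, hns⟩ := hex
    refine ⟨Opposite.op Z, Opposite.op Y, g.op, f.op, hc, ?_⟩
    rintro ⟨s, hs⟩
    exact hns ⟨s.unop, congrArg Quiver.Hom.unop hs⟩)
  refine ⟨Y'.unop, Z'.unop, f'.unop, g'.unop, hc, ?_, ind_unop hZ, ?_, ?_⟩
  · rintro ⟨s, hs⟩
    exact hns ⟨s.op, congrArg Quiver.Hom.op hs⟩
  · intro W u hu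
    obtain ⟨v, hv⟩ := hlas (Opposite.op W) u.op (by
      rintro ⟨s, hs⟩
      exact hu ⟨s.unop, congrArg Quiver.Hom.unop hs⟩)
    exact ⟨v.unop, congrArg Quiver.Hom.unop hv⟩
  · intro W u hu
    obtain ⟨v, hv⟩ := hras (Opposite.op W) u.op (by
      rintro ⟨s, hs⟩
      exact hu ⟨s.unop, congrArg Quiver.Hom.unop hs⟩)
    exact ⟨v.unop, congrArg Quiver.Hom.unop hv⟩

end ARMono

/-! ## Part B: basic constructions with representations -/

set_option linter.unusedVariables false
set_option linter.unusedSectionVars false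

namespace ARMono
open QuivRep CategoryTheory

section basic
variable {Λ : Type} [Ring Λ] {V : Type} [Quiver.{1} V]

theorem hom_ext {X Y : Repn Λ V} {f g : RepHom X Y} (h : ∀ i x, f.app i x = g.app i x) :
    f = g := by
  apply RepHom.ext
  funext i
  exact LinearMap.ext (h i)

theorem comm_apply {X Y : Repn Λ V} (f : RepHom X Y) {i j : V} (a : i ⟶ j) (x : X.M i) :
    Y.h a (f.app i x) = f.app j (X.h a x) :=
  LinearMap.congr_fun (f.comm a) x

theorem comp_app {X Y Z : Repn Λ V} (g : RepHom Y Z) (f : RepHom X Y) (i : V) (x : X.M i) :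
    (g.comp f).app i x = g.app i (f.app i x) := rfl

theorem id_app {X : Repn Λ V} (i : V) (x : X.M i) : (RepHom.id X).app i x = x := rfl

theorem zero_app {X Y : Repn Λ V} (i : V) (x : X.M i) : (0 : RepHom X Y).app i x = 0 := rfl

instance instAddHom (X Y : Repn Λ V) : Add (RepHom X Y) :=
  ⟨fun f g => ⟨fun i => f.app i + g.app i, fun a => by
    rw [LinearMap.comp_add, LinearMap.add_comp, f.comm, g.comm]⟩⟩

instance instNegHom (X Y : Repn Λ V) : Neg (RepHom X Y) :=
  ⟨fun f => ⟨fun i => - f.app i, fun a => by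
    rw [LinearMap.comp_neg, LinearMap.neg_comp, f.comm]⟩⟩

theorem add_app {X Y : Repn Λ V} (f g : RepHom X Y) (i : V) (x : X.M i) :
    (f + g).app i x = f.app i x + g.app i x := rfl

theorem neg_app {X Y : Repn Λ V} (f : RepHom X Y) (i : V) (x : X.M i) :
    (-f).app i x = -f.app i x := rfl

instance instACGHom (X Y : Repn Λ V) : AddCommGroup (RepHom X Y) :=
  { AddGroup.ofLeftAxioms
      (fun a b c : RepHom X Y => hom_ext fun i x => by simp only [add_app, add_assoc])
      (fun a => hom_ext fun i x => by simp only [add_app, zero_app, zero_add])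
      (fun a => hom_ext fun i x => by
        simp only [add_app, neg_app, zero_app, neg_add_cancel]) with
    add_comm := fun a b => hom_ext fun i x => by simp only [add_app, add_comm] }

theorem sub_app {X Y : Repn Λ V} (f g : RepHom X Y) (i : V) (x : X.M i) :
    (f - g).app i x = f.app i x - g.app i x := by
  rw [sub_eq_add_neg, add_app, neg_app, sub_eq_add_neg]

/-- subrepresentation -/
def subR (X : Repn Λ V) (S : ∀ i, Submodule Λ (X.M i))
    (hS : ∀ {i j : V} (a : i ⟶ j), ∀ x ∈ S i, X.h a x ∈ S j) : Repn Λ V where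
  M i := S i
  h a := (X.h a).restrict (hS a)

def subR.incl (X : Repn Λ V) (S : ∀ i, Submodule Λ (X.M i))
    (hS : ∀ {i j : V} (a : i ⟶ j), ∀ x ∈ S i, X.h a x ∈ S j) : RepHom (subR X S hS) X where
  app i := (S i).subtype
  comm a := rfl

theorem subR.incl_inj (X : Repn Λ V) (S : ∀ i, Submodule Λ (X.M i))
    (hS : ∀ {i j : V} (a : i ⟶ j), ∀ x ∈ S i, X.h a x ∈ S j) (i : V) :
    Function.Injective ((subR.incl X S hS).app i) := Subtype.val_injective

theorem subR.incl_mem (X : Repn Λ V) (S : ∀ i, Submodule Λ (X.M i))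
    (hS : ∀ {i j : V} (a : i ⟶ j), ∀ x ∈ S i, X.h a x ∈ S j) (i : V) (x) :
    (subR.incl X S hS).app i x ∈ S i := Subtype.property _

theorem subR.incl_surj (X : Repn Λ V) (S : ∀ i, Submodule Λ (X.M i))
    (hS : ∀ {i j : V} (a : i ⟶ j), ∀ x ∈ S i, X.h a x ∈ S j) (i : V) (x : X.M i) (hx : x ∈ S i) :
    ∃ y, (subR.incl X S hS).app i y = x := ⟨⟨x, hx⟩, rfl⟩

theorem subR.lift {W X : Repn Λ V} (S : ∀ i, Submodule Λ (X.M i))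
    (hS : ∀ {i j : V} (a : i ⟶ j), ∀ x ∈ S i, X.h a x ∈ S j) (u : RepHom W X)
    (hu : ∀ i x, u.app i x ∈ S i) : ∃ v : RepHom W (subR X S hS), (subR.incl X S hS).comp v = u :=
  ⟨⟨fun i => (u.app i).codRestrict (S i) (hu i), fun a => by
    apply LinearMap.ext
    intro x
    apply Subtype.ext
    exact comm_apply u a x⟩, rfl⟩

/-- quotient representation -/
def quotR (X : Repn Λ V) (S : ∀ i, Submodule Λ (X.M i))
    (hS : ∀ {i j : V} (a : i ⟶ j), ∀ x ∈ S i, X.h a x ∈ S j) : Repn Λ V where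
  M i := X.M i ⧸ S i
  h {i j} a := (S i).mapQ (S j) (X.h a) (hS a)

def quotR.mk (X : Repn Λ V) (S : ∀ i, Submodule Λ (X.M i))
    (hS : ∀ {i j : V} (a : i ⟶ j), ∀ x ∈ S i, X.h a x ∈ S j) : RepHom X (quotR X S hS) where
  app i := (S i).mkQ
  comm a := rfl

theorem quotR.mk_surj (X : Repn Λ V) (S : ∀ i, Submodule Λ (X.M i))
    (hS : ∀ {i j : V} (a : i ⟶ j), ∀ x ∈ S i, X.h a x ∈ S j) (i : V) :
    Function.Surjective ((quotR.mk X S hS).app i) := Submodule.mkQ_surjective _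

theorem quotR.mk_zero (X : Repn Λ V) (S : ∀ i, Submodule Λ (X.M i))
    (hS : ∀ {i j : V} (a : i ⟶ j), ∀ x ∈ S i, X.h a x ∈ S j) (i : V) (x) :
    (quotR.mk X S hS).app i x = 0 ↔ x ∈ S i := Submodule.Quotient.mk_eq_zero _

theorem quotR.desc {W X : Repn Λ V} (S : ∀ i, Submodule Λ (X.M i))
    (hS : ∀ {i j : V} (a : i ⟶ j), ∀ x ∈ S i, X.h a x ∈ S j) (u : RepHom X W)
    (hu : ∀ i, ∀ x ∈ S i, u.app i x = 0) :
    ∃ v : RepHom (quotR X S hS) W, v.comp (quotR.mk X S hS) = u :=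
  ⟨⟨fun i => (S i).liftQ (u.app i) (fun x hx => hu i x hx), fun a => by
    apply Submodule.linearMap_qext
    apply LinearMap.ext
    intro x
    exact comm_apply u a x⟩, hom_ext fun i x => rfl⟩

/-- product of two representations -/
def prodR (X Y : Repn Λ V) : Repn Λ V where
  M i := X.M i × Y.M i
  h a := (X.h a).prodMap (Y.h a)

def prodR.fst (X Y : Repn Λ V) : RepHom (prodR X Y) X where
  app i := LinearMap.fst Λ _ _
  comm a := rfl

def prodR.snd (X Y : Repn Λ V) : RepHom (prodR X Y) Y where
  app i := LinearMap.snd Λ _ _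
  comm a := rfl

def prodR.inl (X Y : Repn Λ V) : RepHom X (prodR X Y) where
  app i := LinearMap.inl Λ _ _
  comm a := by
    apply LinearMap.ext
    intro x
    exact Prod.ext rfl (map_zero (Y.h a))

def prodR.inr (X Y : Repn Λ V) : RepHom Y (prodR X Y) where
  app i := LinearMap.inr Λ _ _
  comm a := by
    apply LinearMap.ext
    intro x
    exact Prod.ext (map_zero (X.h a)) rfl

theorem prodR.ext {X Y : Repn Λ V} {i : V} {p q : (prodR X Y).M i}
    (h1 : (prodR.fst X Y).app i p = (prodR.fst X Y).app i q)
    (h2 : (prodR.snd X Y).app i p = (prodR.snd X Y).app i q) : p = q := Prod.ext h1 h2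

def prodR.lift {W X Y : Repn Λ V} (f : RepHom W X) (g : RepHom W Y) : RepHom W (prodR X Y) :=
  (prodR.inl X Y).comp f + (prodR.inr X Y).comp g

theorem prodR.fst_lift {W X Y : Repn Λ V} (f : RepHom W X) (g : RepHom W Y) :
    (prodR.fst X Y).comp (prodR.lift f g) = f := hom_ext fun i x => add_zero (f.app i x)

theorem prodR.snd_lift {W X Y : Repn Λ V} (f : RepHom W X) (g : RepHom W Y) :
    (prodR.snd X Y).comp (prodR.lift f g) = g := hom_ext fun i x => zero_add (g.app i x)

theorem prodR.fst_inl {X Y : Repn Λ V} (i : V) (x : X.M i) :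
    (prodR.fst X Y).app i ((prodR.inl X Y).app i x) = x := rfl
theorem prodR.snd_inl {X Y : Repn Λ V} (i : V) (x : X.M i) :
    (prodR.snd X Y).app i ((prodR.inl X Y).app i x) = 0 := rfl
theorem prodR.fst_inr {X Y : Repn Λ V} (i : V) (x : Y.M i) :
    (prodR.fst X Y).app i ((prodR.inr X Y).app i x) = 0 := rfl
theorem prodR.snd_inr {X Y : Repn Λ V} (i : V) (x : Y.M i) :
    (prodR.snd X Y).app i ((prodR.inr X Y).app i x) = x := rfl
theorem prodR.eta {X Y : Repn Λ V} (i : V) (p : (prodR X Y).M i) :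
    (prodR.inl X Y).app i ((prodR.fst X Y).app i p) + (prodR.inr X Y).app i ((prodR.snd X Y).app i p)
      = p := by
  apply prodR.ext
  · rw [map_add, fst_inl, fst_inr, add_zero]
  · rw [map_add, snd_inl, snd_inr, zero_add]

theorem fg_of_inj [IsNoetherianRing Λ] {X Y : Repn Λ V} (u : RepHom X Y)
    (hu : ∀ i, Function.Injective (u.app i)) (hY : Y.FG) : X.FG := fun i => by
  have := hY i
  exact Module.Finite.of_injective (u.app i) (hu i)

theorem fg_of_surj {X Y : Repn Λ V} (u : RepHom X Y)
    (hu : ∀ i, Function.Surjective (u.app i)) (hX : X.FG) : Y.FG := fun i => by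
  have := hX i
  exact Module.Finite.of_surjective (u.app i) (hu i)

theorem fg_prod {X Y : Repn Λ V} (hX : X.FG) (hY : Y.FG) : (prodR X Y).FG := fun i => by
  have := hX i
  have := hY i
  exact inferInstanceAs (Module.Finite Λ (X.M i × Y.M i))

end basic

section mono
variable {Λ : Type} [Ring Λ] {V : Type} [Quiver.{1} V] [Fintype V] [∀ i j : V, Fintype (i ⟶ j)]

theorem inMap_apply (X : Repn Λ V) (i : V) (x : (a : Σ j : V, j ⟶ i) → X.M a.1) :
    X.inMap i x = ∑ a : (Σ j : V, j ⟶ i), X.h a.2 (x a) := by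
  simp [Repn.inMap]

theorem inMap_nat {X Y : Repn Λ V} (u : RepHom X Y) (i : V) (x : (a : Σ j : V, j ⟶ i) → X.M a.1) :
    u.app i (X.inMap i x) = Y.inMap i (fun a => u.app a.1 (x a)) := by
  rw [inMap_apply, inMap_apply, map_sum]
  exact Finset.sum_congr rfl fun a _ => (comm_apply u a.2 (x a)).symm

theorem mono_of_inj {X Y : Repn Λ V} (u : RepHom X Y)
    (hu : ∀ i, Function.Injective (u.app i)) (hY : Y.IsMonoRep) : X.IsMonoRep := by
  intro i x y hxy
  have := congrArg (u.app i) hxy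
  rw [inMap_nat, inMap_nat] at this
  have := hY i this
  funext a
  exact hu _ (congrFun this a)

theorem mono_prod {X Y : Repn Λ V} (hX : X.IsMonoRep) (hY : Y.IsMonoRep) :
    (prodR X Y).IsMonoRep := by
  intro i x y hxy
  have h1 := congrArg ((prodR.fst X Y).app i) hxy
  have h2 := congrArg ((prodR.snd X Y).app i) hxy
  rw [inMap_nat, inMap_nat] at h1 h2
  funext a
  exact prodR.ext (congrFun (hX i h1) a) (congrFun (hY i h2) a)

theorem mono_ext {X Y Z : Repn Λ V} {f : RepHom X Y} {g : RepHom Y Z} (h : IsSES f g)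
    (hX : X.IsMonoRep) (hZ : Z.IsMonoRep) : Y.IsMonoRep := by
  intro i
  rw [← LinearMap.ker_eq_bot, eq_bot_iff]
  intro y hy
  rw [LinearMap.mem_ker] at hy
  have h1 : Z.inMap i (fun a => g.app a.1 (y a)) = Z.inMap i 0 := by
    rw [← inMap_nat, hy, map_zero, map_zero]
  have h2 := hZ i h1
  have h3 : ∀ a : (Σ j : V, j ⟶ i), ∃ x, f.app a.1 x = y a := by
    intro a
    have : y a ∈ LinearMap.ker (g.app a.1) := congrFun h2 a
    rw [← h.2.2] at this
    exact this
  choose x hx using h3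
  have h4 : y = fun a => f.app a.1 (x a) := by
    funext a
    exact (hx a).symm
  have h5 : X.inMap i x = X.inMap i 0 := by
    apply h.1 i
    rw [inMap_nat, ← h4, hy, map_zero, map_zero]
  have h6 := hX i h5
  rw [h4, h6]
  simp only [Pi.zero_apply, map_zero]
  rfl

/-- the monomorphism category -/
abbrev MObj (Λ : Type) [Ring Λ] (V : Type) [Quiver.{1} V] [Fintype V] [∀ i j : V, Fintype (i ⟶ j)] :=
  {X : Repn Λ V // X.InMono}

instance : Category.{0} (MObj Λ V) where
  Hom X Y := RepHom X.1 Y.1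
  id X := RepHom.id X.1
  comp f g := RepHom.comp g f

theorem mcomp {X Y Z : MObj Λ V} (f : X ⟶ Y) (g : Y ⟶ Z) : f ≫ g = RepHom.comp g f := rfl
theorem mid (X : MObj Λ V) : 𝟙 X = RepHom.id X.1 := rfl

instance : Preadditive (MObj Λ V) where
  homGroup X Y := inferInstanceAs (AddCommGroup (RepHom X.1 Y.1))
  add_comp X Y Z f f' g := hom_ext fun i x => map_add (g.app i) _ _
  comp_add X Y Z f g g' := hom_ext fun i x => rfl

theorem mhom_ext {X Y : MObj Λ V} {f g : X ⟶ Y} (h : ∀ i x, RepHom.app f i x = RepHom.app g i x) :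
    f = g := hom_ext h

theorem mzero {X Y : MObj Λ V} : (0 : X ⟶ Y) = (0 : RepHom X.1 Y.1) := rfl

theorem ses_ker {X Y Z : Repn Λ V} {f : RepHom X Y} {g : RepHom Y Z} (h : IsSES f g)
    {W : Repn Λ V} (u : RepHom W Y) (hu : ∀ i x, g.app i (u.app i x) = 0) :
    ∃ v : RepHom W X, f.comp v = u := by
  have h1 : ∀ i x, ∃ y, f.app i y = u.app i x := by
    intro i x
    have : u.app i x ∈ LinearMap.ker (g.app i) := hu i x
    rw [← h.2.2] at this
    exact this
  choose v hv using h1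
  refine ⟨⟨fun i => ⟨⟨v i, ?_⟩, ?_⟩, ?_⟩, hom_ext hv⟩
  · intro x y
    apply h.1 i
    rw [map_add, hv, hv, hv, map_add]
  · intro c x
    apply h.1 i
    simp only [map_smul, hv, RingHom.id_apply]
  · intro i j a
    apply LinearMap.ext
    intro x
    apply h.1 j
    change f.app j (X.h a (v i x)) = f.app j (v j (W.h a x))
    rw [hv, ← comm_apply, hv, comm_apply]

theorem ses_coker {X Y Z : Repn Λ V} {f : RepHom X Y} {g : RepHom Y Z} (h : IsSES f g)
    {W : Repn Λ V} (u : RepHom Y W) (hu : ∀ i x, u.app i (f.app i x) = 0) :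
    ∃ v : RepHom Z W, v.comp g = u := by
  have h1 : ∀ i x y, g.app i x = g.app i y → u.app i x = u.app i y := by
    intro i x y hxy
    have : x - y ∈ LinearMap.ker (g.app i) := by rw [LinearMap.mem_ker, map_sub, hxy, sub_self]
    rw [← h.2.2] at this
    obtain ⟨z, hz⟩ := this
    have h2 := hu i z
    rw [hz, map_sub, sub_eq_zero] at h2
    exact h2
  choose s hs using h.2.1
  have hsu : ∀ i x, u.app i (s i (g.app i x)) = u.app i x := fun i x => h1 i _ _ (hs i _)
  refine ⟨⟨fun i => ⟨⟨fun z => u.app i (s i z), ?_⟩, ?_⟩, ?_⟩, hom_ext hsu⟩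
  · intro x y
    rw [← map_add]
    apply h1
    simp only [map_add, hs]
  · intro c x
    rw [RingHom.id_apply, ← map_smul]
    apply h1
    simp only [map_smul, hs]
  · intro i j a
    apply LinearMap.ext
    intro z
    change W.h a (u.app i (s i z)) = u.app j (s j (Z.h a z))
    rw [comm_apply]
    apply h1
    rw [hs, ← comm_apply, hs]

theorem ses_pb {X Y Z W : Repn Λ V} {f : RepHom X Y} {g : RepHom Y Z} (h : IsSES f g)
    (w : RepHom W Z) : ∃ (B : Repn Λ V) (i : RepHom X B) (p : RepHom B W) (q : RepHom B Y)
    (b : RepHom B (prodR Y W)),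
    (∀ i, Function.Injective (b.app i)) ∧
    IsSES i p ∧ q.comp i = f ∧ g.comp q = w.comp p ∧
    ∀ {U : Repn Λ V} (s : RepHom U Y) (c : RepHom U W), g.comp s = w.comp c →
      ∃ b : RepHom U B, q.comp b = s ∧ p.comp b = c := by
  let S : ∀ i, Submodule Λ ((prodR Y W).M i) := fun i =>
    LinearMap.ker ((g.comp (prodR.fst Y W) - w.comp (prodR.snd Y W)).app i)
  have hmem : ∀ i x, x ∈ S i ↔ g.app i ((prodR.fst Y W).app i x) =
      w.app i ((prodR.snd Y W).app i x) := by
    intro i x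
    rw [LinearMap.mem_ker, sub_app, sub_eq_zero]
    rfl
  have hS : ∀ {i j : V} (a : i ⟶ j), ∀ x ∈ S i, (prodR Y W).h a x ∈ S j := by
    intro i j a x hx
    rw [hmem] at hx ⊢
    rw [← comm_apply, ← comm_apply, ← comm_apply, hx, ← comm_apply]
  have key : ∀ {U : Repn Λ V} (s : RepHom U Y) (c : RepHom U W), g.comp s = w.comp c →
      ∃ b : RepHom U (subR _ S hS), ((prodR.fst Y W).comp (subR.incl _ S hS)).comp b = s ∧
        ((prodR.snd Y W).comp (subR.incl _ S hS)).comp b = c := by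
    intro U s c hsc
    obtain ⟨b, hb⟩ := subR.lift S hS (prodR.lift s c) (by
      intro i x
      rw [hmem, ← comp_app (prodR.fst Y W), ← comp_app (prodR.snd Y W), prodR.fst_lift,
        prodR.snd_lift]
      exact congrArg (fun t => RepHom.app t i x) hsc)
    refine ⟨b, ?_, ?_⟩
    · refine Eq.trans (congrArg (fun t => (prodR.fst Y W).comp t) hb) ?_
      exact prodR.fst_lift s c
    · refine Eq.trans (congrArg (fun t => (prodR.snd Y W).comp t) hb) ?_
      exact prodR.snd_lift s c
  obtain ⟨i, hi1, hi2⟩ := key f 0 (hom_ext fun i x => by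
    rw [comp_app, comp_app, zero_app, map_zero]
    have : f.app i x ∈ LinearMap.ker (g.app i) := by
      rw [← h.2.2]
      exact ⟨x, rfl⟩
    exact this)
  refine ⟨subR _ S hS, i, _, _, subR.incl _ S hS, subR.incl_inj _ S hS, ⟨?_, ?_, ?_⟩, hi1, ?_, key⟩
  · intro k x y hxy
    apply h.1 k
    rw [← hi1, comp_app, comp_app, hxy]
    rfl
  · intro k x
    obtain ⟨y, hy⟩ := h.2.1 k (w.app k x)
    obtain ⟨z, hz⟩ := subR.incl_surj _ S hS k
      ((prodR.inl Y W).app k y + (prodR.inr Y W).app k x) (by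
        rw [hmem]
        simp only [map_add, prodR.fst_inl, prodR.fst_inr, prodR.snd_inl, prodR.snd_inr, hy,
          add_zero, zero_add])
    refine ⟨z, ?_⟩
    rw [comp_app, hz]
    simp only [map_add, prodR.snd_inl, prodR.snd_inr, zero_add]
  · intro k
    apply le_antisymm
    · rintro _ ⟨x, rfl⟩
      rw [LinearMap.mem_ker, ← comp_app, hi2]
      rfl
    · intro z hz
      have h1 := (hmem k _).1 (subR.incl_mem _ S hS k z)
      rw [LinearMap.mem_ker, comp_app] at hz
      rw [hz, map_zero] at h1
      have h2 : (prodR.fst Y W).app k ((subR.incl _ S hS).app k z) ∈ LinearMap.ker (g.app k) := h1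
      rw [← h.2.2] at h2
      obtain ⟨x, hx⟩ := h2
      refine ⟨x, ?_⟩
      apply subR.incl_inj _ S hS
      apply prodR.ext
      · rw [← hx]
        conv_rhs => rw [← hi1]
        rfl
      · rw [hz, ← comp_app, ← comp_app, hi2]
        rfl
  · apply hom_ext
    intro k x
    exact (hmem k _).1 (subR.incl_mem _ S hS k x)

theorem ses_po {X Y Z W : Repn Λ V} {f : RepHom X Y} {g : RepHom Y Z} (h : IsSES f g)
    (w : RepHom X W) : ∃ (B : Repn Λ V) (i : RepHom W B) (p : RepHom B Z) (q : RepHom Y B)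
    (b : RepHom (prodR Y W) B),
    (∀ i, Function.Surjective (b.app i)) ∧
    IsSES i p ∧ p.comp q = g ∧ q.comp f = i.comp w ∧
    ∀ {U : Repn Λ V} (s : RepHom Y U) (c : RepHom W U), s.comp f = c.comp w →
      ∃ b : RepHom B U, b.comp q = s ∧ b.comp i = c := by
  let δ : RepHom X (prodR Y W) := (prodR.inl Y W).comp f - (prodR.inr Y W).comp w
  have hδ : ∀ i x, δ.app i x = (prodR.inl Y W).app i (f.app i x) -
      (prodR.inr Y W).app i (w.app i x) := fun i x => sub_app _ _ _ _
  let S : ∀ i, Submodule Λ ((prodR Y W).M i) := fun i => LinearMap.range (δ.app i)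
  have hS : ∀ {i j : V} (a : i ⟶ j), ∀ x ∈ S i, (prodR Y W).h a x ∈ S j := by
    rintro i j a _ ⟨x, rfl⟩
    exact ⟨X.h a x, (comm_apply δ a x).symm⟩
  have key : ∀ {U : Repn Λ V} (s : RepHom Y U) (c : RepHom W U), s.comp f = c.comp w →
      ∃ b : RepHom (quotR _ S hS) U, b.comp ((quotR.mk _ S hS).comp (prodR.inl Y W)) = s ∧
        b.comp ((quotR.mk _ S hS).comp (prodR.inr Y W)) = c := by
    intro U s c hsc
    have hsc' : ∀ i x, s.app i (f.app i x) = c.app i (w.app i x) := fun i x =>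
      congrArg (fun t => RepHom.app t i x) hsc
    obtain ⟨b, hb⟩ := quotR.desc S hS (s.comp (prodR.fst Y W) + c.comp (prodR.snd Y W)) (by
      rintro i _ ⟨x, rfl⟩
      rw [add_app, comp_app, comp_app, hδ]
      simp only [map_sub, prodR.fst_inl, prodR.fst_inr, prodR.snd_inl, prodR.snd_inr, hsc']
      simp)
    have hb' : ∀ i x, b.app i ((quotR.mk _ S hS).app i x) = s.app i ((prodR.fst Y W).app i x) +
      c.app i ((prodR.snd Y W).app i x) := fun i x => congrArg (fun t => RepHom.app t i x) hb
    refine ⟨b, hom_ext fun i x => ?_, hom_ext fun i x => ?_⟩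
    · rw [comp_app, comp_app, hb', prodR.fst_inl, prodR.snd_inl, map_zero, add_zero]
    · rw [comp_app, comp_app, hb', prodR.fst_inr, prodR.snd_inr, map_zero, zero_add]
  have hgf : ∀ i x, g.app i (f.app i x) = 0 := by
    intro i x
    have : f.app i x ∈ LinearMap.ker (g.app i) := by
      rw [← h.2.2]
      exact ⟨x, rfl⟩
    exact this
  obtain ⟨p, hp1, hp2⟩ := key g 0 (hom_ext fun i x => by
    rw [comp_app, comp_app, zero_app, hgf])
  have hp1' : ∀ i x, p.app i ((quotR.mk _ S hS).app i ((prodR.inl Y W).app i x)) = g.app i x :=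
    fun i x => congrArg (fun t => RepHom.app t i x) hp1
  have hp2' : ∀ i x, p.app i ((quotR.mk _ S hS).app i ((prodR.inr Y W).app i x)) = 0 :=
    fun i x => congrArg (fun t => RepHom.app t i x) hp2
  refine ⟨quotR _ S hS, _, p, _, quotR.mk _ S hS, quotR.mk_surj _ S hS, ⟨?_, ?_, ?_⟩,
    hp1, ?_, key⟩
  · intro k
    rw [← LinearMap.ker_eq_bot, eq_bot_iff]
    intro z hz
    rw [LinearMap.mem_ker, comp_app, quotR.mk_zero] at hz
    obtain ⟨x, hx⟩ := hz
    rw [hδ] at hx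
    have h1 := congrArg ((prodR.fst Y W).app k) hx
    have h2 := congrArg ((prodR.snd Y W).app k) hx
    simp only [map_sub, prodR.fst_inl, prodR.fst_inr, prodR.snd_inl, prodR.snd_inr, sub_zero,
      zero_sub] at h1 h2
    have h3 : x = 0 := h.1 k (by rw [h1, map_zero])
    rw [h3, map_zero, neg_zero] at h2
    exact h2.symm
  · intro k z
    obtain ⟨y, hy⟩ := h.2.1 k z
    exact ⟨_, (hp1' k y).trans hy⟩
  · intro k
    apply le_antisymm
    · rintro _ ⟨x, rfl⟩
      exact hp2' k x
    · intro z hz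
      obtain ⟨t, rfl⟩ := quotR.mk_surj _ S hS k z
      rw [LinearMap.mem_ker, ← prodR.eta k t, map_add, map_add, hp1', hp2', add_zero] at hz
      have h2 : (prodR.fst Y W).app k t ∈ LinearMap.ker (g.app k) := hz
      rw [← h.2.2] at h2
      obtain ⟨x, hx⟩ := h2
      refine ⟨w.app k x + (prodR.snd Y W).app k t, ?_⟩
      rw [comp_app, ← sub_eq_zero, ← map_sub, quotR.mk_zero]
      refine ⟨-x, ?_⟩
      rw [hδ]
      apply prodR.ext
      · simp only [map_sub, map_neg, map_add, prodR.fst_inl, prodR.fst_inr, hx]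
        simp
      · simp only [map_sub, map_neg, map_add, prodR.snd_inl, prodR.snd_inr, hx]
        simp
  · apply hom_ext
    intro k x
    rw [comp_app, comp_app, comp_app, comp_app, ← sub_eq_zero, ← map_sub, quotR.mk_zero]
    exact ⟨x, hδ k x⟩

end mono

end ARMono

/-! ## Part C: the exact structure on the monomorphism category -/

set_option linter.unusedVariables false
set_option linter.unusedSectionVars false
set_option linter.style.haveILetI false

namespace ARMono
open QuivRep CategoryTheory

section rmod
variable {R : Type} [CommRing R] {Λ : Type} [Ring Λ] [Algebra R Λ] {V : Type} [Quiver.{1} V]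

instance (priority := low) rMod (X : Repn Λ V) (i : V) : Module R (X.M i) :=
  Module.compHom (X.M i) (algebraMap R Λ)

theorem rsmul_def (X : Repn Λ V) (i : V) (r : R) (x : X.M i) : r • x = algebraMap R Λ r • x := rfl

instance (priority := low) rTower (X : Repn Λ V) (i : V) : IsScalarTower R Λ (X.M i) :=
  ⟨fun r l x => by rw [Algebra.smul_def, mul_smul, rsmul_def]⟩

theorem rsmul_comm (X : Repn Λ V) (i : V) (r : R) (l : Λ) (x : X.M i) : r • l • x = l • r • x := by
  rw [rsmul_def, rsmul_def, smul_smul, smul_smul, Algebra.commutes]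

theorem map_rsmul {X Y : Repn Λ V} {i j : V} (f : X.M i →ₗ[Λ] Y.M j) (r : R) (x : X.M i) :
    f (r • x) = r • f x := map_smul f _ _

theorem rfinite [Module.Finite R Λ] {X : Repn Λ V} (hX : X.FG) (i : V) : Module.Finite R (X.M i) := by
  have := hX i
  exact Module.Finite.trans Λ (X.M i)

def rsmulHom {X Y : Repn Λ V} (r : R) (f : RepHom X Y) : RepHom X Y where
  app i := ⟨⟨fun x => r • f.app i x, fun x y => by rw [map_add, smul_add]⟩, fun c x => by
    simp only [map_smul, RingHom.id_apply]
    rw [rsmul_comm]⟩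
  comm a := by
    apply LinearMap.ext
    intro x
    exact (map_rsmul (Y.h a) r _).trans (congrArg (fun t => r • t) (comm_apply f a x))

abbrev rModHom (X Y : Repn Λ V) : Module R (RepHom X Y) where
  smul r f := rsmulHom r f
  one_smul f := hom_ext fun i x => one_smul R _
  mul_smul r s f := hom_ext fun i x => mul_smul r s _
  smul_zero r := hom_ext fun i x => smul_zero r
  smul_add r f g := hom_ext fun i x => smul_add r _ _
  add_smul r s f := hom_ext fun i x => add_smul r s _
  zero_smul f := hom_ext fun i x => zero_smul R _

end rmod

section fin
variable {Λ : Type} [Ring Λ] {V : Type} [Quiver.{1} V] [Fintype V] [∀ i j : V, Fintype (i ⟶ j)]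

theorem iso_of_bij {X Y : MObj Λ V} (f : X ⟶ Y)
    (hf : ∀ i, Function.Bijective (RepHom.app f i)) : IsIso f := by
  let e : ∀ i, X.1.M i ≃ₗ[Λ] Y.1.M i := fun i => LinearEquiv.ofBijective (RepHom.app f i) (hf i)
  have he : ∀ i x, e i x = RepHom.app f i x := fun i x => rfl
  have he' : ∀ i y, RepHom.app f i ((e i).symm y) = y := fun i y => (e i).apply_symm_apply y
  let g : RepHom Y.1 X.1 := ⟨fun i => (e i).symm.toLinearMap, fun {i j} a => by
    apply LinearMap.ext
    intro y
    change X.1.h a ((e i).symm y) = (e j).symm (Y.1.h a y)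
    apply (hf j).1
    rw [he', ← comm_apply (X := X.1) (Y := Y.1), he']⟩
  refine ⟨⟨g, mhom_ext fun i x => ?_, mhom_ext fun i y => he' i y⟩⟩
  exact (e i).symm_apply_apply x

theorem bij_of_iso {X Y : MObj Λ V} (f : X ⟶ Y) [IsIso f] (i : V) :
    Function.Bijective (RepHom.app f i) := by
  refine ⟨fun x y hxy => ?_, fun y => ⟨RepHom.app (inv f) i y, ?_⟩⟩
  · have h : ∀ x, RepHom.app (inv f) i (RepHom.app f i x) = x := fun x =>
      congrArg (fun t : X ⟶ X => RepHom.app t i x) (IsIso.hom_inv_id f)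
    rw [← h x, hxy, h]
  · exact congrArg (fun t : Y ⟶ Y => RepHom.app t i y) (IsIso.inv_hom_id f)

theorem powr_app {X : MObj Λ V} (v : X ⟶ X) (n : ℕ) (i : V) :
    RepHom.app (powr v n) i = (RepHom.app v i : Module.End Λ (X.1.M i)) ^ n := by
  induction n with
  | zero => rfl
  | succ n ih =>
    rw [pow_succ', ← ih]
    rfl

theorem m_fit [IsArtinianRing Λ] (X : MObj Λ V) (v : X ⟶ X) :
    IsIso v ∨ ∃ (n : ℕ) (e : X ⟶ X), e ≫ e = e ∧ e ≠ 𝟙 X ∧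
    e ≫ powr v n = powr v n ∧ powr v n ≫ e = powr v n := by
  have hev : ∀ i, ∀ᶠ n in Filter.atTop,
      IsCompl (LinearMap.ker ((RepHom.app v i : Module.End Λ (X.1.M i)) ^ n))
        (LinearMap.range ((RepHom.app v i : Module.End Λ (X.1.M i)) ^ n)) := by
    intro i
    have := X.2.1 i
    exact LinearMap.eventually_isCompl_ker_pow_range_pow _
  obtain ⟨n, hn, hn1⟩ := ((Filter.eventually_all.2 hev).and (Filter.eventually_ge_atTop 1)).exists
  obtain ⟨m, rfl⟩ : ∃ m, n = m + 1 := ⟨n - 1, by omega⟩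
  let w : RepHom X.1 X.1 := powr v (m + 1)
  have hw : ∀ i, IsCompl (LinearMap.ker (w.app i)) (LinearMap.range (w.app i)) := by
    intro i
    have := powr_app v (m + 1) i
    change IsCompl (LinearMap.ker (RepHom.app (powr v (m + 1)) i))
      (LinearMap.range (RepHom.app (powr v (m + 1)) i))
    rw [this]
    exact hn i
  have uniq : ∀ i x y, w.app i (w.app i x) = w.app i (w.app i y) → w.app i x = w.app i y := by
    intro i x y hxy
    have : w.app i x - w.app i y ∈ LinearMap.ker (w.app i) ⊓ LinearMap.range (w.app i) :=
      ⟨LinearMap.mem_ker.2 (by rw [map_sub, hxy, sub_self]), ⟨x - y, map_sub _ _ _⟩⟩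
    rw [(hw i).inf_eq_bot, Submodule.mem_bot, sub_eq_zero] at this
    exact this
  have exi : ∀ i x, ∃ y, w.app i (w.app i y) = w.app i x := by
    intro i x
    have : x ∈ LinearMap.ker (w.app i) ⊔ LinearMap.range (w.app i) := by
      rw [(hw i).sup_eq_top]
      trivial
    obtain ⟨a, ha, b, ⟨y, rfl⟩, rfl⟩ := Submodule.mem_sup.1 this
    refine ⟨y, ?_⟩
    rw [LinearMap.mem_ker] at ha
    rw [map_add, ha, zero_add]
  choose s hs using exi
  let e : RepHom X.1 X.1 :=
    ⟨fun i => ⟨⟨fun x => w.app i (s i x), fun x y => by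
      rw [← map_add]
      apply uniq
      simp only [map_add, hs]⟩, fun c x => by
      simp only [RingHom.id_apply]
      rw [← map_smul]
      apply uniq
      simp only [map_smul, hs]⟩, fun {i j} a => by
      apply LinearMap.ext
      intro x
      change X.1.h a (w.app i (s i x)) = w.app j (s j (X.1.h a x))
      rw [comm_apply]
      apply uniq
      rw [hs, ← comm_apply, ← comm_apply, hs, comm_apply]⟩
  have he : ∀ i x, e.app i x = w.app i (s i x) := fun i x => rfl
  have hew : ∀ i x, e.app i (w.app i x) = w.app i x := by
    intro i x
    rw [he]
    apply uniq
    rw [hs]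
  have hwe : ∀ i x, w.app i (e.app i x) = w.app i x := hs
  by_cases h1 : e = RepHom.id X.1
  · left
    have h1' : ∀ i x, e.app i x = x := fun i x => by rw [h1, id_app]
    have hwi : ∀ i, Function.Injective (w.app i) := by
      intro i x y hxy
      rw [← h1' i x, ← h1' i y, he, he]
      apply uniq
      rw [hs, hs, hxy]
    have hws : ∀ i, Function.Surjective (w.app i) := fun i x => ⟨s i x, h1' i x⟩
    apply iso_of_bij
    intro i
    constructor
    · intro x y hxy
      apply hwi i
      have : w = RepHom.comp (powr v m) v := powr_succ' v m
      rw [this, comp_app, comp_app]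
      exact congrArg _ hxy
    · intro x
      obtain ⟨y, hy⟩ := hws i x
      exact ⟨RepHom.app (powr v m) i y, hy⟩
  · right
    refine ⟨m + 1, e, mhom_ext fun i x => hew i _, h1, mhom_ext hwe, mhom_ext hew⟩

noncomputable def mμ (X : MObj Λ V) : ℕ := ∑ i, (Module.length Λ (X.1.M i)).toNat

theorem m_idem [IsArtinianRing Λ] (X : MObj Λ V) (e : X ⟶ X) (he : e ≫ e = e) (hne : e ≠ 𝟙 X) :
    ∃ (Y : MObj Λ V) (r : X ⟶ Y) (s : Y ⟶ X), s ≫ r = 𝟙 Y ∧ r ≫ s = e ∧ mμ Y < mμ X := by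
  let e' : RepHom X.1 X.1 := e
  have hee : ∀ i x, e'.app i (e'.app i x) = e'.app i x := fun i x =>
    congrArg (fun t : X ⟶ X => RepHom.app t i x) he
  let S : ∀ i, Submodule Λ (X.1.M i) := fun i => LinearMap.range (e'.app i)
  have hS : ∀ {i j : V} (a : i ⟶ j), ∀ x ∈ S i, X.1.h a x ∈ S j := by
    rintro i j a _ ⟨x, rfl⟩
    exact ⟨X.1.h a x, (comm_apply e' a x).symm⟩
  obtain ⟨r, hr⟩ := subR.lift S hS e' (fun i x => ⟨x, rfl⟩)
  have hr' : ∀ i x, (subR.incl _ S hS).app i (r.app i x) = e'.app i x := fun i x =>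
    congrArg (fun t => RepHom.app t i x) hr
  refine ⟨⟨subR X.1 S hS, fg_of_inj _ (subR.incl_inj _ S hS) X.2.1,
    mono_of_inj _ (subR.incl_inj _ S hS) X.2.2⟩, r, subR.incl _ S hS, ?_, hr, ?_⟩
  · apply mhom_ext
    intro i x
    apply subR.incl_inj _ S hS
    refine (hr' i _).trans ?_
    obtain ⟨y, hy⟩ := subR.incl_mem _ S hS i x
    rw [← hy, hee, hy]
    rfl
  · have hex : ∃ i, S i ≠ ⊤ := by
      by_contra hcon
      push Not at hcon
      apply hne
      apply mhom_ext
      intro i x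
      have : x ∈ S i := by rw [hcon i]; trivial
      obtain ⟨y, rfl⟩ := this
      exact hee i y
    have hle : ∀ i, Module.length Λ (S i) ≤ Module.length Λ (X.1.M i) := fun i =>
      Module.length_le_of_injective (S i).subtype (S i).injective_subtype
    have hnt : ∀ i, Module.length Λ (X.1.M i) ≠ ⊤ := by
      intro i
      have := X.2.1 i
      rw [Module.length_ne_top_iff]
      exact isFiniteLength_iff_isNoetherian_isArtinian.2 ⟨inferInstance, inferInstance⟩
    obtain ⟨i, hi⟩ := hex
    refine Finset.sum_lt_sum (fun j _ => ENat.toNat_le_toNat (hle j) (hnt j)) ⟨i, Finset.mem_univ i, ?_⟩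
    have := X.2.1 i
    have hlt := Submodule.length_lt hi
    rw [← ENat.coe_toNat (hnt i), ← ENat.coe_toNat (ne_top_of_le_ne_top (hnt i) (hle i))] at hlt
    exact_mod_cast hlt

theorem m_nil (R : Type) [CommRing R] [IsArtinianRing R] [Algebra R Λ] [Module.Finite R Λ]
    [IsArtinianRing Λ] (X : MObj Λ V) (hX : Ind X) :
    ∃ (J : ℕ → Set (X ⟶ X)) (N : ℕ), 𝟙 X ∈ J 0 ∧
    (∀ k e e', e ∈ J k → ¬ IsIso e' → e ≫ e' ∈ J (k + 1) ∧ e' ≫ e ∈ J (k + 1)) ∧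
    ∀ e ∈ J N, e = 0 := by
  letI : Module R (RepHom X.1 X.1) := rModHom X.1 X.1
  letI : Module R (End X) := inferInstanceAs (Module R (RepHom X.1 X.1))
  haveI : IsScalarTower R (End X) (End X) := ⟨fun r f g => rfl⟩
  haveI : Module.Finite R (End X) := by
    have := fun i => rfinite (R := R) X.2.1 i
    have := fun i => finite_hom R (X.1.M i) (X.1.M i)
    let ι : End X →ₗ[R] (∀ i, X.1.M i →ₗ[R] X.1.M i) :=
      { toFun := fun f i => (RepHom.app f i).restrictScalars R
        map_add' := fun f g => rfl
        map_smul' := fun f g => rfl }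
    refine Module.Finite.of_injective ι ?_
    intro f g hfg
    apply mhom_ext
    intro i x
    exact LinearMap.congr_fun (congrFun hfg i) x
  haveI : IsArtinianRing (End X) := IsArtinianRing.of_finite R (End X)
  obtain ⟨N, hN⟩ := IsArtinianRing.isNilpotent_jacobson_bot (R := End X)
  have fit' : ∀ v : X ⟶ X, IsIso v ∨ ∃ n, powr v n = 0 := by
    intro v
    rcases m_fit X v with h | ⟨n, e, h1, h2, h3, h4⟩
    · exact Or.inl h
    · right
      rcases hX.2 e h1 with h | h
      · exact absurd h h2
      · exact ⟨n, by rw [← h3, h, Limits.zero_comp]⟩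
  have hpow : ∀ (v : End X) n, v ^ n = powr v n := by
    intro v n
    induction n with
    | zero => rfl
    | succ n ih =>
      rw [pow_succ', ih]
      rfl
  have hJ : ∀ e : End X, ¬ IsIso (show X ⟶ X from e) → e ∈ Ideal.jacobson (⊥ : Ideal (End X)) := by
    intro e he
    rw [Ideal.mem_jacobson_iff]
    intro y
    have hnil : IsNilpotent (y * e) := by
      rcases fit' (y * e : End X) with h | ⟨n, hn⟩
      · exfalso
        rcases fit' e with h' | ⟨n, hn⟩
        · exact he h'
        · have h1 : ∃ z : End X, z * e = 1 := by
            refine ⟨(show End X from inv (show X ⟶ X from y * e)) * y, ?_⟩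
            rw [mul_assoc]
            exact IsIso.hom_inv_id (show X ⟶ X from y * e)
          obtain ⟨z, hz⟩ := h1
          have h2 : ∀ n, z ^ n * e ^ n = 1 := by
            intro n
            induction n with
            | zero => simp
            | succ n ih => rw [pow_succ, pow_succ', mul_assoc, ← mul_assoc z, hz, one_mul, ih]
          apply hX.1
          have := h2 n
          rw [hpow, hpow] at this
          rw [hn] at this
          rw [← End.one_def, ← this]
          exact Limits.zero_comp
      · exact ⟨n, by rw [hpow]; exact hn⟩
    obtain ⟨u, hu⟩ := hnil.isUnit_one_add
    refine ⟨(↑u⁻¹ : End X), ?_⟩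
    have : (↑u⁻¹ : End X) * (1 + y * e) = 1 := by rw [← hu, Units.inv_mul]
    rw [mul_add, mul_one, ← mul_assoc] at this
    rw [add_comm, this, sub_self]
    exact Submodule.zero_mem _
  refine ⟨fun k => {e : X ⟶ X | (show End X from e) ∈ (Ideal.jacobson (⊥ : Ideal (End X))) ^ k},
    N, ?_, ?_, ?_⟩
  · change (1 : End X) ∈ (Ideal.jacobson (⊥ : Ideal (End X))) ^ 0
    rw [Submodule.pow_zero]
    exact Submodule.one_le.1 le_rfl
  · intro k e e' he he'
    refine ⟨?_, ?_⟩
    · change (show End X from e') * (show End X from e) ∈ (Ideal.jacobson (⊥ : Ideal (End X))) ^ (k + 1)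
      rw [Ideal.IsTwoSided.pow_succ]
      exact Ideal.mul_mem_mul (hJ _ he') he
    · change (show End X from e) * (show End X from e') ∈ (Ideal.jacobson (⊥ : Ideal (End X))) ^ (k + 1)
      rw [Submodule.pow_succ]
      exact Ideal.mul_mem_mul he (hJ _ he')
  · intro e he
    have he' : (show End X from e) ∈ (Ideal.jacobson (⊥ : Ideal (End X))) ^ N := he
    rw [hN] at he'
    exact he'

theorem ses_zero {X Y Z : Repn Λ V} {f : RepHom X Y} {g : RepHom Y Z} (h : IsSES f g) (i : V)
    (x : X.M i) : g.app i (f.app i x) = 0 := by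
  have : f.app i x ∈ LinearMap.ker (g.app i) := by
    rw [← h.2.2]
    exact ⟨x, rfl⟩
  exact this

/-- the exact structure on the monomorphism category -/
noncomputable def mEx (R : Type) [CommRing R] [IsArtinianRing R] [Algebra R Λ] [Module.Finite R Λ]
    [IsArtinianRing Λ] [IsNoetherianRing Λ] : ExData (MObj Λ V) where
  Conf {X Y Z} f g := IsSES (X := X.1) (Y := Y.1) (Z := Z.1) f g
  mono {X Y Z f g} h := ⟨fun u v huv => mhom_ext fun i x => by
    apply h.1 i
    exact congrArg (fun t => RepHom.app t i x) huv⟩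
  epi {X Y Z f g} h := ⟨fun u v huv => mhom_ext fun i x => by
    obtain ⟨y, rfl⟩ := h.2.1 i x
    exact congrArg (fun t => RepHom.app t i y) huv⟩
  zero {X Y Z f g} h := mhom_ext fun i x => ses_zero h i x
  ker {X Y Z f g} h W u hu := ses_ker h u (fun i x => congrArg (fun t => RepHom.app t i x) hu)
  coker {X Y Z f g} h W u hu := ses_coker h u (fun i x => congrArg (fun t => RepHom.app t i x) hu)
  pb {X Y Z f g} h W w := by
    obtain ⟨B, i, p, q, b, hb, h1, h2, h3, h4⟩ := ses_pb h w
    exact ⟨⟨B, fg_of_inj b hb (fg_prod Y.2.1 W.2.1), mono_of_inj b hb (mono_prod Y.2.2 W.2.2)⟩,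
      i, p, q, h1, h2, h3, fun {U} s c => h4 s c⟩
  po {X Y Z f g} h W w := by
    obtain ⟨B, i, p, q, b, hb, h1, h2, h3, h4⟩ := ses_po h w
    exact ⟨⟨B, fg_of_surj b hb (fg_prod Y.2.1 W.2.1), mono_ext h1 W.2.2 Z.2.2⟩,
      i, p, q, h1, h2, h3, fun {U} s c => h4 s c⟩
  μ := mμ
  idem := m_idem
  fit := m_fit
  nil := m_nil R

end fin

end ARMono

/-! ## Part D: the defect formula -/

set_option linter.unusedVariables false
set_option linter.unusedSectionVars false
set_option linter.style.haveILetI false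

namespace ARMono
open QuivRep CategoryTheory

/-- `E` is a dualizing module. -/
structure IsDual (R : Type) [CommRing R] (E : Type) [AddCommGroup E] [Module R E] : Prop where
  fin : Module.Finite R E
  inj : Module.Injective R E
  cog : ∀ (M : Type) [AddCommGroup M] [Module R M] (x : M), x ≠ 0 → ∃ f : M →ₗ[R] E, f x ≠ 0
  refl : ∀ (M : Type) [AddCommGroup M] [Module R M] [Module.Finite R M]
        (θ : (M →ₗ[R] E) →ₗ[R] E), ∃ x, ∀ f, θ f = f x

section ext
variable {R : Type} [CommRing R] {E : Type} [AddCommGroup E] [Module R E]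

theorem IsDual.extend (hE : IsDual R E) {A C : Type} [AddCommGroup A] [Module R A] [AddCommGroup C]
    [Module R C] (p : A →ₗ[R] C) (φ : A →ₗ[R] E) (h : ∀ x, p x = 0 → φ x = 0) :
    ∃ ψ : C →ₗ[R] E, ∀ x, ψ (p x) = φ x := by
  have := hE.inj
  have h' : LinearMap.ker p ≤ LinearMap.ker φ := fun x hx => h x hx
  obtain ⟨ψ, hψ⟩ := Module.Injective.out ((LinearMap.ker p).liftQ p le_rfl)
    (by
      rw [← LinearMap.ker_eq_bot]
      exact Submodule.ker_liftQ_eq_bot _ _ _ le_rfl) ((LinearMap.ker p).liftQ φ h')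
  refine ⟨ψ, fun x => ?_⟩
  exact hψ (Submodule.Quotient.mk x)

theorem IsDual.sep (hE : IsDual R E) {A B : Type} [AddCommGroup A] [Module R A] [AddCommGroup B]
    [Module R B] (d : A →ₗ[R] B) (x : B)
    (h : ∀ φ : B →ₗ[R] E, (∀ a, φ (d a) = 0) → φ x = 0) : ∃ a, d a = x := by
  by_contra hcon
  have h1 : (LinearMap.range d).mkQ x ≠ 0 := by
    intro h0
    exact hcon ((Submodule.Quotient.mk_eq_zero _).1 h0)
  obtain ⟨f, hf⟩ := hE.cog _ _ h1
  apply hf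
  refine h (f ∘ₗ (LinearMap.range d).mkQ) (fun a => ?_)
  have : (LinearMap.range d).mkQ (d a) = 0 := (Submodule.Quotient.mk_eq_zero _).2 ⟨a, rfl⟩
  rw [LinearMap.comp_apply, this, map_zero]

theorem defect_formula (hE : IsDual R E) {AX AY AW BX BY BW : Type}
    [AddCommGroup AX] [AddCommGroup AY] [AddCommGroup AW] [AddCommGroup BX] [AddCommGroup BY]
    [AddCommGroup BW] [Module R AX] [Module R AY] [Module R AW] [Module R BX] [Module R BY]
    [Module R BW] (af : AX →ₗ[R] AY) (ag : AY →ₗ[R] AW) (bf : BX →ₗ[R] BY) (bg : BY →ₗ[R] BW)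
    (dX : AX →ₗ[R] BX) (dY : AY →ₗ[R] BY) (dW : AW →ₗ[R] BW)
    (hag : Function.Surjective ag) (ha0 : ∀ x, ag (af x) = 0)
    (ha : ∀ y, ag y = 0 → ∃ x, af x = y) (hbf : Function.Injective bf)
    (hb0 : ∀ x, bg (bf x) = 0) (hb : ∀ y, bg y = 0 → ∃ x, bf x = y)
    (h1 : ∀ x, dY (af x) = bf (dX x)) (h2 : ∀ x, dW (ag x) = bg (dY x)) :
    (∀ w, dW w = 0 → ∃ y, ag y = w ∧ dY y = 0) ↔
    (∀ φ : BX →ₗ[R] E, (∀ x, φ (dX x) = 0) →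
      ∃ ψ : BY →ₗ[R] E, (∀ y, ψ (dY y) = 0) ∧ ∀ x, ψ (bf x) = φ x) := by
  constructor
  · intro H φ hφ
    obtain ⟨ψ, hψ⟩ := hE.extend ((LinearMap.range dY).mkQ ∘ₗ bf) φ (by
      intro x hx
      obtain ⟨y, hy⟩ := (Submodule.Quotient.mk_eq_zero _).1 hx
      have h3 : dW (ag y) = 0 := by
        rw [h2, hy, hb0]
      obtain ⟨y', hy', hy0⟩ := H _ h3
      obtain ⟨a, ha'⟩ := ha (y - y') (by rw [map_sub, hy', sub_self])
      have h4 : bf (dX a) = bf x := by rw [← h1, ha', map_sub, hy0, sub_zero, hy]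
      rw [← hbf h4, hφ])
    refine ⟨ψ ∘ₗ (LinearMap.range dY).mkQ, fun y => ?_, fun x => hψ x⟩
    have : (LinearMap.range dY).mkQ (dY y) = 0 := (Submodule.Quotient.mk_eq_zero _).2 ⟨y, rfl⟩
    rw [LinearMap.comp_apply, this, map_zero]
  · intro H w hw
    obtain ⟨y, rfl⟩ := hag w
    obtain ⟨x, hx⟩ := hb (dY y) (by rw [← h2, hw])
    obtain ⟨a, ha'⟩ := hE.sep dX x (by
      intro φ hφ
      obtain ⟨ψ, hψ1, hψ2⟩ := H φ hφ
      rw [← hψ2, hx, hψ1])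
    refine ⟨y - af a, by rw [map_sub, ha0, sub_zero], ?_⟩
    rw [map_sub, h1, ha', hx, sub_self]

end ext

section tup
variable {Λ : Type} [Ring Λ] {V : Type} [Quiver.{1} V]

/-- tuples of elements of a representation -/
abbrev Tup (n : V → ℕ) (X : Repn Λ V) : Type := ∀ i, Fin (n i) → X.M i

def tmap (R : Type) [CommRing R] [Algebra R Λ] (n : V → ℕ) {X Y : Repn Λ V} (u : RepHom X Y) :
    Tup n X →ₗ[R] Tup n Y where
  toFun x i t := u.app i (x i t)
  map_add' x y := by
    funext i t
    exact map_add _ _ _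
  map_smul' r x := by
    funext i t
    exact map_rsmul _ r _

theorem tmap_apply (R : Type) [CommRing R] [Algebra R Λ] (n : V → ℕ) {X Y : Repn Λ V}
    (u : RepHom X Y) (x : Tup n X) (i : V) (t : Fin (n i)) :
    tmap R n u x i t = u.app i (x i t) := rfl

theorem tmap_comp (R : Type) [CommRing R] [Algebra R Λ] (n : V → ℕ) {X Y Z : Repn Λ V}
    (u : RepHom X Y) (v : RepHom Y Z) (x : Tup n X) :
    tmap R n (v.comp u) x = tmap R n v (tmap R n u x) := rfl

/-- natural maps between tuples -/
structure NT (R : Type) [CommRing R] (Λ : Type) [Ring Λ] [Algebra R Λ] (V : Type) [Quiver.{1} V]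
    (n r : V → ℕ) where
  d : ∀ X : Repn Λ V, Tup n X →ₗ[R] Tup r X
  nat : ∀ {X Y : Repn Λ V} (u : RepHom X Y) (x : Tup n X),
    d Y (tmap R n u x) = tmap R r u (d X x)

theorem ses_defect [Fintype V] {R : Type} [CommRing R] [Algebra R Λ] {E : Type} [AddCommGroup E]
    [Module R E] (hE : IsDual R E) {n r : V → ℕ} (δ : NT R Λ V n r) {X Y W : Repn Λ V}
    {f : RepHom X Y} {g : RepHom Y W} (h : IsSES f g) :
    (∀ w : Tup n W, δ.d W w = 0 → ∃ y : Tup n Y, tmap R n g y = w ∧ δ.d Y y = 0) ↔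
    (∀ φ : Tup r X →ₗ[R] E, (∀ x, φ (δ.d X x) = 0) →
      ∃ ψ : Tup r Y →ₗ[R] E, (∀ y, ψ (δ.d Y y) = 0) ∧ ∀ x, ψ (tmap R r f x) = φ x) := by
  have hz : ∀ i x, g.app i (f.app i x) = 0 := by
    intro i x
    have : f.app i x ∈ LinearMap.ker (g.app i) := by
      rw [← h.2.2]
      exact ⟨x, rfl⟩
    exact this
  have hl : ∀ i y, g.app i y = 0 → ∃ x, f.app i x = y := by
    intro i y hy
    have : y ∈ LinearMap.ker (g.app i) := hy
    rw [← h.2.2] at this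
    exact this
  have hl' : ∀ (n : V → ℕ) (y : Tup n Y), tmap R n g y = 0 → ∃ x, tmap R n f x = y := by
    intro n y hy
    choose x hx using fun i t => hl i (y i t) (congrFun (congrFun hy i) t)
    exact ⟨x, funext fun i => funext fun t => hx i t⟩
  refine defect_formula hE (tmap R n f) (tmap R n g) (tmap R r f) (tmap R r g) _ _ _
    ?_ ?_ (hl' n) ?_ ?_ (hl' r) ?_ ?_
  · intro w
    choose y hy using fun i t => h.2.1 i (w i t)
    exact ⟨y, funext fun i => funext fun t => hy i t⟩
  · intro x
    exact funext fun i => funext fun t => hz i _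
  · intro x y hxy
    exact funext fun i => funext fun t => h.1 i (congrFun (congrFun hxy i) t)
  · intro x
    exact funext fun i => funext fun t => hz i _
  · exact δ.nat f
  · exact δ.nat g

end tup

end ARMono

/-! ## Part F: presentations and copresentations -/

set_option linter.unusedVariables false
set_option linter.unusedSectionVars false
set_option linter.style.haveILetI false

namespace ARMono
open QuivRep CategoryTheory

section pres
variable {R : Type} [CommRing R] {Λ : Type} [Ring Λ] [Algebra R Λ]
  {V : Type} [Quiver.{1} V] [Fintype V] [∀ i j : V, Fintype (i ⟶ j)]

abbrev InA {V : Type} [Quiver.{1} V] (j : V) :=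
  Σ i : V, Quiver.Hom.{1} i j
abbrev OutA {V : Type} [Quiver.{1} V] (i : V) :=
  Σ j : V, Quiver.Hom.{1} i j

/-- index set of generators available at vertex `j` -/
abbrev KIn (n : V → ℕ) (j : V) := 
  Sum (Fin (n j)) (Σ a : InA j, Fin (n a.1))

def extT (R : Type) [CommRing R] [Algebra R Λ] (n : V → ℕ) (X : Repn Λ V) (j : V) :
    KIn n j → (Tup n X →ₗ[R] X.M j)
  | Sum.inl t =>
    { toFun := fun x => x j t, map_add' := fun _ _ => rfl, map_smul' := fun _ _ => rfl }
  | Sum.inr ⟨a, t⟩ =>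
    { toFun := fun x => X.h a.2 (x a.1 t)
      map_add' := fun _ _ => map_add _ _ _
      map_smul' := fun r _ => map_rsmul _ r _ }

theorem extT_nat (n : V → ℕ) {X Y : Repn Λ V} (u : RepHom X Y) (x : Tup n X) (j : V)
    (k : KIn n j) : extT R n Y j k (tmap R n u x) = u.app j (extT R n X j k x) := by
  rcases k with t | ⟨a, t⟩
  · rfl
  · exact comm_apply u a.2 _

theorem exists_pres [IsNoetherianRing Λ] (Z : Repn Λ V) (hZ : Z.FG) :
    ∃ (n r : V → ℕ) (δ : NT R Λ V n r) (z : Tup n Z), δ.d Z z = 0 ∧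
      ∀ (X : Repn Λ V) (x : Tup n X), (δ.d X x = 0 → ∃ u : RepHom Z X, tmap R n u z = x) ∧
        ∀ u v : RepHom Z X, tmap R n u z = tmap R n v z → u = v := by
  classical
  have hZ' : ∀ i, ∃ (n : ℕ) (z : Fin n → Z.M i), Submodule.span Λ (Set.range z) = ⊤ := fun i => by
    have := hZ i
    exact Module.Finite.exists_fin
  choose n z hz using hZ'
  let z : Tup n Z := z
  let ev : ∀ (X : Repn Λ V) (x : Tup n X) j, (KIn n j → Λ) →ₗ[Λ] X.M j := fun X x j =>
    { toFun := fun c => ∑ k, c k • extT R n X j k x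
      map_add' := fun c d => by simp [add_smul, Finset.sum_add_distrib]
      map_smul' := fun l c => by simp [mul_smul, Finset.smul_sum] }
  have hev : ∀ X x j c, ev X x j c = ∑ k, c k • extT R n X j k x := fun _ _ _ _ => rfl
  have hker : ∀ j, ∃ (r : ℕ) (c : Fin r → (KIn n j → Λ)),
      Submodule.span Λ (Set.range c) = LinearMap.ker (ev Z z j) := fun j => by
    have : (LinearMap.ker (ev Z z j)).FG := IsNoetherian.noetherian _
    exact Submodule.fg_iff_exists_fin_generating_family.1 this
  choose r c hc using hker
  let δ : NT R Λ V n r :=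
    { d := fun X =>
        { toFun := fun x j s => ev X x j (c j s)
          map_add' := fun x y => by
            funext j s
            simp [hev, Finset.sum_add_distrib]
          map_smul' := fun ρ x => by
            funext j s
            simp only [hev, map_smul, Pi.smul_apply, RingHom.id_apply, Finset.smul_sum]
            exact Finset.sum_congr rfl fun k _ => (rsmul_comm X j ρ _ _).symm }
      nat := fun {X Y} u x => by
        funext j s
        change ev Y (tmap R n u x) j (c j s) = u.app j (ev X x j (c j s))
        simp only [hev, map_sum, map_smul, extT_nat] }
  have hδ : ∀ X x j s, δ.d X x j s = ev X x j (c j s) := fun _ _ _ _ => rfl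
  refine ⟨n, r, δ, z, ?_, ?_⟩
  · funext j s
    have : c j s ∈ LinearMap.ker (ev Z z j) := by
      rw [← hc]
      exact Submodule.subset_span ⟨s, rfl⟩
    exact this
  · intro X x
    refine ⟨fun hx => ?_, fun u v huv => ?_⟩
    swap
    · apply RepHom.ext
      funext i
      apply LinearMap.ext_on (hz i)
      rintro _ ⟨t, rfl⟩
      exact congrFun (congrFun huv i) t
    have hrel : ∀ j d, ev Z z j d = 0 → ev X x j d = 0 := by
      intro j d hd
      have h1 : LinearMap.ker (ev Z z j) ≤ LinearMap.ker (ev X x j) := by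
        rw [← hc, Submodule.span_le]
        rintro _ ⟨s, rfl⟩
        exact congrFun (congrFun hx j) s
      exact h1 hd
    have hsurj : ∀ j, Function.Surjective (ev Z z j) := by
      intro j
      rw [← LinearMap.range_eq_top, eq_top_iff, ← hz j, Submodule.span_le]
      rintro _ ⟨t, rfl⟩
      refine ⟨Pi.single (Sum.inl t) 1, ?_⟩
      rw [hev, Finset.sum_eq_single (Sum.inl t)]
      · rw [Pi.single_eq_same, one_smul]; rfl
      · intro b _ hb
        rw [Pi.single_eq_of_ne hb, zero_smul]
      · simp
    have hsing : ∀ (X : Repn Λ V) (x : Tup n X) j k,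
        ev X x j (Pi.single k 1) = extT R n X j k x := by
      intro X x j k
      rw [hev, Finset.sum_eq_single k]
      · rw [Pi.single_eq_same, one_smul]
      · intro b _ hb
        rw [Pi.single_eq_of_ne hb, zero_smul]
      · simp
    let s : ∀ j, Z.M j → (KIn n j → Λ) := fun j => Function.surjInv (hsurj j)
    have hs : ∀ j w, ev Z z j (s j w) = w := fun j w => Function.surjInv_eq (hsurj j) w
    have hwd : ∀ j d d', ev Z z j d = ev Z z j d' → ev X x j d = ev X x j d' := by
      intro j d d' h
      rw [← sub_eq_zero, ← map_sub] at h ⊢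
      exact hrel j _ h
    let u : ∀ j, Z.M j →ₗ[Λ] X.M j := fun j =>
      { toFun := fun w => ev X x j (s j w)
        map_add' := fun w w' => by
          rw [← map_add]
          apply hwd
          rw [hs, map_add, hs, hs]
        map_smul' := fun l w => by
          rw [RingHom.id_apply, ← map_smul]
          apply hwd
          rw [hs, map_smul, hs] }
    have hu : ∀ j d, u j (ev Z z j d) = ev X x j d := fun j d => hwd j _ _ (hs j _)
    have hue : ∀ j k, u j (extT R n Z j k z) = extT R n X j k x := fun j k => by
      rw [← hsing, hu, hsing]
    refine ⟨⟨u, fun {i j} a => ?_⟩, ?_⟩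
    · apply LinearMap.ext_on (hz i)
      rintro _ ⟨t, rfl⟩
      change X.h a (u i (z i t)) = u j (Z.h a (z i t))
      have h1 := hue i (Sum.inl t)
      have h2 := hue j (Sum.inr ⟨⟨i, a⟩, t⟩)
      change u i (z i t) = x i t at h1
      change u j (Z.h a (z i t)) = X.h a (x i t) at h2
      rw [h1, h2]
    · funext j t
      exact hue j (Sum.inl t)

end pres

section copres
variable {R : Type} [CommRing R] {Λ : Type} [Ring Λ] [Algebra R Λ]
  {V : Type} [Quiver.{1} V]

open Classical in
/-- insertion of a single element in a tuple -/
noncomputable def sing (R : Type) [CommRing R] [Algebra R Λ] (m : V → ℕ) (X : Repn Λ V) (i : V)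
    (t : Fin (m i)) : X.M i →ₗ[R] Tup m X :=
  LinearMap.single R (fun i => Fin (m i) → X.M i) i ∘ₗ LinearMap.single R (fun _ => X.M i) t

open Classical in
theorem sing_nat (m : V → ℕ) {X Y : Repn Λ V} (u : RepHom X Y) (i : V) (t : Fin (m i))
    (x : X.M i) : tmap R m u (sing R m X i t x) = sing R m Y i t (u.app i x) := by
  funext j s
  change u.app j ((Pi.single i (Pi.single t x) : Tup m X) j s) =
    (Pi.single i (Pi.single t (u.app i x)) : Tup m Y) j s
  by_cases hij : j = i
  · subst hij
    rw [Pi.single_eq_same, Pi.single_eq_same]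
    by_cases hst : s = t
    · subst hst
      rw [Pi.single_eq_same, Pi.single_eq_same]
    · rw [Pi.single_eq_of_ne hst, Pi.single_eq_of_ne hst, map_zero]
  · rw [Pi.single_eq_of_ne hij, Pi.single_eq_of_ne hij]
    exact map_zero _

open Classical in
theorem sing_eq (m : V → ℕ) (X : Repn Λ V) (i : V) (t : Fin (m i)) (x : X.M i) :
    sing R m X i t x = (Pi.single i (Pi.single t x) : Tup m X) := rfl

theorem sing_same (m : V → ℕ) (X : Repn Λ V) (i : V) (t : Fin (m i)) (x : X.M i) :
    sing R m X i t x i t = x := by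
  classical
  rw [sing_eq]
  simp

theorem sum_sing [Fintype V] (m : V → ℕ) (X : Repn Λ V) (x : Tup m X) :
    ∑ i, ∑ t, sing R m X i t (x i t) = x := by
  classical
  funext j s
  simp only [Finset.sum_apply, sing_eq]
  rw [Finset.sum_eq_single j, Finset.sum_eq_single s]
  · simp
  · intro b _ hb
    rw [Pi.single_eq_same, Pi.single_eq_of_ne (Ne.symm hb)]
  · simp
  · intro b _ hb
    refine Finset.sum_eq_zero fun t _ => ?_
    rw [Pi.single_eq_of_ne (Ne.symm hb)]
    rfl
  · simp

theorem tup_hom_ext [Fintype V] {E : Type} [AddCommGroup E] [Module R E] (m : V → ℕ)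
    (X : Repn Λ V) {φ ψ : Tup m X →ₗ[R] E}
    (h : ∀ i t x, φ (sing R m X i t x) = ψ (sing R m X i t x)) : φ = ψ := by
  apply LinearMap.ext
  intro x
  rw [← sum_sing (R := R) m X x]
  simp only [map_sum, h]

variable [Fintype V] [∀ i j : V, Fintype (i ⟶ j)]

abbrev KOut (m : V → ℕ) (i : V) := 
  Sum (Fin (m i)) (Σ a : OutA i, Fin (m a.1))

def rh (R : Type) [CommRing R] [Algebra R Λ] (X : Repn Λ V) {i j : V} (a : i ⟶ j) :
    X.M i →ₗ[R] X.M j where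
  toFun x := X.h a x
  map_add' := map_add _
  map_smul' r x := map_rsmul _ r x

noncomputable def singO (R : Type) [CommRing R] [Algebra R Λ] (m : V → ℕ) (X : Repn Λ V) (i : V) :
    KOut m i → (X.M i →ₗ[R] Tup m X)
  | Sum.inl t => sing R m X i t
  | Sum.inr ⟨a, t⟩ => sing R m X a.1 t ∘ₗ rh R X a.2

theorem singO_nat (m : V → ℕ) {X Y : Repn Λ V} (u : RepHom X Y) (i : V) (k : KOut m i)
    (x : X.M i) : tmap R m u (singO R m X i k x) = singO R m Y i k (u.app i x) := by
  rcases k with t | ⟨a, t⟩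
  · exact sing_nat m u i t x
  · change tmap R m u (sing R m X a.1 t (X.h a.2 x)) = sing R m Y a.1 t (Y.h a.2 (u.app i x))
    rw [sing_nat, comm_apply]

noncomputable def gmap (R : Type) [CommRing R] [Algebra R Λ] (m : V → ℕ) (X : Repn Λ V) (i : V) :
    (KOut m i → Λ) →ₗ[R] X.M i →ₗ[R] Tup m X :=
  LinearMap.mk₂ R (fun c x => ∑ k, singO R m X i k (c k • x))
    (fun c c' x => by simp [add_smul, Finset.sum_add_distrib])
    (fun r c x => by simp [smul_assoc, Finset.smul_sum])
    (fun c x x' => by simp [Finset.sum_add_distrib])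
    (fun r c x => by
      rw [Finset.smul_sum]
      refine Finset.sum_congr rfl fun k _ => ?_
      rw [← rsmul_comm, map_smul])

theorem gmap_apply (m : V → ℕ) (X : Repn Λ V) (i : V) (c : KOut m i → Λ) (x : X.M i) :
    gmap R m X i c x = ∑ k, singO R m X i k (c k • x) := rfl

theorem gmap_nat (m : V → ℕ) {X Y : Repn Λ V} (u : RepHom X Y) (i : V) (c : KOut m i → Λ)
    (x : X.M i) : tmap R m u (gmap R m X i c x) = gmap R m Y i c (u.app i x) := by
  simp only [gmap_apply, map_sum, singO_nat, map_smul]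

theorem gmap_single {m : V → ℕ} [∀ i : V, DecidableEq (KOut m i)] (X : Repn Λ V) (i : V)
    (k : KOut m i) (l : Λ) (x : X.M i) :
    gmap R m X i (Pi.single k l) x = singO R m X i k (l • x) := by
  rw [gmap_apply, Finset.sum_eq_single k]
  · rw [Pi.single_eq_same]
  · intro b _ hb
    rw [Pi.single_eq_of_ne hb, zero_smul, map_zero]
  · simp

theorem exists_copres [IsNoetherianRing R] [Module.Finite R Λ] {E : Type} [AddCommGroup E]
    [Module R E] (hE : IsDual R E) (X : Repn Λ V) (hX : X.FG) :
    ∃ (r m : V → ℕ) (δ : NT R Λ V r m) (y : Tup m X →ₗ[R] E), (∀ x, y (δ.d X x) = 0) ∧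
      (∀ (W : Repn Λ V) (φ : Tup m W →ₗ[R] E), (∀ w, φ (δ.d W w) = 0) →
        ∃ u : RepHom W X, ∀ w, y (tmap R m u w) = φ w) ∧
      ∀ (W : Repn Λ V) (u v : RepHom W X),
        (∀ w, y (tmap R m u w) = y (tmap R m v w)) → u = v := by
  classical
  have hfin : ∀ i, Module.Finite R (X.M i) := fun i => rfinite hX i
  have hy' : ∀ i, ∃ (m : ℕ) (y : Fin m → (X.M i →ₗ[R] E)),
      Submodule.span R (Set.range y) = ⊤ := fun i => by
    have := hfin i
    have := hE.fin
    have := finite_hom R (X.M i) E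
    exact Module.Finite.exists_fin
  choose m y0 hy0 using hy'
  let y : Tup m X →ₗ[R] E := ∑ i, ∑ t, y0 i t ∘ₗ LinearMap.proj t ∘ₗ LinearMap.proj i
  have hy : ∀ i t x, y (sing R m X i t x) = y0 i t x := by
    intro i t x
    simp only [y, LinearMap.sum_apply, LinearMap.comp_apply, LinearMap.proj_apply, sing_eq]
    rw [Finset.sum_eq_single i, Finset.sum_eq_single t]
    · simp
    · intro b _ hb
      rw [Pi.single_eq_same, Pi.single_eq_of_ne hb, map_zero]
    · simp
    · intro b _ hb
      refine Finset.sum_eq_zero fun t _ => ?_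
      rw [Pi.single_eq_of_ne hb]
      exact map_zero _
    · simp
  -- the linear form attached to a coefficient vector
  let L : ∀ (W : Repn Λ V) (φ : Tup m W →ₗ[R] E) i, (KOut m i → Λ) →ₗ[R] (W.M i →ₗ[R] E) :=
    fun W φ i => LinearMap.llcomp R _ _ _ φ ∘ₗ gmap R m W i
  have hL : ∀ W φ i c w, L W φ i c w = φ (gmap R m W i c w) := fun _ _ _ _ _ => rfl
  have hker : ∀ i, ∃ (r : ℕ) (c : Fin r → (KOut m i → Λ)),
      Submodule.span R (Set.range c) = LinearMap.ker (L X y i) := fun j => by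
    have : IsNoetherian R (KOut m j → Λ) := inferInstance
    have : (LinearMap.ker (L X y j)).FG := IsNoetherian.noetherian _
    exact Submodule.fg_iff_exists_fin_generating_family.1 this
  choose r c hc using hker
  let δ : NT R Λ V r m :=
    { d := fun X => ∑ i, ∑ s, gmap R m X i (c i s) ∘ₗ LinearMap.proj s ∘ₗ LinearMap.proj i
      nat := fun {X Y} u x => by
        simp only [LinearMap.sum_apply, LinearMap.comp_apply, LinearMap.proj_apply, map_sum,
          gmap_nat]
        rfl }
  have hδ : ∀ X x, δ.d X x = ∑ i, ∑ s, gmap R m X i (c i s) (x i s) := by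
    intro X x
    simp only [δ, LinearMap.sum_apply, LinearMap.comp_apply, LinearMap.proj_apply]
  refine ⟨r, m, δ, y, ?_, ?_, ?_⟩
  rotate_left 2
  · intro W u v huv
    refine hom_ext fun i x => ?_
    by_contra hne
    obtain ⟨f, hf⟩ := hE.cog (X.M i) (u.app i x - v.app i x) (sub_ne_zero.2 hne)
    apply hf
    have hf' : f ∈ Submodule.span R (Set.range (y0 i)) := by rw [hy0]; trivial
    obtain ⟨ρ, rfl⟩ := (Submodule.mem_span_range_iff_exists_fun R).1 hf'
    rw [map_sub, sub_eq_zero]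
    simp only [LinearMap.sum_apply, LinearMap.smul_apply]
    refine Finset.sum_congr rfl fun t _ => ?_
    have := huv (sing R m W i t x)
    rw [sing_nat, sing_nat, hy, hy] at this
    rw [this]
  · intro x
    rw [hδ]
    simp only [map_sum]
    refine Finset.sum_eq_zero fun i _ => Finset.sum_eq_zero fun s _ => ?_
    rw [← hL]
    have : c i s ∈ LinearMap.ker (L X y i) := by
      rw [← hc]
      exact Submodule.subset_span ⟨s, rfl⟩
    rw [LinearMap.mem_ker.1 this, LinearMap.zero_apply]
  · intro W φ hφ
    have hrel : ∀ i d, L X y i d = 0 → L W φ i d = 0 := by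
      intro i d hd
      have h1 : LinearMap.ker (L X y i) ≤ LinearMap.ker (L W φ i) := by
        rw [← hc, Submodule.span_le]
        rintro _ ⟨s, rfl⟩
        apply LinearMap.ext
        intro w
        rw [hL, LinearMap.zero_apply, ← hφ (sing R r W i s w), hδ]
        congr 1
        rw [Finset.sum_eq_single i, Finset.sum_eq_single s]
        · rw [sing_same]
        · intro b _ hb
          rw [sing_eq, Pi.single_eq_same, Pi.single_eq_of_ne hb, map_zero]
        · simp
        · intro b _ hb
          refine Finset.sum_eq_zero fun t _ => ?_
          rw [sing_eq, Pi.single_eq_of_ne hb]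
          exact map_zero _
        · simp
      exact h1 hd
    -- constants
    let ι : ∀ i, (Fin (m i) → R) →ₗ[R] (KOut m i → Λ) := fun i =>
      { toFun := fun ρ k => Sum.elim (fun t => algebraMap R Λ (ρ t)) (fun _ => 0) k
        map_add' := fun ρ σ => by
          funext k
          rcases k with t | t <;> simp
        map_smul' := fun ρ σ => by
          funext k
          rcases k with t | t <;> simp [Algebra.smul_def] }
    have hι : ∀ (W : Repn Λ V) φ i ρ w,
        L W φ i (ι i ρ) w = ∑ t, ρ t • φ (sing R m W i t w) := by
      intro W φ i ρ w
      rw [hL, gmap_apply, map_sum, Fintype.sum_sum_type]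
      have h0 : ∀ q, ι i ρ (Sum.inr q) = 0 := fun q => rfl
      have h1 : ∀ t, ι i ρ (Sum.inl t) • w = ρ t • w := fun q => rfl
      simp only [h0, h1, zero_smul, map_zero, Finset.sum_const_zero, add_zero, map_smul]
      rfl
    have hsurj : ∀ i f, ∃ ρ, L X y i (ι i ρ) = f := by
      intro i f
      have hf : f ∈ Submodule.span R (Set.range (y0 i)) := by rw [hy0]; trivial
      obtain ⟨ρ, rfl⟩ := (Submodule.mem_span_range_iff_exists_fun R).1 hf
      refine ⟨ρ, ?_⟩
      apply LinearMap.ext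
      intro x
      rw [hι]
      simp [hy]
    have hexu : ∀ i w, ∃ x : X.M i, ∀ ρ, L X y i (ι i ρ) x = L W φ i (ι i ρ) w := by
      intro i w
      obtain ⟨ψ, hψ⟩ := hE.extend (L X y i ∘ₗ ι i)
        (LinearMap.applyₗ w ∘ₗ L W φ i ∘ₗ ι i) (by
          intro ρ hρ
          change L W φ i (ι i ρ) w = 0
          rw [hrel i _ hρ, LinearMap.zero_apply])
      have := hfin i
      obtain ⟨x, hx⟩ := hE.refl (X.M i) ψ
      refine ⟨x, fun ρ => ?_⟩
      rw [← hx]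
      exact hψ ρ
    choose u hu using hexu
    have hu' : ∀ i w d, L X y i d (u i w) = L W φ i d w := by
      intro i w d
      obtain ⟨ρ, hρ⟩ := hsurj i (L X y i d)
      have h1 : L W φ i (d - ι i ρ) = 0 := hrel i _ (by rw [map_sub, hρ, sub_self])
      rw [map_sub, sub_eq_zero] at h1
      rw [h1, ← hρ, hu]
    have hul : ∀ i t w (l : Λ), y (sing R m X i t (l • u i w)) = φ (sing R m W i t (l • w)) := by
      intro i t w l
      have := hu' i w (Pi.single (Sum.inl t) l)
      rw [hL, hL, gmap_single, gmap_single] at this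
      exact this
    have hu1 : ∀ i t w, y (sing R m X i t (u i w)) = φ (sing R m W i t w) := by
      intro i t w
      have := hul i t w 1
      rwa [one_smul, one_smul] at this
    have hua : ∀ i j (a : i ⟶ j) t w, y (sing R m X j t (X.h a (u i w))) =
        φ (sing R m W j t (W.h a w)) := by
      intro i j a t w
      have := hu' i w (Pi.single (Sum.inr ⟨⟨j, a⟩, t⟩) 1)
      rw [hL, hL, gmap_single, gmap_single, one_smul, one_smul] at this
      exact this
    have hsep : ∀ i (x x' : X.M i), (∀ t, y (sing R m X i t x) = y (sing R m X i t x')) →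
        x = x' := by
      intro i x x' h
      by_contra hne
      obtain ⟨f, hf⟩ := hE.cog (X.M i) (x - x') (sub_ne_zero.2 hne)
      apply hf
      obtain ⟨ρ, rfl⟩ := hsurj i f
      rw [map_sub, hι, hι, sub_eq_zero]
      simp only [h]
    let U : RepHom W X :=
      { app := fun i =>
          { toFun := u i
            map_add' := fun w w' => by
              apply hsep
              intro t
              simp only [map_add, hu1]
            map_smul' := fun l w => by
              apply hsep
              intro t
              rw [hu1, RingHom.id_apply, hul] }
        comm := fun {i j} a => by
          apply LinearMap.ext
          intro w
          apply hsep
          intro t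
          exact (hua i j a t w).trans (hu1 j t _).symm }
    refine ⟨U, fun w => ?_⟩
    have : y ∘ₗ tmap R m U = φ := by
      apply tup_hom_ext
      intro i t w
      rw [LinearMap.comp_apply, sing_nat]
      exact hu1 i t w
    exact LinearMap.congr_fun this w

end copres

end ARMono

/-! ## Part G: paths, and the weakly initial solutions -/

set_option linter.unusedVariables false
set_option linter.unusedSectionVars false
set_option linter.style.haveILetI false

namespace ARMono
open QuivRep CategoryTheory

section paths
variable {V : Type} [Quiver.{1} V]

theorem arrow_wf [Finite V] (hac : IsAcyclic V) :
    WellFounded (fun k i : V => Nonempty (k ⟶ i)) := by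
  let lt : V → V → Prop := fun k i => ∃ p : Quiver.Path k i, 0 < p.length
  have h1 : IsTrans V lt := ⟨fun a b c ⟨p, hp⟩ ⟨q, hq⟩ =>
    ⟨p.comp q, by rw [Quiver.Path.length_comp]; omega⟩⟩
  have h2 : Std.Irrefl lt := ⟨fun a ⟨p, hp⟩ => by
    rw [hac a p] at hp
    simp at hp⟩
  refine Subrelation.wf (r := lt) ?_ (Finite.wellFounded_of_trans_of_irrefl lt)
  rintro k i ⟨b⟩
  exact ⟨b.toPath, by simp⟩

def pathCode {j : V} : {i : V} → Quiver.Path j i → Option (Σ b : InA i, Quiver.Path j b.1)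
  | _, .nil => none
  | _, .cons p b => some ⟨⟨_, b⟩, p⟩

theorem pathCode_inj {j i : V} : Function.Injective (pathCode (j := j) (i := i)) := by
  intro p q h
  cases p with
  | nil =>
    cases q with
    | nil => rfl
    | cons q b => simp [pathCode] at h
  | cons p b =>
    cases q with
    | nil => simp [pathCode] at h
    | cons q b' =>
      simp only [pathCode, Option.some.injEq, Sigma.mk.injEq] at h
      obtain ⟨h1, h2⟩ := h
      obtain ⟨h1, h3⟩ := h1
      subst h1
      rw [eq_of_heq h3, eq_of_heq h2]

theorem path_finite [Fintype V] [∀ i j : V, Fintype (i ⟶ j)] (hac : IsAcyclic V) (j i : V) :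
    Finite (Quiver.Path j i) := by
  induction i using (arrow_wf hac).induction with
  | _ i ih =>
    have h : ∀ b : InA i, Finite (Quiver.Path j b.1) := fun b => ih b.1 ⟨b.2⟩
    exact Finite.of_injective _ (pathCode_inj (j := j) (i := i))

variable {Λ : Type} [Ring Λ]

/-- action of paths -/
def hp (X : Repn Λ V) {i : V} : {j : V} → Quiver.Path i j → (X.M i →ₗ[Λ] X.M j)
  | _, .nil => LinearMap.id
  | _, .cons p b => (X.h b).comp (hp X p)

theorem hp_cons (X : Repn Λ V) {i j k : V} (p : Quiver.Path i j) (b : j ⟶ k) (x : X.M i) :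
    hp X (p.cons b) x = X.h b (hp X p x) := rfl

theorem hp_nil (X : Repn Λ V) {i : V} (x : X.M i) : hp X (Quiver.Path.nil : Quiver.Path i i) x = x :=
  rfl

theorem hp_comp (X : Repn Λ V) {i j k : V} (p : Quiver.Path i j) (q : Quiver.Path j k) (x : X.M i) :
    hp X (p.comp q) x = hp X q (hp X p x) := by
  induction q with
  | nil => rfl
  | cons q b ih =>
    rw [Quiver.Path.comp_cons, hp_cons, ih, hp_cons]

theorem hp_arrow (X : Repn Λ V) {i j k : V} (a : i ⟶ j) (q : Quiver.Path j k) (x : X.M i) :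
    hp X (a.toPath.comp q) x = hp X q (X.h a x) := hp_comp X _ _ _

theorem hp_nat {X Y : Repn Λ V} (u : RepHom X Y) {i j : V} (p : Quiver.Path i j) (x : X.M i) :
    hp Y p (u.app i x) = u.app j (hp X p x) := by
  induction p with
  | nil => rfl
  | cons p b ih => rw [hp_cons, ih, hp_cons, comm_apply]

end paths

/-- a small copy of a finite type -/
abbrev Sml (α : Type 1) [Finite α] : Type := Fin (Nat.card α)

noncomputable abbrev toS {α : Type 1} [Finite α] : α ≃ Sml α := Finite.equivFin α

section free
variable {R : Type} [CommRing R] {Λ : Type} [Ring Λ] [Algebra R Λ]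
  {V : Type} [Quiver.{1} V] [Fintype V] [∀ i j : V, Fintype (i ⟶ j)]
  [∀ i j : V, Finite (Quiver.Path i j)]

abbrev PI (r : V → ℕ) (i : V) := Σ j : V, Quiver.Path j i × Fin (r j)

def PI.cons {r : V → ℕ} {i k : V} (a : i ⟶ k) (q : PI r i) : PI r k := ⟨q.1, q.2.1.cons a, q.2.2⟩

/-- the free representation -/
noncomputable def freeR (Λ : Type) [Ring Λ] (r : V → ℕ) : Repn Λ V where
  M i := Sml (PI r i) →₀ Λ
  h a := Finsupp.lmapDomain Λ Λ (fun q => toS (PI.cons a (toS.symm q)))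

noncomputable def freeGen (r : V → ℕ) : Tup r (freeR (V := V) Λ r) := fun j t =>
  Finsupp.single (toS (⟨j, Quiver.Path.nil, t⟩ : PI r j)) 1

theorem freeR_fg (r : V → ℕ) : (freeR (V := V) Λ r).FG := fun i =>
  inferInstanceAs (Module.Finite Λ (Sml (PI r i) →₀ Λ))

theorem freeR_univ (r : V → ℕ) (W : Repn Λ V) (x : Tup r W) :
    ∃ u : RepHom (freeR Λ r) W, tmap R r u (freeGen r) = x := by
  let ev : ∀ i, PI r i → W.M i := fun i q => hp W q.2.1 (x q.1 q.2.2)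
  let u : ∀ i, (freeR Λ r).M i →ₗ[Λ] W.M i := fun i =>
    Finsupp.linearCombination Λ (fun q => ev i (toS.symm q))
  let fs : ∀ i, Sml (PI r i) → Λ → (freeR Λ r).M i := fun i q l =>
    (Finsupp.single q l : Sml (PI r i) →₀ Λ)
  have hu : ∀ i q l, u i (fs i q l) = l • ev i (toS.symm q) := fun i q l =>
    Finsupp.linearCombination_single Λ l q
  have hfs : ∀ {i k : V} (a : i ⟶ k) q l,
      (freeR Λ r).h a (fs i q l) = fs k (toS (PI.cons a (toS.symm q))) l := fun a q l =>
    Finsupp.mapDomain_single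
  refine ⟨⟨u, fun {i k} a => ?_⟩, ?_⟩
  · apply Finsupp.lhom_ext
    intro q l
    change W.h a (u i (fs i q l)) = u k ((freeR Λ r).h a (fs i q l))
    rw [hfs, hu, hu, map_smul, Equiv.symm_apply_apply]
    rfl
  · funext j t
    refine (hu j _ 1).trans ?_
    rw [one_smul, Equiv.symm_apply_apply]
    rfl

structure Good {r m : V → ℕ} (δ : NT R Λ V r m)
    (N : ∀ i, Submodule Λ ((freeR (V := V) Λ r).M i)) : Prop where
  stab : ∀ {i j : V} (a : i ⟶ j), ∀ x ∈ N i, (freeR Λ r).h a x ∈ N j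
  rel : ∀ j s, δ.d _ (freeGen r) j s ∈ N j
  mono : ∀ i (x : (a : Σ j : V, j ⟶ i) → (freeR Λ r).M a.1), (freeR Λ r).inMap i x ∈ N i →
    ∀ a, x a ∈ N a.1

theorem exists_init {r m : V → ℕ} (δ : NT R Λ V r m) :
    ∃ (S : Repn Λ V) (hS : S.InMono) (s : Tup r S), δ.d S s = 0 ∧
      ∀ (W : Repn Λ V), W.InMono → ∀ (x : Tup r W), δ.d W x = 0 →
        ∃ u : RepHom S W, tmap R r u s = x := by
  let N : ∀ i, Submodule Λ ((freeR (V := V) Λ r).M i) := fun i =>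
    sInf {K | ∃ N', Good δ N' ∧ N' i = K}
  have hN : ∀ i x, x ∈ N i ↔ ∀ N', Good δ N' → x ∈ N' i := by
    intro i x
    rw [Submodule.mem_sInf]
    constructor
    · intro h N' hN'
      exact h _ ⟨N', hN', rfl⟩
    · rintro h _ ⟨N', hN', rfl⟩
      exact h N' hN'
  have hg : Good δ N := by
    refine ⟨fun a x hx => ?_, fun j s => ?_, fun i x hx a => ?_⟩
    · rw [hN] at hx ⊢
      exact fun N' h => h.stab a x (hx N' h)
    · rw [hN]
      exact fun N' h => h.rel j s
    · rw [hN] at hx ⊢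
      exact fun N' h => h.mono i x (hx N' h) a
  have hst : ∀ {i j : V} (a : i ⟶ j), ∀ x ∈ N i, (freeR Λ r).h a x ∈ N j := hg.stab
  let π := quotR.mk (freeR Λ r) N hst
  refine ⟨quotR (freeR Λ r) N hst, ⟨fg_of_surj π (quotR.mk_surj _ N hst) (freeR_fg r), ?_⟩,
    tmap R r π (freeGen r), ?_, ?_⟩
  · intro i
    rw [injective_iff_map_eq_zero]
    intro x hx
    choose y hy using fun a : (Σ j : V, j ⟶ i) => quotR.mk_surj _ N hst a.1 (x a)
    have h1 : x = fun a => π.app a.1 (y a) := funext fun a => (hy a).symm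
    rw [h1, ← inMap_nat] at hx
    have h2 := hg.mono i y ((quotR.mk_zero _ N hst i _).1 hx)
    funext a
    rw [← hy a]
    exact (quotR.mk_zero _ N hst a.1 _).2 (h2 a)
  · rw [δ.nat]
    funext j s
    exact (quotR.mk_zero _ N hst j _).2 (hg.rel j s)
  · intro W hW x hx
    obtain ⟨u, hu⟩ := freeR_univ (R := R) r W x
    have hk : Good δ (fun i => LinearMap.ker (u.app i)) := by
      refine ⟨fun a x hx => ?_, fun j s => ?_, fun i x hx a => ?_⟩
      · rw [LinearMap.mem_ker] at hx ⊢
        rw [← comm_apply, hx, map_zero]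
      · rw [LinearMap.mem_ker]
        have := δ.nat u (freeGen r)
        rw [hu, hx] at this
        exact (congrFun (congrFun this j) s).symm
      · rw [LinearMap.mem_ker] at hx ⊢
        rw [inMap_nat] at hx
        have h3 := (injective_iff_map_eq_zero _).1 (hW.2 i) _ hx
        exact congrFun h3 a
    obtain ⟨v, hv⟩ := quotR.desc N hst u (fun i x hx => (hN i x).1 hx _ hk)
    refine ⟨v, ?_⟩
    rw [← tmap_comp, hv, hu]

end free

end ARMono

/-! ## Part J: injective cogenerator, coinduced representation, approximations -/

set_option linter.unusedVariables false
set_option linter.unusedSectionVars false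
set_option linter.style.haveILetI false

namespace ARMono
open QuivRep CategoryTheory

section dl
variable (R : Type) [CommRing R] (Λ : Type) [Ring Λ] [Algebra R Λ] (E : Type) [AddCommGroup E]
  [Module R E]

/-- the dual of the algebra, as a left module -/
structure DL where
  f : Λ →ₗ[R] E

variable {R Λ E}

theorem DL.ext' {x y : DL R Λ E} (h : ∀ l, x.f l = y.f l) : x = y := by
  cases x
  cases y
  congr
  exact LinearMap.ext h

def DL.equiv : DL R Λ E ≃ (Λ →ₗ[R] E) := ⟨DL.f, DL.mk, fun _ => rfl, fun _ => rfl⟩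

instance : AddCommGroup (DL R Λ E) := DL.equiv.addCommGroup

theorem DL.add_f (x y : DL R Λ E) (l : Λ) : (x + y).f l = x.f l + y.f l := rfl
theorem DL.zero_f (l : Λ) : (0 : DL R Λ E).f l = 0 := rfl

instance : Module Λ (DL R Λ E) where
  smul m x := ⟨x.f ∘ₗ LinearMap.mulRight R m⟩
  one_smul x := DL.ext' fun l => congrArg x.f (mul_one l)
  mul_smul m n x := DL.ext' fun l => congrArg x.f (mul_assoc l m n).symm
  smul_zero m := DL.ext' fun l => rfl
  smul_add m x y := DL.ext' fun l => rfl
  add_smul m n x := DL.ext' fun l => (congrArg x.f (mul_add l m n)).trans (map_add _ _ _)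
  zero_smul x := DL.ext' fun l => (congrArg x.f (mul_zero l)).trans (map_zero _)

theorem DL.smul_f (m : Λ) (x : DL R Λ E) (l : Λ) : (m • x).f l = x.f (l * m) := rfl

theorem DL.finite [IsNoetherianRing R] [Module.Finite R Λ] (hE : IsDual R E) :
    Module.Finite Λ (DL R Λ E) := by
  have := hE.fin
  have := finite_hom R Λ E
  obtain ⟨n, s, hs⟩ := Module.Finite.exists_fin (R := R) (M := Λ →ₗ[R] E)
  refine ⟨Submodule.fg_def.2 ⟨Set.range fun k => (⟨s k⟩ : DL R Λ E), Set.finite_range _, ?_⟩⟩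
  rw [eq_top_iff]
  rintro ⟨g⟩ -
  have hg : g ∈ Submodule.span R (Set.range s) := by rw [hs]; trivial
  obtain ⟨c, rfl⟩ := (Submodule.mem_span_range_iff_exists_fun R).1 hg
  have h1 : (⟨∑ k, c k • s k⟩ : DL R Λ E) = ∑ k, algebraMap R Λ (c k) • (⟨s k⟩ : DL R Λ E) := by
    have h2 : ∀ (t : Finset (Fin n)) l, (∑ k ∈ t, algebraMap R Λ (c k) • (⟨s k⟩ : DL R Λ E)).f l =
        ∑ k ∈ t, c k • s k l := by
      classical
      intro t l
      induction t using Finset.induction_on with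
      | empty => rfl
      | insert a t ha ih =>
        rw [Finset.sum_insert ha, Finset.sum_insert ha, DL.add_f, ih, DL.smul_f,
          ← Algebra.commutes, ← Algebra.smul_def, map_smul]
    apply DL.ext'
    intro l
    rw [h2]
    simp
  rw [h1]
  exact Submodule.sum_mem _ fun k _ => Submodule.smul_mem _ _ (Submodule.subset_span ⟨k, rfl⟩)

variable {V : Type} [Quiver.{1} V]

theorem DL.hom_add {X : Repn Λ V} {i : V} (ψ : X.M i →ₗ[R] E) : ∃ w : X.M i →ₗ[Λ] DL R Λ E,
    ∀ x l, (w x).f l = ψ (l • x) :=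
  ⟨{ toFun := fun x => ⟨
        { toFun := fun l => ψ (l • x)
          map_add' := fun l l' => by rw [add_smul, map_add]
          map_smul' := fun r l => by rw [smul_assoc, map_smul, RingHom.id_apply] }⟩
     map_add' := fun x y => DL.ext' fun l => by
        rw [DL.add_f]
        change ψ (l • (x + y)) = ψ (l • x) + ψ (l • y)
        rw [smul_add, map_add]
     map_smul' := fun m x => DL.ext' fun l => by
        change ψ (l • m • x) = ψ ((l * m) • x)
        rw [mul_smul] }, fun x l => rfl⟩

theorem DL.extend (hE : IsDual R E) {P : Type 1} [AddCommGroup P] [Module Λ P] {X : Repn Λ V}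
    {i : V} (ι : P →ₗ[Λ] X.M i) (hι : Function.Injective ι) (g : P →ₗ[Λ] DL R Λ E) :
    ∃ w : X.M i →ₗ[Λ] DL R Λ E, ∀ t, w (ι t) = g t := by
  let e := LinearEquiv.ofInjective ι hι
  have he : ∀ t, e.symm (e t) = t := fun t => e.symm_apply_apply t
  let K : Submodule R (X.M i) := (LinearMap.range ι).restrictScalars R
  let φ : K →ₗ[R] E :=
    { toFun := fun k => (g (e.symm k)).f 1
      map_add' := fun k k' => by
        have : e.symm (k + k' : K) = e.symm k + e.symm k' := map_add e.symm k k'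
        rw [this, map_add, DL.add_f]
      map_smul' := fun r k => by
        have : e.symm (r • k : K) = algebraMap R Λ r • e.symm k :=
          map_smul e.symm (algebraMap R Λ r) k
        rw [this, map_smul, DL.smul_f, one_mul, RingHom.id_apply, ← map_smul,
          Algebra.algebraMap_eq_smul_one] }
  obtain ⟨ψ, hψ⟩ := hE.extend K.subtype φ (fun x hx => by
    have : x = 0 := Subtype.ext hx
    rw [this, map_zero])
  obtain ⟨w, hw⟩ := DL.hom_add ψ
  refine ⟨w, fun t => DL.ext' fun l => ?_⟩
  rw [hw, ← map_smul]
  have h1 : φ (e (l • t)) = (g (e.symm (e (l • t)))).f 1 := rfl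
  refine (hψ (e (l • t))).trans (h1.trans ?_)
  rw [he, map_smul, DL.smul_f, one_mul]

theorem DL.embed [IsNoetherianRing R] [Module.Finite R Λ] (hE : IsDual R E) (X : Repn Λ V)
    (hX : X.FG) (i : V) : ∃ (q : ℕ) (ε : Fin q → (X.M i →ₗ[Λ] DL R Λ E)),
      ∀ x, (∀ s, ε s x = 0) → x = 0 := by
  have := rfinite (R := R) hX i
  have := hE.fin
  have := finite_hom R (X.M i) E
  obtain ⟨q, y, hy⟩ := Module.Finite.exists_fin (R := R) (M := X.M i →ₗ[R] E)
  choose ε hε using fun s => DL.hom_add (y s)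
  refine ⟨q, ε, fun x hx => ?_⟩
  by_contra hne
  obtain ⟨f, hf⟩ := hE.cog (X.M i) x hne
  apply hf
  have hg : f ∈ Submodule.span R (Set.range y) := by rw [hy]; trivial
  obtain ⟨c, rfl⟩ := (Submodule.mem_span_range_iff_exists_fun R).1 hg
  rw [LinearMap.sum_apply]
  refine Finset.sum_eq_zero fun s _ => ?_
  have h1 := hε s x 1
  rw [hx, one_smul, DL.zero_f] at h1
  rw [LinearMap.smul_apply, ← h1, smul_zero]

end dl

section coind
variable {R : Type} [CommRing R] {Λ : Type} [Ring Λ] [Algebra R Λ] {E : Type} [AddCommGroup E]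
  [Module R E]
  {V : Type} [Quiver.{1} V] [Fintype V] [∀ i j : V, Fintype (i ⟶ j)]
  [∀ i j : V, Finite (Quiver.Path i j)]

abbrev PO (r : V → ℕ) (i : V) := Σ j : V, Quiver.Path i j × Fin (r j)

def PO.cons {r : V → ℕ} {i k : V} (a : i ⟶ k) (q : PO r k) : PO r i :=
  ⟨q.1, a.toPath.comp q.2.1, q.2.2⟩

/-- the coinduced representation -/
noncomputable def coR (R : Type) [CommRing R] (Λ : Type) [Ring Λ] [Algebra R Λ] (E : Type)
    [AddCommGroup E] [Module R E] (r : V → ℕ) : Repn Λ V where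
  M i := Sml (PO r i) → DL R Λ E
  h a := LinearMap.funLeft Λ (DL R Λ E) (fun q => toS (PO.cons a (toS.symm q)))

/-- coordinates -/
noncomputable def coc {r : V → ℕ} {i : V} (q : PO r i) : (coR R Λ E r).M i →ₗ[Λ] DL R Λ E :=
  LinearMap.proj (R := Λ) (φ := fun _ : Sml (PO r i) => DL R Λ E) (toS q)

theorem coc_h {r : V → ℕ} {i k : V} (a : i ⟶ k) (q : PO r k) (x : (coR R Λ E r).M i) :
    coc q ((coR R Λ E r).h a x) = coc (PO.cons a q) x := by
  change x (toS (PO.cons a (toS.symm (toS q)))) = x (toS (PO.cons a q))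
  rw [Equiv.symm_apply_apply]

theorem coc_ext {r : V → ℕ} {i : V} {x y : (coR R Λ E r).M i} (h : ∀ q, coc q x = coc q y) :
    x = y := by
  funext s
  have := h (toS.symm s)
  change x (toS (toS.symm s)) = y (toS (toS.symm s)) at this
  rwa [Equiv.apply_symm_apply] at this

theorem coc_lift {r : V → ℕ} {i : V} {X : Repn Λ V} (w : PO r i → (X.M i →ₗ[Λ] DL R Λ E)) :
    ∃ u : X.M i →ₗ[Λ] (coR R Λ E r).M i, ∀ q x, coc q (u x) = w q x := by
  refine ⟨LinearMap.pi (φ := fun _ : Sml (PO r i) => DL R Λ E) (fun s => w (toS.symm s)),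
    fun q x => ?_⟩
  change w (toS.symm (toS q)) x = w q x
  rw [Equiv.symm_apply_apply]

theorem coR_fg [IsNoetherianRing R] [Module.Finite R Λ] (hE : IsDual R E) (r : V → ℕ) :
    (coR (V := V) R Λ E r).FG := fun i => by
  have := DL.finite (Λ := Λ) hE
  exact inferInstanceAs (Module.Finite Λ (Sml (PO r i) → DL R Λ E))

noncomputable def coEv (r : V → ℕ) : Tup r (coR (V := V) R Λ E r) →ₗ[R] E where
  toFun c := ∑ j, ∑ t, (coc (⟨j, Quiver.Path.nil, t⟩ : PO r j) (c j t)).f 1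
  map_add' c c' := by
    simp only [Pi.add_apply, map_add, DL.add_f, Finset.sum_add_distrib]
  map_smul' ρ c := by
    simp only [Pi.smul_apply, RingHom.id_apply, Finset.smul_sum]
    refine Finset.sum_congr rfl fun j _ => Finset.sum_congr rfl fun t _ => ?_
    rw [rsmul_def, map_smul, DL.smul_f, one_mul, Algebra.algebraMap_eq_smul_one, map_smul]

def wR (R : Type) [CommRing R] {Λ : Type} [Ring Λ] [Algebra R Λ] (X : Repn Λ V) {i j : V}
    (f : X.M i →ₗ[Λ] X.M j) : X.M i →ₗ[R] X.M j where
  toFun x := f x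
  map_add' := map_add _
  map_smul' r x := map_rsmul _ r x

theorem coR_univ (r : V → ℕ) (W : Repn Λ V) (φ : Tup r W →ₗ[R] E) :
    ∃ u : RepHom W (coR R Λ E r), ∀ w, coEv r (tmap R r u w) = φ w := by
  have h1 : ∀ i (q : PO r i), ∃ w : W.M i →ₗ[Λ] DL R Λ E,
      ∀ x l, (w x).f l = φ (sing R r W q.1 q.2.2 (hp W q.2.1 (l • x))) := fun i q =>
    DL.hom_add (φ ∘ₗ sing R r W q.1 q.2.2 ∘ₗ wR R W (hp W q.2.1))
  choose w hw using h1
  choose u hu using fun i => coc_lift (R := R) (E := E) (X := W) (w i)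
  refine ⟨⟨u, fun {i k} a => ?_⟩, ?_⟩
  · apply LinearMap.ext
    intro x
    apply coc_ext
    intro q
    rw [LinearMap.comp_apply, LinearMap.comp_apply, coc_h, hu, hu]
    apply DL.ext'
    intro l
    rw [hw, hw, ← map_smul]
    change φ (sing R r W q.1 q.2.2 (hp W (a.toPath.comp q.2.1) (l • x))) = _
    rw [hp_arrow]
  · intro x
    conv_rhs => rw [← sum_sing (R := R) r W x]
    simp only [map_sum]
    refine Finset.sum_congr rfl fun j _ => Finset.sum_congr rfl fun t _ => ?_
    rw [tmap_apply, hu, hw, one_smul]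
    rfl

theorem exists_term0 [IsNoetherianRing R] [IsNoetherianRing Λ] [Module.Finite R Λ] (hE : IsDual R E)
    {n r : V → ℕ} (δ : NT R Λ V n r) :
    ∃ (T : Repn Λ V) (hT : T.FG) (ψ : Tup r T →ₗ[R] E), (∀ x, ψ (δ.d T x) = 0) ∧
      ∀ (W : Repn Λ V) (φ : Tup r W →ₗ[R] E), (∀ x, φ (δ.d W x) = 0) →
        ∃ u : RepHom W T, ∀ w, ψ (tmap R r u w) = φ w := by
  let C := coR (V := V) R Λ E r
  let N : ∀ i, Submodule Λ (C.M i) := fun i =>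
    { carrier := {x | ∀ j (p : Quiver.Path i j) (t : Fin (n j)) (l : Λ),
        coEv r (δ.d C (sing R n C j t (hp C p (l • x)))) = 0}
      zero_mem' := fun j p t l => by simp
      add_mem' := fun {x y} hx hy j p t l => by
        rw [smul_add, map_add, map_add, map_add, map_add, hx, hy, add_zero]
      smul_mem' := fun m x hx j p t l => by
        rw [smul_smul]
        exact hx j p t _ }
  have hst : ∀ {i j : V} (a : i ⟶ j), ∀ x ∈ N i, C.h a x ∈ N j := by
    intro i k a x hx j p t l
    rw [← map_smul, ← hp_arrow]
    exact hx j _ t l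
  let ι := subR.incl C N hst
  refine ⟨subR C N hst, fg_of_inj ι (subR.incl_inj C N hst) (coR_fg hE r),
    coEv r ∘ₗ tmap R r ι, fun x => ?_, fun W φ hφ => ?_⟩
  · rw [LinearMap.comp_apply, ← δ.nat, ← sum_sing (R := R) n C (tmap R n ι x)]
    simp only [map_sum]
    refine Finset.sum_eq_zero fun j _ => Finset.sum_eq_zero fun t _ => ?_
    have h1 := subR.incl_mem C N hst j (x j t) j Quiver.Path.nil t 1
    rw [one_smul] at h1
    exact h1
  · obtain ⟨u, hu⟩ := coR_univ r W φ
    obtain ⟨v, hv⟩ := subR.lift N hst u (fun i x j p t l => by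
      change coEv r (δ.d C (sing R n C j t (hp C p (l • u.app i x)))) = 0
      rw [← map_smul, hp_nat, ← sing_nat, δ.nat, hu, hφ])
    refine ⟨v, fun w => ?_⟩
    rw [LinearMap.comp_apply, ← tmap_comp, hv, hu]

end coind

end ARMono

/-! ## Part K: right approximations by monomorphic representations -/

set_option linter.unusedVariables false
set_option linter.unusedSectionVars false
set_option linter.style.haveILetI false

namespace ARMono
open QuivRep CategoryTheory

section mimo
variable {Λ : Type} [Ring Λ] {V : Type} [Quiver.{1} V] [Fintype V] [∀ i j : V, Fintype (i ⟶ j)]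
  [∀ i j : V, Finite (Quiver.Path i j)]

abbrev PM (q : V → ℕ) (i : V) := Σ j : V, Quiver.Path j i × (Σ a : InA j, Fin (q a.1))

variable {D : Type} [AddCommGroup D] [Module Λ D] {M : Repn Λ V} {q : V → ℕ}

abbrev MiM (M : Repn Λ V) (q : V → ℕ) (D : Type) (i : V) : Type := M.M i × (Sml (PM q i) → D)

noncomputable def miCoord (ε : ∀ k, Fin (q k) → (M.M k →ₗ[Λ] D)) {j : V} (s : Σ a : InA j, Fin (q a.1)) :
    {i : V} → Quiver.Path j i → (((a : InA i) → MiM M q D a.1) →ₗ[Λ] D)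
  | _, .nil => ε s.1.1 s.2 ∘ₗ LinearMap.fst Λ _ _ ∘ₗ LinearMap.proj s.1
  | _, .cons (b := k) p b =>
    LinearMap.proj (R := Λ) (φ := fun _ : Sml (PM q k) => D) (toS ⟨j, p, s⟩) ∘ₗ
      LinearMap.snd Λ _ _ ∘ₗ LinearMap.proj (⟨k, b⟩ : InA _)

noncomputable def miE (ε : ∀ k, Fin (q k) → (M.M k →ₗ[Λ] D)) (i : V) :
    ((a : InA i) → MiM M q D a.1) →ₗ[Λ] (Sml (PM q i) → D) :=
  LinearMap.pi fun s => miCoord ε (toS.symm s).2.2 (toS.symm s).2.1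

theorem miE_apply (ε : ∀ k, Fin (q k) → (M.M k →ₗ[Λ] D)) (i : V)
    (t : (a : InA i) → MiM M q D a.1) (c : PM q i) :
    miE ε i t (toS c) = miCoord ε c.2.2 c.2.1 t := by
  change miCoord ε (toS.symm (toS c)).2.2 (toS.symm (toS c)).2.1 t = _
  rw [Equiv.symm_apply_apply]

open Classical in
noncomputable def mimo (ε : ∀ k, Fin (q k) → (M.M k →ₗ[Λ] D)) : Repn Λ V where
  M i := MiM M q D i
  h {k i} b := LinearMap.prod (M.h b ∘ₗ LinearMap.fst Λ _ _)
    (miE ε i ∘ₗ LinearMap.single Λ (fun a : InA i => MiM M q D a.1) (⟨k, b⟩ : InA i))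

theorem mimo_inMap (ε : ∀ k, Fin (q k) → (M.M k →ₗ[Λ] D)) (i : V)
    (t : (a : InA i) → MiM M q D a.1) :
    ((mimo ε).inMap i t : MiM M q D i).2 = miE ε i t := by
  classical
  refine (congrArg (Prod.snd (α := M.M i) (β := Sml (PM q i) → D))
    (inMap_apply (mimo ε) i t)).trans ?_
  have h1 : t = ∑ a, Pi.single a (t a) := (Finset.univ_sum_single t).symm
  have h2 : ∀ y : InA i → MiM M q D i, (∑ a, y a).2 = ∑ a, (y a).2 := fun y => Prod.snd_sum
  refine (h2 _).trans ?_
  conv_rhs => rw [h1, map_sum]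
  refine Finset.sum_congr rfl fun a _ => ?_
  change miE ε i (Pi.single _ _) = _
  congr!

theorem mimo_mono (ε : ∀ k, Fin (q k) → (M.M k →ₗ[Λ] D))
    (hε : ∀ k x, (∀ s, ε k s x = 0) → x = 0) : (mimo ε).IsMonoRep := by
  intro i
  rw [injective_iff_map_eq_zero]
  intro t ht
  have h1 : miE ε i t = 0 := (mimo_inMap ε i t).symm.trans
    (congrArg (Prod.snd (α := M.M i) (β := Sml (PM q i) → D)) ht)
  have h2 : ∀ c : PM q i, miCoord ε c.2.2 c.2.1 t = 0 := fun c =>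
    (miE_apply ε i t c).symm.trans (congrFun h1 (toS c))
  funext a
  apply Prod.ext
  · apply hε
    intro s
    exact h2 ⟨i, Quiver.Path.nil, ⟨a, s⟩⟩
  · funext c
    obtain ⟨c, rfl⟩ := toS.surjective c
    exact h2 ⟨c.1, c.2.1.cons a.2, c.2.2⟩

theorem mimo_fg (ε : ∀ k, Fin (q k) → (M.M k →ₗ[Λ] D)) (hM : M.FG) (hD : Module.Finite Λ D) :
    (mimo ε).FG := fun i => by
  have := hM i
  exact inferInstanceAs (Module.Finite Λ (M.M i × (Sml (PM q i) → D)))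

noncomputable def mimoFst (ε : ∀ k, Fin (q k) → (M.M k →ₗ[Λ] D)) : RepHom (mimo ε) M where
  app i := LinearMap.fst Λ (M.M i) (Sml (PM q i) → D)
  comm a := rfl

noncomputable def miW (ε : ∀ k, Fin (q k) → (M.M k →ₗ[Λ] D)) {X : Repn Λ V} (f : RepHom X M)
    (ext : ∀ i, (((a : InA i) → X.M a.1) →ₗ[Λ] D) → (X.M i →ₗ[Λ] D))
    {j : V} (s : Σ a : InA j, Fin (q a.1)) : {i : V} → Quiver.Path j i → (X.M i →ₗ[Λ] D)
  | _, .nil => ext j (ε s.1.1 s.2 ∘ₗ f.app s.1.1 ∘ₗ LinearMap.proj s.1)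
  | _, .cons (b := k) (c := i) p b => ext i (miW ε f ext s p ∘ₗ LinearMap.proj (⟨k, b⟩ : InA i))

theorem mimo_lift (ε : ∀ k, Fin (q k) → (M.M k →ₗ[Λ] D)) {X : Repn Λ V} (f : RepHom X M)
    (hext : ∀ i (g : ((a : InA i) → X.M a.1) →ₗ[Λ] D), ∃ w : X.M i →ₗ[Λ] D,
      ∀ t, w (X.inMap i t) = g t) : ∃ v : RepHom X (mimo ε), (mimoFst ε).comp v = f := by
  classical
  choose ext hext using hext
  let W : ∀ i, X.M i →ₗ[Λ] (Sml (PM q i) → D) := fun i =>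
    LinearMap.pi fun c => miW ε f ext (toS.symm c).2.2 (toS.symm c).2.1
  have hW : ∀ i x (c : PM q i), W i x (toS c) = miW ε f ext c.2.2 c.2.1 x := by
    intro i x c
    change miW ε f ext (toS.symm (toS c)).2.2 (toS.symm (toS c)).2.1 x = _
    rw [Equiv.symm_apply_apply]
  let v : ∀ i, X.M i →ₗ[Λ] MiM M q D i := fun i => LinearMap.prod (f.app i) (W i)
  have key : ∀ i (t : (a : InA i) → X.M a.1),
      miE ε i (fun a => v a.1 (t a)) = W i (X.inMap i t) := by
    intro i t
    funext c
    obtain ⟨c, rfl⟩ := toS.surjective c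
    rw [miE_apply, hW]
    obtain ⟨j, p, s⟩ := c
    cases p with
    | nil => exact (hext _ (ε s.1.1 s.2 ∘ₗ f.app s.1.1 ∘ₗ LinearMap.proj s.1) t).symm
    | cons p b =>
      refine Eq.trans ?_ (hext _ _ t).symm
      exact hW _ _ ⟨j, p, s⟩
  refine ⟨⟨v, fun {k i} b => ?_⟩, rfl⟩
  apply LinearMap.ext
  intro x
  apply Prod.ext
  · exact comm_apply f b x
  · have h1 := key i (Pi.single (⟨k, b⟩ : InA i) x)
    have h2 : X.inMap i (Pi.single (⟨k, b⟩ : InA i) x) = X.h b x := by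
      rw [inMap_apply, Finset.sum_eq_single (⟨k, b⟩ : InA i)]
      · rw [Pi.single_eq_same]
      · intro a _ ha
        rw [Pi.single_eq_of_ne ha, map_zero]
      · simp
    have h3 : (fun a : InA i => v a.1 ((Pi.single (⟨k, b⟩ : InA i) x : (a : InA i) → X.M a.1) a)) =
        Pi.single (⟨k, b⟩ : InA i) (v k x) := by
      funext a
      exact Pi.apply_single (fun a : InA i => v a.1) (fun a => map_zero _) _ _ _
    rw [h2, h3] at h1
    refine Eq.trans ?_ h1
    change miE ε i (Pi.single _ _) = _
    congr!

end mimo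

section term
variable {R : Type} [CommRing R] {Λ : Type} [Ring Λ] [Algebra R Λ] {E : Type} [AddCommGroup E]
  [Module R E]
  {V : Type} [Quiver.{1} V] [Fintype V] [∀ i j : V, Fintype (i ⟶ j)]
  [∀ i j : V, Finite (Quiver.Path i j)]

theorem exists_term [IsNoetherianRing R] [IsNoetherianRing Λ] [Module.Finite R Λ] (hE : IsDual R E)
    {n r : V → ℕ} (δ : NT R Λ V n r) :
    ∃ (T : Repn Λ V) (hT : T.InMono) (ψ : Tup r T →ₗ[R] E), (∀ x, ψ (δ.d T x) = 0) ∧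
      ∀ (W : Repn Λ V), W.InMono → ∀ (φ : Tup r W →ₗ[R] E), (∀ x, φ (δ.d W x) = 0) →
        ∃ u : RepHom W T, ∀ w, ψ (tmap R r u w) = φ w := by
  obtain ⟨M, hM, ψ, hψ, huniv⟩ := exists_term0 hE δ
  choose q ε hε using DL.embed (R := R) hE M hM
  refine ⟨mimo ε, ⟨mimo_fg ε hM (DL.finite hE), mimo_mono ε hε⟩, ψ ∘ₗ tmap R r (mimoFst ε), ?_, ?_⟩
  · intro x
    rw [LinearMap.comp_apply, ← δ.nat, hψ]
  · intro W hW φ hφ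
    obtain ⟨u, hu⟩ := huniv W φ hφ
    obtain ⟨v, hv⟩ := mimo_lift ε u (fun i g => DL.extend hE _ (hW.2 i) g)
    refine ⟨v, fun w => ?_⟩
    rw [LinearMap.comp_apply, ← tmap_comp, hv, hu]

end term

end ARMono

/-! ## Part H: the almost split sequences -/

set_option linter.unusedVariables false
set_option linter.unusedSectionVars false
set_option linter.style.haveILetI false

namespace ARMono
open QuivRep CategoryTheory

section glue
variable {R : Type} [CommRing R] [IsArtinianRing R] {Λ : Type} [Ring Λ] [Algebra R Λ]
  [Module.Finite R Λ] [IsArtinianRing Λ] [IsNoetherianRing Λ] {E : Type} [AddCommGroup E]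
  [Module R E]
  {V : Type} [Quiver.{1} V] [Fintype V] [∀ i j : V, Fintype (i ⟶ j)]
  [∀ i j : V, Finite (Quiver.Path i j)]

theorem defect_right (hE : IsDual R E) (Z : MObj Λ V) : Nonempty (Defect (mEx (V := V) (Λ := Λ) R) Z) := by
  obtain ⟨n, r, δ, z, hz, huniv⟩ := exists_pres (R := R) Z.1 Z.2.1
  refine ⟨
    { F := fun W => {φ : Tup r W.1 →ₗ[R] E // ∀ x, φ (δ.d W.1 x) = 0}
      act := fun {X Y} u φ => ⟨φ.1 ∘ₗ tmap R r (X := X.1) (Y := Y.1) u, fun x => by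
        rw [LinearMap.comp_apply, ← δ.nat, φ.2]⟩
      act_comp := ?_, defect := ?_, gen := ?_ }⟩
  · intros
    rfl
  · intro X Y W f g h
    have hd := ses_defect hE δ (X := X.1) (Y := Y.1) (W := W.1) (f := f) (g := g) h
    constructor
    · intro hs c
      obtain ⟨y, hy1, hy2⟩ := hd.2 (fun φ hφ => by
        obtain ⟨ψ, hψ⟩ := hs ⟨φ, hφ⟩
        exact ⟨ψ.1, ψ.2, fun x => LinearMap.congr_fun (congrArg Subtype.val hψ) x⟩)
        (tmap R n (X := Z.1) (Y := W.1) c z) (by rw [δ.nat, hz, map_zero])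
      obtain ⟨c', hc'⟩ := (huniv Y.1 y).1 hy2
      refine ⟨c', (huniv W.1 (tmap R n (X := Z.1) (Y := W.1) c z)).2 _ _ ?_⟩
      change tmap R n (X := Y.1) (Y := W.1) g (tmap R n c' z) = _
      rw [hc', hy1]
    · intro hl φ
      obtain ⟨ψ, hψ1, hψ2⟩ := hd.1 (fun w hw => by
        obtain ⟨c, hc⟩ := (huniv W.1 w).1 hw
        obtain ⟨c', hc'⟩ := hl c
        refine ⟨tmap R n (X := Z.1) (Y := Y.1) c' z, ?_, ?_⟩
        · rw [← hc, ← hc']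
          rfl
        · rw [δ.nat, hz, map_zero]) φ.1 φ.2
      exact ⟨⟨ψ, hψ1⟩, Subtype.ext (LinearMap.ext hψ2)⟩
  · obtain ⟨T, hT, ψ, hψ, hu⟩ := exists_term hE δ
    refine ⟨⟨T, hT⟩, ⟨ψ, hψ⟩, fun X φ => ?_⟩
    obtain ⟨u, hu⟩ := hu X.1 X.2 φ.1 φ.2
    exact ⟨u, Subtype.ext (LinearMap.ext hu)⟩

theorem defect_left (hE : IsDual R E) (X : MObj Λ V) :
    Nonempty (Defect (mEx (V := V) (Λ := Λ) R).op (Opposite.op X)) := by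
  obtain ⟨r, m, δ, y, hy, huniv, huniq⟩ := exists_copres hE X.1 X.2.1
  refine ⟨
    { F := fun W => {x : Tup r W.unop.1 // δ.d W.unop.1 x = 0}
      act := fun {A B} u x => ⟨tmap R r (X := B.unop.1) (Y := A.unop.1) u.unop x.1, by
        rw [δ.nat, x.2, map_zero]⟩
      act_comp := ?_, defect := ?_, gen := ?_ }⟩
  · intros
    rfl
  · intro A B W f g h
    have hd := ses_defect hE δ (X := W.unop.1) (Y := B.unop.1) (W := A.unop.1)
      (f := g.unop) (g := f.unop) h
    constructor
    · intro hs c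
      obtain ⟨ψ, hψ1, hψ2⟩ := hd.1 (fun w hw => by
        obtain ⟨x, hx⟩ := hs ⟨w, hw⟩
        exact ⟨x.1, congrArg Subtype.val hx, x.2⟩)
        (y ∘ₗ tmap R m (X := W.unop.1) (Y := X.1) c.unop)
        (fun x => by rw [LinearMap.comp_apply, ← δ.nat, hy])
      obtain ⟨c', hc'⟩ := huniv B.unop.1 ψ hψ1
      refine ⟨Quiver.Hom.op (X := B.unop) (Y := X) c', ?_⟩
      apply Quiver.Hom.unop_inj
      refine huniq W.unop.1 _ _ fun w => ?_
      change y (tmap R m c' (tmap R m (X := W.unop.1) (Y := B.unop.1) g.unop w)) = _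
      rw [hc', hψ2]
      rfl
    · intro hl x
      obtain ⟨b, hb1, hb2⟩ := hd.2 (fun φ hφ => by
        obtain ⟨c, hc⟩ := huniv W.unop.1 φ hφ
        obtain ⟨c', hc'⟩ := hl (Quiver.Hom.op (X := W.unop) (Y := X) c)
        have hc2 : RepHom.comp (X := W.unop.1) (Y := B.unop.1) (Z := X.1) c'.unop g.unop = c :=
          congrArg Quiver.Hom.unop hc'
        refine ⟨y ∘ₗ tmap R m (X := B.unop.1) (Y := X.1) c'.unop, fun b => ?_, fun w => ?_⟩
        · rw [LinearMap.comp_apply, ← δ.nat, hy]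
        · rw [← hc, ← hc2]
          rfl) x.1 x.2
      exact ⟨⟨b, hb2⟩, Subtype.ext hb1⟩
  · obtain ⟨S, hS, s, hs, hu⟩ := exists_init δ
    refine ⟨Opposite.op ⟨S, hS⟩, ⟨s, hs⟩, fun W x => ?_⟩
    obtain ⟨u, hu⟩ := hu W.unop.1 W.unop.2 x.1 x.2
    exact ⟨Quiver.Hom.op (X := (⟨S, hS⟩ : MObj Λ V)) (Y := W.unop) u, Subtype.ext hu⟩

theorem ind_iff (X : MObj Λ V) : Ind X ↔ X.1.Indec := by
  refine and_congr (not_congr ⟨fun h i => ⟨fun x y => ?_⟩, fun h => ?_⟩) Iff.rfl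
  · have hx : ∀ x : X.1.M i, x = 0 := fun x => congrArg (fun t => RepHom.app t i x) h
    rw [hx x, hx y]
  · refine mhom_ext fun i x => ?_
    have := h i
    exact Subsingleton.elim _ _

end glue

theorem main_result
    (V : Type) [Quiver.{1} V] [Fintype V] [∀ i j : V, Fintype (i ⟶ j)]
    (hacyc : IsAcyclic V)
    (R : Type) [CommRing R] [IsArtinianRing R]
    (Λ : Type) [Ring Λ] [Algebra R Λ] [Module.Finite R Λ] :
    (∀ Z : Repn Λ V, Z.InMono → Z.Indec → ¬ ExtProjective Z →
      ∃ (X Y : Repn Λ V) (f : RepHom X Y) (g : RepHom Y Z), IsAlmostSplit f g) ∧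
    (∀ X : Repn Λ V, X.InMono → X.Indec → ¬ ExtInjective X →
      ∃ (Y Z : Repn Λ V) (f : RepHom X Y) (g : RepHom Y Z), IsAlmostSplit f g) := by
  haveI : IsArtinianRing Λ := IsArtinianRing.of_finite R Λ
  haveI : IsNoetherianRing Λ := IsNoetherianRing.of_finite R Λ
  haveI : ∀ i j : V, Finite (Quiver.Path i j) := path_finite hacyc
  obtain ⟨E, _, _, h1, h2, h3, h4⟩ := exists_dualizing R
  have hE : IsDual R E := ⟨h1, h2, h3, h4⟩
  constructor
  · intro Z hZ hind hne
    obtain ⟨A⟩ := defect_right (R := R) hE (⟨Z, hZ⟩ : MObj Λ V)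
    obtain ⟨X, Y, f, g, hc, hns, hX, hr, hl⟩ := A.exists_ar ((ind_iff ⟨Z, hZ⟩).2 hind) (by
      by_contra hcon
      apply hne
      intro X Y hX hY f g hses
      by_contra hns
      exact hcon ⟨⟨X, hX⟩, ⟨Y, hY⟩, f, g, hses, hns⟩)
    exact ⟨X.1, Y.1, f, g, X.2, Y.2, hZ, hc, hns, (ind_iff X).1 hX, hind,
      fun W hW u hu => hr ⟨W, hW⟩ u hu, fun W hW u hu => hl ⟨W, hW⟩ u hu⟩
  · intro X hX hind hne
    obtain ⟨A⟩ := defect_left (R := R) hE (⟨X, hX⟩ : MObj Λ V)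
    obtain ⟨Y, Z, f, g, hc, hns, hZ, hr, hl⟩ := exists_ar_left A ((ind_iff ⟨X, hX⟩).2 hind) (by
      by_contra hcon
      apply hne
      intro Y Z hY hZ f g hses
      by_contra hns
      exact hcon ⟨⟨Y, hY⟩, ⟨Z, hZ⟩, f, g, hses, hns⟩)
    exact ⟨Y.1, Z.1, f, g, hX, Y.2, Z.2, hc, fun hs => hns (sm_of_se hc hs), hind,
      (ind_iff Z).1 hZ,
      fun W hW u hu => hr ⟨W, hW⟩ u hu, fun W hW u hu => hl ⟨W, hW⟩ u hu⟩

end ARMono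

open QuivRep in
/-- For every finite acyclic quiver `Q` and every Artin algebra `Λ`, the
monomorphism category `mono(Q,Λ)` has almost split sequences: for every indecomposable
non-Ext-projective object there is an almost split sequence ending in it, and for every
indecomposable non-Ext-injective object there is an almost split sequence starting in it. -/
theorem mono_has_almost_split_sequences
    (V : Type) [Quiver.{1} V] [Fintype V] [∀ i j : V, Fintype (i ⟶ j)]
    (hacyc : IsAcyclic V)
    (R : Type) [CommRing R] [IsArtinianRing R]
    (Λ : Type) [Ring Λ] [Algebra R Λ] [Module.Finite R Λ] :
    (∀ Z : Repn Λ V, Z.InMono → Z.Indec → ¬ ExtProjective Z →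
      ∃ (X Y : Repn Λ V) (f : RepHom X Y) (g : RepHom Y Z), IsAlmostSplit f g) ∧
    (∀ X : Repn Λ V, X.InMono → X.Indec → ¬ ExtInjective X →
      ∃ (Y Z : Repn Λ V) (f : RepHom X Y) (g : RepHom Y Z), IsAlmostSplit f g) := by
  exact ARMono.main_result V hacyc R Λ
end
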